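/- Fix 0 < ε < 1/6, and for each n let λ^n be a partition of n whose number of parts satisfies n(λ^n) ≤ n^ε. Then for every continuous function f : ℝ → ℝ of polynomial growth, E_n[f(Ū(σ)) | λ(σ) = λ^n] − E_n[f(Ū(σ))] → 0 as n → ∞, where Ū is the normalized length of the longest increasing subsequence and the conditional expectation is the average of f(Ū) over the uniform measure on S_n^{λ^n}. -/

import Mathlib

open scoped BigOperators Classical
open Finset Filter

/-- Expectation under the uniform measure on `S_n`. -/
noncomputable def En {n : ℕ} (g : Equiv.Perm (Fin n) → ℝ) : ℝ :=
  (∑ σ : Equiv.Perm (Fin n), g σ) / (Fintype.card (Equiv.Perm (Fin n)) : ℝ)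

/-- Variance under the uniform measure on `S_n`. -/
noncomputable def VarN {n : ℕ} (g : Equiv.Perm (Fin n) → ℝ) : ℝ :=
  En (fun σ => (g σ - En g) ^ 2)

/-- The length of the longest increasing subsequence of `(σ(1),…,σ(n))`:
the largest cardinality of a set of indices on which `σ` is strictly increasing. -/
noncomputable def lisLen {n : ℕ} (σ : Equiv.Perm (Fin n)) : ℕ :=
  Finset.univ.sup fun s : Finset (Fin n) =>
    if StrictMonoOn (fun i => σ i) (s : Set (Fin n)) then s.card else 0

/-- Normalized Ulam statistic `Ū = (U − E U)/√(Var U)`. -/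
noncomputable def lisLenBar {n : ℕ} (σ : Equiv.Perm (Fin n)) : ℝ :=
  ((lisLen σ : ℝ) - En (fun σ : Equiv.Perm (Fin n) => (lisLen σ : ℝ))) /
    Real.sqrt (VarN (fun σ : Equiv.Perm (Fin n) => (lisLen σ : ℝ)))

/-- Conditional expectation given cycle type `λ`: the average over `S_n^λ`. -/
noncomputable def EnCond {n : ℕ} (lam : (Fintype.card (Fin n)).Partition)
    (g : Equiv.Perm (Fin n) → ℝ) : ℝ :=
  (∑ σ ∈ Finset.univ.filter (fun σ : Equiv.Perm (Fin n) => σ.partition = lam), g σ) /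
    ((Finset.univ.filter (fun σ : Equiv.Perm (Fin n) => σ.partition = lam)).card : ℝ)

noncomputable def rho (z : ℤ) : ℝ := if z < 0 then 0 else 1 / (z.toNat.factorial : ℝ)

lemma rho_neg {z : ℤ} (h : z < 0) : rho z = 0 := by simp [rho, h]

lemma rho_nat (m : ℕ) : rho (m : ℤ) = 1 / (m.factorial : ℝ) := by simp [rho]

lemma rho_mul (z : ℤ) : (z : ℝ) * rho z = rho (z - 1) := by
  rcases lt_trichotomy z 0 with h | h | h
  · rw [rho_neg h, rho_neg (by omega)]; simp
  · subst h; rw [rho_neg (by omega : (0:ℤ) - 1 < 0)]; simp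
  · obtain ⟨m, rfl⟩ : ∃ m : ℕ, z = ((m + 1 : ℕ) : ℤ) := ⟨z.toNat - 1, by omega⟩
    have : (((m + 1 : ℕ) : ℤ) - 1) = (m : ℤ) := by push_cast; ring
    rw [this, rho_nat, rho_nat, Nat.factorial_succ]
    have := Nat.factorial_ne_zero m
    push_cast
    field_simp

/-- unit vector -/
def Psg (i : ℕ) (c : ℤ) : ℕ → ℤ := fun j => if j = i then c else 0

noncomputable def GG (k : ℕ) (m : ℕ → ℤ) : ℝ :=
  Matrix.det (Matrix.of fun i j : Fin k => rho (m i + (j : ℤ) - (i : ℤ)))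

lemma GG_euler (k : ℕ) (m : ℕ → ℤ) :
    (∑ i ∈ range k, (m i : ℝ)) * GG k m = ∑ i ∈ range k, GG k (m - Psg i 1) := by
  have key : ∀ i : Fin k, GG k (m - Psg (i : ℕ) 1) =
      ∑ σ : Equiv.Perm (Fin k), ((Equiv.Perm.sign σ : ℤ) : ℝ) *
        (((m i : ℝ) + ((σ i : ℕ) : ℝ) - ((i : ℕ) : ℝ)) * ∏ a : Fin k, rho (m a + (σ a : ℕ) - (a : ℕ))) := by
    intro i
    rw [GG, ← Matrix.det_transpose, Matrix.det_apply']
    refine Finset.sum_congr rfl fun σ _ => ?_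
    congr 1
    rw [← Finset.mul_prod_erase _ _ (Finset.mem_univ i), ← Finset.mul_prod_erase _ _ (Finset.mem_univ i),
      ← mul_assoc]
    have h1 := rho_mul (m i + (σ i : ℕ) - (i : ℕ))
    push_cast at h1
    rw [h1]
    congr 1
    · simp [Matrix.transpose, Psg]; congr 1; ring
    · refine Finset.prod_congr rfl fun a ha => ?_
      have : (a : ℕ) ≠ i := fun h => (Finset.ne_of_mem_erase ha) (Fin.ext h)
      simp [Matrix.transpose, Psg, this]
  rw [← Fin.sum_univ_eq_sum_range (fun i : ℕ => GG k (m - Psg i 1)),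
    ← Fin.sum_univ_eq_sum_range (fun i => (m i : ℝ))]
  simp_rw [key]
  rw [Finset.sum_comm, GG, ← Matrix.det_transpose, Matrix.det_apply', Finset.mul_sum]
  refine Finset.sum_congr rfl fun σ _ => ?_
  rw [← Finset.mul_sum, ← Finset.sum_mul]
  have : ∑ i : Fin k, ((m i : ℝ) + ((σ i : ℕ) : ℝ) - ((i : ℕ) : ℝ)) = ∑ i : Fin k, (m i : ℝ) := by
    rw [Finset.sum_sub_distrib, Finset.sum_add_distrib, Equiv.sum_comp σ (fun i : Fin k => ((i : ℕ) : ℝ))]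
    ring
  rw [this]
  simp [Matrix.transpose]
  ring

lemma GG_swap (k i : ℕ) (hi : i + 1 < k) (m m' : ℕ → ℤ)
    (h1 : m' i = m (i + 1) - 1) (h2 : m' (i + 1) = m i + 1)
    (h3 : ∀ j, j ≠ i → j ≠ i + 1 → m' j = m j) : GG k m' = - GG k m := by
  have := Matrix.det_permute (Equiv.swap (⟨i, by omega⟩ : Fin k) ⟨i + 1, hi⟩)
    (Matrix.of fun i j : Fin k => rho (m i + (j : ℤ) - (i : ℤ)))
  rw [Equiv.Perm.sign_swap (by simp [Fin.ext_iff])] at this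
  rw [GG, GG]
  simp only [Units.val_neg, Units.val_one, Int.cast_neg, Int.cast_one, neg_mul, one_mul] at this
  rw [← this]
  congr 1
  ext a b
  simp only [Matrix.submatrix_apply, id, Matrix.of_apply]
  by_cases ha : (a : ℕ) = i
  · have : a = ⟨i, by omega⟩ := Fin.ext ha
    rw [this]
    rw [Equiv.swap_apply_left]; simp only [h1]; congr 1; push_cast; ring
  · by_cases hb : (a : ℕ) = i + 1
    · have : a = ⟨i + 1, hi⟩ := Fin.ext hb
      subst this
      rw [Equiv.swap_apply_right]; simp only [h2]; congr 1; push_cast; ring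
    · rw [Equiv.swap_apply_of_ne_of_ne (by simpa [Fin.ext_iff] using ha) (by simpa [Fin.ext_iff] using hb),
        h3 _ ha hb]

lemma GG_zero_row (k : ℕ) (hk : 0 < k) (m : ℕ → ℤ) (h : m (k - 1) < 0) : GG k m = 0 := by
  apply Matrix.det_eq_zero_of_row_eq_zero (⟨k - 1, by omega⟩ : Fin k)
  intro j
  apply rho_neg
  have := j.2
  simp only
  omega

lemma GG_zero (k : ℕ) : GG k 0 = 1 := by
  rw [GG, Matrix.det_of_isUpperTriangular]
  · simp [rho]
  · intro i j hij
    apply rho_neg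
    simp only [id] at hij
    have : (j : ℕ) < i := hij
    simp; exact_mod_cast this

noncomputable def Lam (k : ℕ) (r : ℕ → ℤ) : MvPolynomial ℕ ℝ →ₗ[ℝ] ℝ :=
  (MvPolynomial.basisMonomials ℕ ℝ).constr ℝ (fun m => GG k (fun i => (m i : ℤ) + r i))

lemma Lam_monomial (k : ℕ) (r : ℕ → ℤ) (m : ℕ →₀ ℕ) :
    Lam k r (MvPolynomial.monomial m 1) = GG k (fun i => (m i : ℤ) + r i) := by
  have : MvPolynomial.monomial m (1 : ℝ) = MvPolynomial.basisMonomials ℕ ℝ m := by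
    rw [MvPolynomial.coe_basisMonomials]
  rw [this, Lam, Module.Basis.constr_basis]

lemma Lam_X_mul (k : ℕ) (r : ℕ → ℤ) (i : ℕ) (p : MvPolynomial ℕ ℝ) :
    Lam k r (MvPolynomial.X i * p) = Lam k (r + Psg i 1) p := by
  have : (Lam k r).comp (LinearMap.mulLeft ℝ (MvPolynomial.X i)) = Lam k (r + Psg i 1) := by
    apply (MvPolynomial.basisMonomials ℕ ℝ).ext
    intro m
    simp only [MvPolynomial.coe_basisMonomials, LinearMap.comp_apply, LinearMap.mulLeft_apply]
    rw [MvPolynomial.X, MvPolynomial.monomial_mul, one_mul, Lam_monomial, Lam_monomial]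
    congr 1
    ext j
    simp [Finsupp.single_apply, Psg, eq_comm]
    ring
  exact LinearMap.congr_fun this p

lemma Lam_one (k : ℕ) (r : ℕ → ℤ) : Lam k r 1 = GG k r := by
  have := Lam_monomial k r 0
  simpa using this

/-- the product polynomial -/
noncomputable def PP (h : ℕ) (T : Finset ℕ) (x : ℕ → ℕ) : MvPolynomial ℕ ℝ :=
  ∏ t ∈ T, ∑ i ∈ (range h).filter (fun i => x i ≤ t), MvPolynomial.X i

lemma Lam_euler (k h : ℕ) (hk : h ≤ k) (T : Finset ℕ) (x : ℕ → ℕ) : ∀ r : ℕ → ℤ,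
    ((T.card : ℝ) + ∑ i ∈ range k, (r i : ℝ)) * Lam k r (PP h T x) =
      ∑ i ∈ range k, Lam k (r - Psg i 1) (PP h T x) := by
  induction T using Finset.induction_on with
  | empty => intro r; simp only [PP, Finset.prod_empty, Lam_one, Finset.card_empty]; rw [← GG_euler]; simp
  | insert t T ht ih =>
    intro r
    simp only [PP, Finset.prod_insert ht, Finset.sum_mul, map_sum, Lam_X_mul] at ih ⊢
    rw [Finset.sum_comm, Finset.mul_sum]
    refine Finset.sum_congr rfl fun i hi => ?_
    simp only [Finset.mem_filter, Finset.mem_range] at hi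
    have := ih (r + Psg i 1)
    rw [Finset.card_insert_of_notMem ht]
    have e : ∀ j, r - Psg j 1 + Psg i 1 = r + Psg i 1 - Psg j 1 := fun j => by ring
    simp_rw [e]
    rw [← this]
    congr 1
    simp only [Pi.add_apply, Int.cast_add, Finset.sum_add_distrib]
    have : ∑ j ∈ range k, ((Psg i (1:ℤ)) j : ℝ) = 1 := by
      simp [Psg, apply_ite]
      omega
    rw [this]; push_cast; ring

noncomputable def QQ (h : ℕ) (T : Finset ℕ) (x : ℕ → ℕ) (i y : ℕ) : MvPolynomial ℕ ℝ :=
  ∏ t ∈ T, (∑ j ∈ (range h).filter (fun j => x j ≤ t), MvPolynomial.X j -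
    if x i ≤ t ∧ t < y then MvPolynomial.X i else 0)

lemma PP_telescope (h : ℕ) (T : Finset ℕ) (x : ℕ → ℕ) (i y : ℕ) (hi : i < h) :
    PP h T x = QQ h T x i y + MvPolynomial.X i *
      ∑ v ∈ T.filter (fun v => x i ≤ v ∧ v < y), PP h (T.erase v) (Function.update x i v) := by
  rw [QQ, Finset.prod_sub_ordered, Finset.mul_sum, Finset.sum_filter, PP]
  rw [sub_add, eq_comm, sub_eq_self, sub_eq_zero]
  refine Finset.sum_congr rfl fun v hv => ?_
  split_ifs with hc
  · rw [mul_assoc]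
    congr 1
    have hsplit : T.erase v = (T.filter (fun j => j < v)) ∪ (T.filter (fun j => v < j)) := by
      ext a; simp only [Finset.mem_erase, Finset.mem_union, Finset.mem_filter]
      constructor
      · rintro ⟨h1, h2⟩; rcases lt_or_gt_of_ne h1 with h | h <;> tauto
      · rintro (⟨h1, h2⟩ | ⟨h1, h2⟩)
        · exact ⟨h2.ne, h1⟩
        · exact ⟨h2.ne', h1⟩
    rw [PP, hsplit, Finset.prod_union]
    · congr 1
      · refine Finset.prod_congr rfl fun t ht => ?_
        simp only [Finset.mem_filter] at ht
        simp only [Finset.sum_filter]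
        rw [← Finset.add_sum_erase _ _ (Finset.mem_range.2 hi),
          ← Finset.add_sum_erase (a := i) (range h) (fun a => if Function.update x i v a ≤ t then _ else _)
            (Finset.mem_range.2 hi)]
        have : ∀ a ∈ (range h).erase i, (if Function.update x i v a ≤ t then (MvPolynomial.X a : MvPolynomial ℕ ℝ) else 0) =
            if x a ≤ t then (MvPolynomial.X a : MvPolynomial ℕ ℝ) else 0 := by
          intro a ha
          rw [Function.update_of_ne (Finset.ne_of_mem_erase ha)]
        rw [Finset.sum_congr rfl this]
        have h4 : ¬ v ≤ t := by omega
        have h5 : t < y := by omega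
        simp only [Function.update_self, h4, h5, and_true, if_false]
        ring
      · refine Finset.prod_congr rfl fun t ht => ?_
        simp only [Finset.mem_filter] at ht
        congr 1
        ext a
        simp only [Finset.mem_filter, Finset.mem_range, and_congr_right_iff]
        intro _
        by_cases ha : a = i
        · subst ha; simp; omega
        · rw [Function.update_of_ne ha]
    · rw [Finset.disjoint_left]; simp only [Finset.mem_filter]; intro a h1 h2; omega
  · simp

lemma QQ_last (h : ℕ) (T : Finset ℕ) (x : ℕ → ℕ) (y : ℕ) (hy : ∀ t ∈ T, t < y) :
    QQ (h + 1) T x h y = PP h T x := by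
  refine Finset.prod_congr rfl fun t ht => ?_
  simp only [hy t ht, and_true, Finset.sum_filter, Finset.sum_range_succ]
  ring

lemma Lam_swap (k i : ℕ) (hi : i + 1 < k) (r : ℕ → ℤ) (hr : r (i + 1) = r i + 1) (p : MvPolynomial ℕ ℝ) :
    Lam k r (MvPolynomial.rename (Equiv.swap i (i + 1)) p) = - Lam k r p := by
  have : (Lam k r).comp (MvPolynomial.rename (Equiv.swap i (i + 1))).toLinearMap = - Lam k r := by
    apply (MvPolynomial.basisMonomials ℕ ℝ).ext
    intro m
    simp only [MvPolynomial.coe_basisMonomials, LinearMap.comp_apply, LinearMap.neg_apply,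
      AlgHom.toLinearMap_apply]
    rw [MvPolynomial.rename_monomial, Lam_monomial, Lam_monomial]
    have e : ∀ j, (Finsupp.mapDomain (Equiv.swap i (i + 1)) m) j = m (Equiv.swap i (i + 1) j) := by
      intro j
      have := Finsupp.mapDomain_apply (Equiv.swap i (i + 1)).injective m (Equiv.swap i (i + 1) j)
      rwa [Equiv.swap_apply_self] at this
    apply GG_swap k i hi
    · simp only [e, Equiv.swap_apply_left, hr]; ring
    · simp only [e, Equiv.swap_apply_right, hr]; ring
    · intro j h1 h2
      simp only [e, Equiv.swap_apply_of_ne_of_ne h1 h2]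
  exact LinearMap.congr_fun this p

lemma QQ_symm (h : ℕ) (T : Finset ℕ) (x : ℕ → ℕ) (i : ℕ) (hi : i + 1 < h) (hx : x i ≤ x (i + 1)) :
    MvPolynomial.rename (Equiv.swap i (i + 1)) (QQ h T x i (x (i + 1))) = QQ h T x i (x (i + 1)) := by
  rw [QQ, map_prod]
  refine Finset.prod_congr rfl fun t ht => ?_
  have e : ∑ j ∈ (range h).filter (fun j => x j ≤ t), (MvPolynomial.X j : MvPolynomial ℕ ℝ) -
      (if x i ≤ t ∧ t < x (i + 1) then (MvPolynomial.X i : MvPolynomial ℕ ℝ) else 0) =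
      (if x (i + 1) ≤ t then (MvPolynomial.X i + MvPolynomial.X (i + 1) : MvPolynomial ℕ ℝ) else 0) +
       ∑ j ∈ ((range h).erase i).erase (i + 1), if x j ≤ t then (MvPolynomial.X j : MvPolynomial ℕ ℝ) else 0 := by
    rw [Finset.sum_filter, ← Finset.add_sum_erase _ _ (Finset.mem_range.2 (by omega : i < h)),
      ← Finset.add_sum_erase ((range h).erase i) _ (by simp; omega : i + 1 ∈ (range h).erase i)]
    by_cases h1 : x (i + 1) ≤ t
    · have h2 : x i ≤ t := by omega
      have h3 : ¬ t < x (i + 1) := by omega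
      simp only [h1, h2, h3, if_true, and_false, if_false]; ring
    · have h3 : t < x (i + 1) := by omega
      by_cases h2 : x i ≤ t
      · simp only [h1, h2, h3, if_true, if_false, and_true]; ring
      · simp only [h1, h2, h3, if_false, and_true]; ring
  rw [e, map_add, map_sum]
  congr 1
  · split_ifs
    · simp; ring
    · simp
  · refine Finset.sum_congr rfl fun j hj => ?_
    simp only [Finset.mem_erase] at hj
    split_ifs
    · rw [MvPolynomial.rename_X, Equiv.swap_apply_of_ne_of_ne hj.2.1 hj.1]
    · simp

lemma QQ_vanish (k h : ℕ) (hk : h ≤ k) (T : Finset ℕ) (x : ℕ → ℕ) (i : ℕ) (hi : i + 1 < h)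
    (hx : x i ≤ x (i + 1)) (r : ℕ → ℤ) (hr : r (i + 1) = r i) :
    Lam k (r - Psg i 1) (QQ h T x i (x (i + 1))) = 0 := by
  have h1 := Lam_swap k i (by omega) (r - Psg i 1) (by simp [hr, Psg]) (QQ h T x i (x (i + 1)))
  rw [QQ_symm h T x i hi hx] at h1
  linarith

lemma Lam_step (k h : ℕ) (T : Finset ℕ) (x : ℕ → ℕ) (i y : ℕ) (hi : i < h) (r : ℕ → ℤ) :
    Lam k (r - Psg i 1) (PP h T x) = Lam k (r - Psg i 1) (QQ h T x i y) +
      ∑ v ∈ T.filter (fun v => x i ≤ v ∧ v < y), Lam k r (PP h (T.erase v) (Function.update x i v)) := by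
  conv_lhs => rw [PP_telescope h T x i y hi]
  rw [map_add, Lam_X_mul, map_sum, sub_add_cancel]

lemma Lam_vanish (k h : ℕ) (T : Finset ℕ) (x : ℕ → ℕ) : ∀ r : ℕ → ℤ,
    (∀ r' : ℕ → ℤ, (∀ j, h ≤ j → r' j = r j) → GG k r' = 0) → Lam k r (PP h T x) = 0 := by
  induction T using Finset.induction_on with
  | empty => intro r hr; simp only [PP, Finset.prod_empty, Lam_one]; exact hr r (fun _ _ => rfl)
  | insert t T ht ih =>
    intro r hr
    simp only [PP, Finset.prod_insert ht, Finset.sum_mul, map_sum, Lam_X_mul] at ih ⊢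
    refine Finset.sum_eq_zero fun i hi => ih _ fun r' hr' => hr r' fun j hj => ?_
    simp only [Finset.mem_filter, Finset.mem_range] at hi
    rw [hr' j hj]
    have : j ≠ i := by omega
    simp [Psg, this]

lemma GG_minus_one (k i : ℕ) (hi : i < k) (r : ℕ → ℤ) (h1 : r i = -1) (h2 : i + 1 < k → r (i + 1) = 0) :
    GG k r = 0 := by
  rcases Nat.lt_or_ge (i + 1) k with h | h
  · have := GG_swap k i h r r (by rw [h1, h2 h]; rfl) (by rw [h1, h2 h]; rfl) (fun _ _ _ => rfl)
    linarith
  · apply GG_zero_row k (by omega)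
    have : k - 1 = i := by omega
    rw [this, h1]; norm_num

lemma Lam_nonneg (k : ℕ) : ∀ h, h ≤ k → ∀ n : ℕ, ∀ T : Finset ℕ, T.card = n → ∀ x : ℕ → ℕ,
    (∀ i, i + 1 < h → x i ≤ x (i + 1)) →
    0 ≤ Lam k (fun i => if i < h then 1 else 0) (PP h T x) := by
  intro h
  induction h with
  | zero =>
    intro _ n T hT x _
    rcases T.eq_empty_or_nonempty with rfl | ⟨t, ht⟩
    · simp only [PP, Finset.prod_empty, Lam_one, not_lt_zero, if_false]
      have := GG_zero k
      rw [Pi.zero_def] at this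
      rw [this]; norm_num
    · rw [PP, Finset.prod_eq_zero ht (by simp)]; simp
  | succ h ihh =>
    intro hk n
    induction n using Nat.strong_induction_on with
    | _ n ihn =>
    intro T hT x hx
    set r : ℕ → ℤ := fun i => if i < h + 1 then 1 else 0 with hr
    have e := Lam_euler k (h + 1) hk T x r
    have hsum : ∑ i ∈ range k, (r i : ℝ) = h + 1 := by
      have : ∀ i, (r i : ℝ) = if i ∈ range (h + 1) then 1 else 0 := by
        intro i; simp [hr]
      simp_rw [this]
      rw [Finset.sum_ite_mem, Finset.inter_eq_right.2 (by simpa using hk)]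
      simp
    rw [hsum] at e
    have hpos : 0 < (T.card : ℝ) + (h + 1) := by positivity
    refine nonneg_of_mul_nonneg_right ?_ hpos
    rw [e]
    refine Finset.sum_nonneg fun i hi => ?_
    rw [Finset.mem_range] at hi
    have hrest : ∀ y, 0 ≤ ∑ v ∈ T.filter (fun v => x i ≤ v ∧ v < y),
        Lam k r (PP (h + 1) (T.erase v) (Function.update x i v)) ∨ ¬ (i < h + 1) ∨ (x (i + 1) < y ∧ i < h) := by
      intro y
      by_cases h1 : i < h + 1
      swap
      · tauto
      by_cases h2 : (x (i + 1) < y ∧ i < h)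
      · tauto
      left
      refine Finset.sum_nonneg fun v hv => ?_
      simp only [Finset.mem_filter] at hv
      apply ihn (T.erase v).card (by rw [← hT]; exact Finset.card_erase_lt_of_mem hv.1) _ rfl
      · intro j hj
        by_cases c1 : j = i
        · subst c1
          simp only [Function.update_self, ne_eq, Nat.add_eq_left, one_ne_zero, not_false_eq_true,
            Function.update_of_ne]
          push Not at h2
          by_contra hh
          exact absurd (h2 (by omega)) (by omega)
        · by_cases c2 : j + 1 = i
          · subst c2
            simp only [Function.update_self]
            rw [Function.update_of_ne (by omega)]
            exact le_trans (hx j hj) hv.2.1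
          · rw [Function.update_of_ne c1, Function.update_of_ne c2]; exact hx j hj
    rcases Nat.lt_or_ge i h with h1 | h1
    · rw [Lam_step k (h + 1) T x i (x (i + 1)) (by omega), QQ_vanish k (h + 1) hk T x i (by omega)
        (hx i (by omega)) r (by simp [hr]; omega), zero_add]
      rcases hrest (x (i + 1)) with h3 | h3 | h3
      · exact h3
      · omega
      · omega
    · rcases Nat.eq_or_lt_of_le h1 with h2 | h2
      · subst h2
        rw [Lam_step k (h + 1) T x h (T.sup id + 1) (by omega), QQ_last]
        · apply add_nonneg
          · have := ihh (by omega) T.card T rfl x (fun i hi => hx i (by omega))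
            have er : r - Psg h 1 = fun i => if i < h then 1 else 0 := by
              funext j
              simp only [hr, Psg, Pi.sub_apply]
              split_ifs <;> omega
            rwa [er]
          · rcases hrest (T.sup id + 1) with h3 | h3 | h3
            · exact h3
            · omega
            · omega
        · intro t ht
          have := Finset.le_sup (f := id) ht
          simp only [id] at this ⊢
          omega
      · apply le_of_eq
        symm
        apply Lam_vanish
        intro r' hr'
        apply GG_minus_one k i hi
        · rw [hr' i (by omega)]
          simp [hr, Psg]; omega
        · intro _
          rw [hr' (i + 1) (by omega)]
          simp [hr, Psg]; omega

/-- max length of a decreasing sublist with entries below `x` -/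
def dl : List ℕ → ℕ → ℕ
  | [], _ => 0
  | v :: l, x => if v < x then max (dl l x) (dl l v + 1) else dl l x

lemma dl_mono (l : List ℕ) : Monotone (dl l) := by
  induction l with
  | nil => intro a b _; simp [dl]
  | cons v l ih =>
    intro a b hab
    simp only [dl]
    have := ih hab
    split_ifs <;> omega

noncomputable def permsOf (T : Finset ℕ) : Finset (List ℕ) := T.val.lists.toFinset

lemma mem_permsOf {T : Finset ℕ} {l : List ℕ} : l ∈ permsOf T ↔ T.val = (l : Multiset ℕ) := by
  simp [permsOf, Multiset.mem_lists_iff]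

noncomputable def cntA (k : ℕ) (T : Finset ℕ) (x : ℕ → ℕ) : ℕ :=
  ((permsOf T).filter (fun l => ∀ i ≤ k, dl l (x i) ≤ i)).card

lemma permsOf_filter_card (T : Finset ℕ) (hT : T.Nonempty) (p : List ℕ → Prop) [DecidablePred p] :
    ((permsOf T).filter p).card = ∑ v ∈ T, ((permsOf (T.erase v)).filter (fun l => p (v :: l))).card := by
  have : (permsOf T).filter p = T.biUnion (fun v => ((permsOf (T.erase v)).filter (fun l => p (v :: l))).image
      (List.cons v)) := by
    ext l
    simp only [Finset.mem_filter, Finset.mem_biUnion, Finset.mem_image, mem_permsOf]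
    constructor
    · rintro ⟨h1, h2⟩
      cases l with
      | nil => simp at h1; exact absurd h1 hT.ne_empty
      | cons v l =>
        have hv : v ∈ T := by rw [← Finset.mem_val, h1]; simp
        refine ⟨v, hv, l, ⟨?_, h2⟩, rfl⟩
        rw [Finset.erase_val, h1]; simp
    · rintro ⟨v, hv, l', ⟨h1, h2⟩, rfl⟩
      refine ⟨?_, h2⟩
      rw [← Multiset.cons_coe, ← h1, Finset.erase_val, Multiset.cons_erase hv]
  rw [this, Finset.card_biUnion]
  · refine Finset.sum_congr rfl fun v _ => Finset.card_image_of_injective _ List.cons_injective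
  · intro v _ w _ hvw
    rw [Function.onFun, Finset.disjoint_left]
    simp only [Finset.mem_image]
    rintro l ⟨a, _, rfl⟩ ⟨b, _, hb⟩
    simp at hb; exact hvw hb.1.symm

lemma cntA_rec (k : ℕ) (T : Finset ℕ) (hT : T.Nonempty) (x : ℕ → ℕ)
    (hx : ∀ i j, i ≤ j → j ≤ k → x i ≤ x j) (hk : ∀ t ∈ T, t < x k) :
    cntA k T x = ∑ i ∈ range k, ∑ v ∈ T.filter (fun v => x i ≤ v ∧ v < x (i + 1)),
      cntA k (T.erase v) (Function.update x i v) := by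
  rw [cntA, permsOf_filter_card T hT]
  simp_rw [Finset.sum_filter]
  rw [Finset.sum_comm]
  refine Finset.sum_congr rfl fun v hv => ?_
  rw [← Finset.sum_filter]
  by_cases h0 : v < x 0
  · rw [Finset.sum_eq_zero, Finset.card_eq_zero, Finset.filter_eq_empty_iff]
    · intro l _ h
      have := h 0 (by omega)
      simp [dl, h0] at this
    · intro i hi
      simp only [Finset.mem_filter, Finset.mem_range] at hi
      have := hx 0 i (by omega) (by omega)
      omega
  · have hex : ∃ j, v < x j := ⟨k, hk v hv⟩
    obtain ⟨i, hi⟩ : ∃ i, Nat.find hex = i + 1 := by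
      refine Nat.exists_eq_succ_of_ne_zero fun h => h0 ?_
      have := Nat.find_spec hex
      rwa [h] at this
    have h1 : v < x (i + 1) := hi ▸ Nat.find_spec hex
    have h2 : ¬ v < x i := Nat.find_min hex (by omega)
    have h3 : i + 1 ≤ k := by rw [← hi]; exact Nat.find_min' hex (hk v hv)
    have : (range k).filter (fun a => x a ≤ v ∧ v < x (a + 1)) = {i} := by
      ext a
      simp only [Finset.mem_filter, Finset.mem_range, Finset.mem_singleton]
      constructor
      · rintro ⟨ha, hb, hc⟩
        by_contra hne
        rcases lt_or_gt_of_ne hne with h | h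
        · have := hx (a + 1) i (by omega) (by omega); omega
        · have := hx (i + 1) a (by omega) (by omega); omega
      · rintro rfl; omega
    rw [this, Finset.sum_singleton, cntA]
    congr 1
    refine Finset.filter_congr fun l _ => ?_
    constructor
    · intro h j hj
      by_cases hji : j = i
      · subst hji
        have := h (j + 1) h3
        simp only [dl, h1, if_true] at this
        rw [Function.update_self]; omega
      · rw [Function.update_of_ne hji]
        have := h j hj
        simp only [dl] at this
        split_ifs at this <;> omega
    · intro h j hj
      have hv' := h i (by omega)
      rw [Function.update_self] at hv'
      have hj' : dl l (x j) ≤ j := by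
        by_cases hji : j = i
        · subst hji
          have := dl_mono l (by omega : x j ≤ v); omega
        · have := h j hj; rwa [Function.update_of_ne hji] at this
      simp only [dl]
      split_ifs with hvj
      · have : i < j := by
          by_contra hc
          have := hx j i (by omega) (by omega); omega
        omega
      · exact hj'

lemma cntA_eq (k : ℕ) : ∀ n : ℕ, ∀ T : Finset ℕ, T.card = n → ∀ x : ℕ → ℕ,
    (∀ i j, i ≤ j → j ≤ k → x i ≤ x j) → (∀ t ∈ T, t < x k) →
    (cntA k T x : ℝ) = (n.factorial : ℝ) * Lam k 0 (PP k T x) := by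
  intro n
  induction n with
  | zero =>
    intro T hT x _ _
    rw [Finset.card_eq_zero] at hT
    subst hT
    have : cntA k ∅ x = 1 := by
      rw [cntA, Finset.card_eq_one]
      refine ⟨[], ?_⟩
      ext l
      simp only [Finset.mem_filter, mem_permsOf, Finset.mem_singleton]
      constructor
      · rintro ⟨h, _⟩; simpa using h.symm
      · rintro rfl; simp [dl]
    rw [this, PP, Finset.prod_empty, Lam_one, GG_zero]; simp
  | succ n ih =>
    intro T hT x hx hk
    rw [cntA_rec k T (Finset.card_pos.1 (by omega)) x hx hk, Nat.factorial_succ]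
    have e := Lam_euler k k le_rfl T x 0
    simp only [Pi.zero_apply, Int.cast_zero, Finset.sum_const_zero, add_zero, hT] at e
    push_cast at e ⊢
    rw [mul_comm ((n : ℝ) + 1), mul_assoc, e, Finset.mul_sum]
    refine Finset.sum_congr rfl fun i hi => ?_
    rw [Finset.mem_range] at hi
    rw [Lam_step k k T x i (x (i + 1)) hi]
    have hz : Lam k (0 - Psg i 1) (QQ k T x i (x (i + 1))) = 0 := by
      rcases Nat.lt_or_ge (i + 1) k with h | h
      · exact QQ_vanish k k le_rfl T x i h (hx i (i + 1) (by omega) (by omega)) 0 rfl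
      · obtain rfl : k = i + 1 := by omega
        rw [QQ_last i T x _ hk]
        apply Lam_vanish
        intro r' hr'
        apply GG_minus_one _ i hi
        · rw [hr' i le_rfl]; simp [Psg]
        · intro h; omega
    rw [hz, zero_add, Finset.mul_sum]
    refine Finset.sum_congr rfl fun v hv => ?_
    simp only [Finset.mem_filter] at hv
    apply ih
    · rw [Finset.card_erase_of_mem hv.1, hT]; rfl
    · intro a b hab hb
      by_cases h1 : a = i
      · subst h1
        rw [Function.update_self]
        by_cases h2 : b = a
        · subst h2; rw [Function.update_self]
        · rw [Function.update_of_ne h2]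
          have := hx (a + 1) b (by omega) hb; omega
      · rw [Function.update_of_ne h1]
        by_cases h2 : b = i
        · subst h2; rw [Function.update_self]
          have := hx a b (by omega) (by omega); omega
        · rw [Function.update_of_ne h2]; exact hx a b hab hb
    · intro t ht
      rw [Function.update_of_ne (by omega)]
      exact hk t (Finset.mem_of_mem_erase ht)

lemma dl_ge {n : ℕ} : ∀ (g : Fin n → ℕ) (x : ℕ) (s : Finset (Fin n)),
    (∀ i ∈ s, ∀ j ∈ s, i < j → g j < g i) → (∀ i ∈ s, g i < x) → s.card ≤ dl (List.ofFn g) x := by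
  induction n with
  | zero => intro g x s _ _; rw [Finset.eq_empty_of_isEmpty s]; simp
  | succ n ih =>
    intro g x s h1 h2
    rw [List.ofFn_succ]
    simp only [dl]
    set s' : Finset (Fin n) := univ.filter (fun i => i.succ ∈ s) with hs'
    have h1' : ∀ i ∈ s', ∀ j ∈ s', i < j → g j.succ < g i.succ := by
      intro i hi j hj hij
      simp only [hs', Finset.mem_filter, Finset.mem_univ, true_and] at hi hj
      exact h1 _ hi _ hj (Fin.succ_lt_succ_iff.2 hij)
    have hcard : s.card ≤ s'.card + (if (0 : Fin (n + 1)) ∈ s then 1 else 0) := by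
      have : s ⊆ (s'.image Fin.succ) ∪ (if (0 : Fin (n + 1)) ∈ s then {0} else ∅) := by
        intro a ha
        rw [Finset.mem_union]
        rcases Fin.eq_zero_or_eq_succ a with rfl | ⟨b, rfl⟩
        · right; simp [ha]
        · left; exact Finset.mem_image.2 ⟨b, by simp [hs', ha], rfl⟩
      refine (Finset.card_le_card this).trans ((Finset.card_union_le _ _).trans ?_)
      refine add_le_add Finset.card_image_le ?_
      split_ifs <;> simp
    by_cases h0 : (0 : Fin (n + 1)) ∈ s
    · have hx := h2 0 h0
      rw [if_pos hx]
      rw [if_pos h0] at hcard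
      have := ih (fun i => g i.succ) (g 0) s' h1' (by
        intro i hi
        simp only [hs', Finset.mem_filter, Finset.mem_univ, true_and] at hi
        exact h1 _ h0 _ hi (Fin.succ_pos i))
      omega
    · rw [if_neg h0] at hcard
      have := ih (fun i => g i.succ) x s' h1' (by
        intro i hi
        simp only [hs', Finset.mem_filter, Finset.mem_univ, true_and] at hi
        exact h2 _ hi)
      split_ifs <;> omega

lemma dl_le {n : ℕ} : ∀ (g : Fin n → ℕ) (x : ℕ), ∃ s : Finset (Fin n),
    (∀ i ∈ s, ∀ j ∈ s, i < j → g j < g i) ∧ (∀ i ∈ s, g i < x) ∧ s.card = dl (List.ofFn g) x := by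
  induction n with
  | zero => intro g x; exact ⟨∅, by simp [dl]⟩
  | succ n ih =>
    intro g x
    have caseA : ∃ s : Finset (Fin (n + 1)), (∀ i ∈ s, ∀ j ∈ s, i < j → g j < g i) ∧ (∀ i ∈ s, g i < x) ∧
        s.card = dl (List.ofFn fun i : Fin n => g i.succ) x := by
      obtain ⟨s, h1, h2, h3⟩ := ih (fun i => g i.succ) x
      refine ⟨s.map (Fin.succEmb n), ?_, ?_, by rw [Finset.card_map, h3]⟩
      · intro i hi j hj hij
        simp only [Finset.mem_map] at hi hj
        obtain ⟨i, hi, rfl⟩ := hi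
        obtain ⟨j, hj, rfl⟩ := hj
        exact h1 i hi j hj (by simpa using hij)
      · intro i hi
        simp only [Finset.mem_map] at hi
        obtain ⟨i, hi, rfl⟩ := hi
        exact h2 i hi
    rw [List.ofFn_succ]
    simp only [dl]
    split_ifs with hx
    · rcases le_total (dl (List.ofFn fun i : Fin n => g i.succ) x)
        (dl (List.ofFn fun i : Fin n => g i.succ) (g 0) + 1) with hc | hc
      · rw [max_eq_right hc]
        obtain ⟨s, h1, h2, h3⟩ := ih (fun i => g i.succ) (g 0)
        refine ⟨insert 0 (s.map (Fin.succEmb n)), ?_, ?_, ?_⟩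
        · intro i hi j hj hij
          simp only [Finset.mem_map, Finset.mem_insert] at hi hj
          rcases hj with rfl | ⟨j, hj, rfl⟩
          · exact absurd hij (by simp)
          rcases hi with rfl | ⟨i, hi, rfl⟩
          · exact h2 j hj
          · exact h1 i hi j hj (by simpa using hij)
        · intro i hi
          simp only [Finset.mem_map, Finset.mem_insert] at hi
          rcases hi with rfl | ⟨i, hi, rfl⟩
          · exact hx
          · exact (h2 i hi).trans hx
        · rw [Finset.card_insert_of_notMem (by simp), Finset.card_map, h3]
      · rw [max_eq_left hc]; exact caseA
    · exact caseA

lemma lisLen_le_iff {n : ℕ} (σ : Equiv.Perm (Fin n)) (k : ℕ) :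
    lisLen σ ≤ k ↔ ∀ s : Finset (Fin n), StrictMonoOn (fun i => σ i) (s : Set (Fin n)) → s.card ≤ k := by
  rw [lisLen, Finset.sup_le_iff]
  constructor
  · intro h s hs
    have := h s (Finset.mem_univ s)
    rwa [if_pos hs] at this
  · intro h s _
    split_ifs with hs
    · exact h s hs
    · exact Nat.zero_le _

lemma le_lisLen {n : ℕ} (σ : Equiv.Perm (Fin n)) (s : Finset (Fin n))
    (hs : StrictMonoOn (fun i => σ i) (s : Set (Fin n))) : s.card ≤ lisLen σ :=
  (lisLen_le_iff σ _).1 le_rfl s hs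

lemma exists_lisLen {n : ℕ} (σ : Equiv.Perm (Fin n)) : ∃ s : Finset (Fin n),
    StrictMonoOn (fun i => σ i) (s : Set (Fin n)) ∧ s.card = lisLen σ := by
  by_contra hcon
  push Not at hcon
  have h0 : lisLen σ ≠ 0 := by
    have := hcon ∅ (by simp [StrictMonoOn])
    simpa using this.symm
  have : lisLen σ ≤ lisLen σ - 1 := (lisLen_le_iff σ _).2 fun s hs => by
    have h1 := le_lisLen σ s hs
    have h2 := hcon s hs
    omega
  omega

def permList {n : ℕ} (σ : Equiv.Perm (Fin n)) : List ℕ := List.ofFn (fun i => n - 1 - (σ i : ℕ))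

lemma lisLen_eq_dl {n : ℕ} (σ : Equiv.Perm (Fin n)) : lisLen σ = dl (permList σ) n := by
  apply le_antisymm
  · rw [lisLen_le_iff]
    intro s hs
    apply dl_ge
    · intro i hi j hj hij
      have := hs hi hj hij
      simp only [Fin.lt_def] at this
      have := (σ j).2
      omega
    · intro i _
      have := (σ i).2
      omega
  · obtain ⟨s, h1, h2, h3⟩ := dl_le (fun i => n - 1 - (σ i : ℕ)) n
    rw [permList, ← h3]
    apply le_lisLen
    intro i hi j hj hij
    have := h1 i hi j hj hij
    simp only [Fin.lt_def]
    omega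

lemma card_permsOf : ∀ (n : ℕ) (T : Finset ℕ), T.card = n → (permsOf T).card = n.factorial := by
  intro n
  induction n with
  | zero =>
    intro T hT
    rw [Finset.card_eq_zero] at hT
    subst hT
    rw [Finset.card_eq_one.2]
    · rfl
    refine ⟨[], ?_⟩
    ext l
    simp only [mem_permsOf, Finset.mem_singleton]
    constructor
    · intro h; simpa using h.symm
    · rintro rfl; simp
  | succ n ih =>
    intro T hT
    have := permsOf_filter_card T (Finset.card_pos.1 (by omega)) (fun _ => True)
    simp only [Finset.filter_true] at this
    rw [this, Finset.sum_congr rfl fun v hv => ih (T.erase v) (by rw [Finset.card_erase_of_mem hv, hT]; rfl)]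
    rw [Finset.sum_const, hT, smul_eq_mul, Nat.factorial_succ]

lemma permList_inj {n : ℕ} : Function.Injective (permList (n := n)) := by
  intro σ τ h
  have := List.ofFn_injective h
  ext i
  have h2 := congrFun this i
  have := (σ i).2
  have := (τ i).2
  omega

lemma permList_image (n : ℕ) : (univ.image (permList (n := n))) = permsOf (range n) := by
  apply Finset.eq_of_subset_of_card_le
  · intro l hl
    obtain ⟨σ, _, rfl⟩ := Finset.mem_image.1 hl
    rw [mem_permsOf]
    apply Multiset.eq_of_le_of_card_le
    · rw [Multiset.le_iff_subset (range n).nodup]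
      intro t ht
      have ht' : t < n := by simpa using ht
      rw [Multiset.mem_coe, permList, List.mem_ofFn]
      refine ⟨σ.symm ⟨n - 1 - t, by omega⟩, ?_⟩
      simp; omega
    · simp [permList]
  · rw [card_permsOf n _ (by simp), Finset.card_image_of_injective _ permList_inj]
    simp [Fintype.card_perm]

noncomputable def uu (k n : ℕ) : ℕ := (univ.filter (fun σ : Equiv.Perm (Fin n) => lisLen σ ≤ k)).card

lemma uu_eq (k n : ℕ) : (uu k n : ℝ) =
    (n.factorial : ℝ) * Lam k 0 ((∑ i ∈ range k, MvPolynomial.X i) ^ n) := by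
  have h1 : uu k n = cntA k (range n) (fun i => if i < k then 0 else n) := by
    rw [cntA, ← permList_image, Finset.filter_image, Finset.card_image_of_injective _ permList_inj, uu]
    congr 1
    refine Finset.filter_congr fun σ _ => ?_
    rw [lisLen_eq_dl]
    have dl0 : ∀ l, dl l 0 = 0 := by
      intro l; induction l with
      | nil => rfl
      | cons v l ih => simp [dl, ih]
    constructor
    · intro h i hi
      split_ifs with hik
      · rw [dl0]; omega
      · have : i = k := by omega
        rw [this]; exact h
    · intro h
      simpa using h k le_rfl
  rw [h1, cntA_eq k n (range n) (by simp)]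
  · congr 2
    rw [PP]
    rw [Finset.prod_congr rfl (g := fun _ => ∑ i ∈ range k, MvPolynomial.X i)]
    · simp
    · intro t _
      refine Finset.sum_congr ?_ fun _ _ => rfl
      ext i
      simp only [Finset.mem_filter, Finset.mem_range]
      constructor
      · tauto
      · intro h; simp [h]
  · intro i j hij hj
    split_ifs <;> omega
  · intro t ht
    simpa using ht

lemma EE_nonneg (k n : ℕ) : 0 ≤ Lam k (fun i => if i < k then 1 else 0) ((∑ i ∈ range k, MvPolynomial.X i) ^ n) := by
  have := Lam_nonneg k k le_rfl n (range n) (by simp) (fun _ => 0) (by simp)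
  simpa [PP] using this

noncomputable def cser (r : ℤ) : PowerSeries ℝ := PowerSeries.mk (fun m => rho ((m : ℤ) + r) / (m.factorial : ℝ))

lemma Lam_pow (k n : ℕ) (r : ℕ → ℤ) :
    Lam k r ((∑ i ∈ range k, MvPolynomial.X i) ^ n) =
      ∑ m ∈ finsuppAntidiag (range k) n, (n.factorial : ℝ) / (∏ i ∈ range k, ((m i).factorial : ℝ)) *
        GG k (fun i => (m i : ℤ) + r i) := by
  rw [Finset.sum_pow_eq_sum_piAntidiag, map_sum]
  symm
  refine Finset.sum_bij (fun m _ => (m : ℕ → ℕ)) ?_ ?_ ?_ ?_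
  · intro m hm
    rw [Finset.mem_finsuppAntidiag] at hm
    rw [Finset.mem_piAntidiag]
    exact ⟨hm.1, fun i hi => hm.2 (Finsupp.mem_support_iff.2 hi)⟩
  · intro a _ b _ h
    exact DFunLike.coe_injective h
  · intro b hb
    rw [Finset.mem_piAntidiag] at hb
    refine ⟨Finsupp.onFinset (range k) b hb.2, ?_, rfl⟩
    rw [Finset.mem_finsuppAntidiag]
    exact ⟨hb.1, Finsupp.support_onFinset_subset⟩
  · intro m hm
    rw [Finset.mem_finsuppAntidiag] at hm
    have h1 : (∏ i ∈ range k, (MvPolynomial.X i : MvPolynomial ℕ ℝ) ^ m i) = MvPolynomial.monomial m 1 := by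
      rw [MvPolynomial.monomial_eq, MvPolynomial.C_1, one_mul, Finsupp.prod]
      symm
      refine Finset.prod_subset hm.2 fun i _ hi => ?_
      rw [Finsupp.notMem_support_iff.1 hi, pow_zero]
    have h2 : ((Nat.multinomial (range k) m : ℕ) : MvPolynomial ℕ ℝ) * MvPolynomial.monomial m 1 =
        ((Nat.multinomial (range k) m : ℕ) : ℝ) • MvPolynomial.monomial m (1 : ℝ) := by
      rw [MvPolynomial.smul_eq_C_mul]; simp
    rw [h1, h2, map_smul, Lam_monomial, smul_eq_mul]
    congr 1
    have := Nat.multinomial_spec (range k) (m : ℕ → ℕ)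
    rw [hm.1] at this
    rw [← this]
    have hne : (∏ i ∈ range k, ((m i).factorial : ℝ)) ≠ 0 :=
      Finset.prod_ne_zero_iff.2 fun i _ => by exact_mod_cast Nat.factorial_ne_zero _
    push_cast
    field_simp

lemma coeff_det (k n : ℕ) (r : ℤ) (rr : ℕ → ℤ) (hrr : ∀ i, i < k → rr i = r) :
    PowerSeries.coeff n (Matrix.det (Matrix.of fun i j : Fin k => cser ((j : ℤ) - (i : ℤ) + r))) =
      Lam k rr ((∑ i ∈ range k, MvPolynomial.X i) ^ n) / (n.factorial : ℝ) := by
  have hn : (n.factorial : ℝ) ≠ 0 := by exact_mod_cast Nat.factorial_ne_zero _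
  rw [Lam_pow, ← Matrix.det_transpose, Matrix.det_apply', map_sum, Finset.sum_div]
  have e : ∀ σ : Equiv.Perm (Fin k), PowerSeries.coeff n
      (((Equiv.Perm.sign σ : ℤ) : PowerSeries ℝ) * ∏ i, (Matrix.of fun i j : Fin k => cser ((j : ℤ) - (i : ℤ) + r)).transpose (σ i) i) =
      ∑ m ∈ finsuppAntidiag (range k) n, ((Equiv.Perm.sign σ : ℤ) : ℝ) *
        ∏ i : Fin k, (rho ((m i : ℤ) + ((σ i : ℕ) : ℤ) - ((i : ℕ) : ℤ) + r) / ((m i).factorial : ℝ)) := by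
    intro σ
    have h1 : (∏ i, (Matrix.of fun i j : Fin k => cser ((j : ℤ) - (i : ℤ) + r)).transpose (σ i) i) =
        ∏ i ∈ range k, (if h : i < k then cser ((((σ ⟨i, h⟩ : Fin k) : ℕ) : ℤ) - (i : ℤ) + r) else 1) := by
      rw [Finset.prod_range]
      refine Finset.prod_congr rfl fun i _ => ?_
      simp [Matrix.transpose]
    have h2 : ((Equiv.Perm.sign σ : ℤ) : PowerSeries ℝ) = PowerSeries.C ((Equiv.Perm.sign σ : ℤ) : ℝ) := by simp
    rw [h1, h2, PowerSeries.coeff_C_mul, PowerSeries.coeff_prod, Finset.mul_sum]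
    refine Finset.sum_congr rfl fun m _ => ?_
    rw [Finset.prod_range]
    congr 1
    refine Finset.prod_congr rfl fun i _ => ?_
    simp only [i.2, dif_pos, cser, PowerSeries.coeff_mk, Fin.eta]
    congr 2
    ring
  rw [Finset.sum_congr rfl fun σ _ => e σ, Finset.sum_comm]
  refine Finset.sum_congr rfl fun m _ => ?_
  rw [GG, ← Matrix.det_transpose, Matrix.det_apply', Finset.mul_sum, Finset.sum_div]
  refine Finset.sum_congr rfl fun σ _ => ?_
  rw [Finset.prod_div_distrib, Finset.prod_range]
  have h3 : ∀ i : Fin k, (Matrix.of fun i j : Fin k => rho ((m i : ℤ) + rr i + (j : ℤ) - (i : ℤ))).transpose (σ i) i =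
     rho ((m i : ℤ) + ((σ i : ℕ) : ℤ) - ((i : ℕ) : ℤ) + r) := by
    intro i
    simp only [Matrix.transpose_apply, Matrix.of_apply, hrr i i.2]
    congr 1; ring
  rw [Finset.prod_congr rfl fun i _ => h3 i]
  field_simp

/-- power series absolutely summable at `t` -/
noncomputable def entS (t : ℝ) : Subring (PowerSeries ℝ) where
  carrier := {p | Summable fun n => ‖PowerSeries.coeff n p * t ^ n‖}
  zero_mem' := by simp [summable_zero]
  one_mem' := by
    refine summable_of_ne_finset_zero (s := {0}) fun n hn => ?_
    simp only [Finset.mem_singleton] at hn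
    simp [PowerSeries.coeff_one, hn]
  add_mem' := by
    intro p q hp hq
    refine Summable.of_nonneg_of_le (fun _ => norm_nonneg _) (fun n => ?_) (hp.add hq)
    rw [map_add, add_mul]; exact norm_add_le _ _
  neg_mem' := by
    intro p hp
    simpa using hp
  mul_mem' := by
    intro p q hp hq
    have := summable_norm_sum_mul_antidiagonal_of_summable_norm hp hq
    refine this.congr fun n => ?_
    congr 1
    rw [PowerSeries.coeff_mul, Finset.sum_mul]
    refine Finset.sum_congr rfl fun x hx => ?_
    rw [← Finset.HasAntidiagonal.mem_antidiagonal.1 hx, pow_add]; ring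

noncomputable def entEval (t : ℝ) : entS t →+* ℝ where
  toFun p := ∑' n, PowerSeries.coeff n (p : PowerSeries ℝ) * t ^ n
  map_one' := by
    rw [tsum_eq_single 0]
    · simp
    · intro n hn; simp [PowerSeries.coeff_one, hn]
  map_zero' := by simp
  map_add' := by
    intro p q
    have hp : Summable fun n => PowerSeries.coeff n (p : PowerSeries ℝ) * t ^ n := Summable.of_norm p.2
    have hq : Summable fun n => PowerSeries.coeff n (q : PowerSeries ℝ) * t ^ n := Summable.of_norm q.2
    rw [← hp.tsum_add hq]
    refine tsum_congr fun n => ?_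
    simp [add_mul]
  map_mul' := by
    intro p q
    rw [tsum_mul_tsum_eq_tsum_sum_antidiagonal_of_summable_norm p.2 q.2]
    refine tsum_congr fun n => ?_
    simp only [MulMemClass.coe_mul]
    rw [PowerSeries.coeff_mul, Finset.sum_mul]
    refine Finset.sum_congr rfl fun x hx => ?_
    rw [← Finset.HasAntidiagonal.mem_antidiagonal.1 hx, pow_add]; ring

lemma rho_nonneg (z : ℤ) : 0 ≤ rho z := by
  rw [rho]; split_ifs <;> positivity

lemma rho_le_one (z : ℤ) : rho z ≤ 1 := by
  rw [rho]; split_ifs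
  · norm_num
  · rw [div_le_one (by positivity)]
    exact_mod_cast Nat.one_le_iff_ne_zero.2 (Nat.factorial_ne_zero _)

lemma cser_mem (t : ℝ) (r : ℤ) : cser r ∈ entS t := by
  have h := NormedSpace.norm_expSeries_div_summable (𝔸 := ℝ) t
  refine Summable.of_nonneg_of_le (fun _ => norm_nonneg _) (fun n => ?_) h
  rw [cser, PowerSeries.coeff_mk, norm_mul, norm_div, norm_div, Real.norm_of_nonneg (rho_nonneg _), div_mul_eq_mul_div]
  gcongr
  exact mul_le_of_le_one_left (norm_nonneg _) (rho_le_one _)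

/-- `∑ ρ(m+r) t^m/m!` -/
noncomputable def chat (t : ℝ) (r : ℤ) : ℝ := ∑' m : ℕ, rho ((m : ℤ) + r) / (m.factorial : ℝ) * t ^ m

lemma chat_summable (t : ℝ) (r : ℤ) : Summable fun m : ℕ => rho ((m : ℤ) + r) / (m.factorial : ℝ) * t ^ m := by
  have := Summable.of_norm (cser_mem t r)
  simpa [cser, PowerSeries.coeff_mk] using this

lemma det_chat (k : ℕ) (t : ℝ) (r : ℤ) (rr : ℕ → ℤ) (hrr : ∀ i, i < k → rr i = r) :
    HasSum (fun n => Lam k rr ((∑ i ∈ range k, MvPolynomial.X i) ^ n) / (n.factorial : ℝ) * t ^ n)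
      (Matrix.det (Matrix.of fun i j : Fin k => chat t ((j : ℤ) - (i : ℤ) + r))) := by
  set M : Matrix (Fin k) (Fin k) (entS t) := Matrix.of fun i j : Fin k => ⟨cser ((j : ℤ) - (i : ℤ) + r), cser_mem t _⟩ with hM
  have h1 : ((M.det : entS t) : PowerSeries ℝ) = Matrix.det (Matrix.of fun i j : Fin k => cser ((j : ℤ) - (i : ℤ) + r)) := by
    have := RingHom.map_det (entS t).subtype M
    rw [Subring.subtype_apply] at this
    rw [this]; rfl
  have h2 : entEval t M.det = Matrix.det (Matrix.of fun i j : Fin k => chat t ((j : ℤ) - (i : ℤ) + r)) := by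
    rw [RingHom.map_det]
    congr 1
    ext i j
    simp [hM, entEval, chat, cser, PowerSeries.coeff_mk]
  have h3 := (Summable.of_norm M.det.2).hasSum
  rw [← h2]
  simp_rw [← coeff_det k _ r rr hrr, ← h1]
  exact h3

lemma chat_rec (t : ℝ) (r : ℤ) : (r : ℝ) * chat t r = chat t (r - 1) - t * chat t (r + 1) := by
  have h1 : t * chat t (r + 1) = ∑' m : ℕ, (m : ℝ) * (rho ((m : ℤ) + r) / (m.factorial : ℝ) * t ^ m) := by
    rw [chat, ← tsum_mul_left]
    have hs : Summable fun m : ℕ => ((m + 1 : ℕ) : ℝ) * (rho (((m + 1 : ℕ) : ℤ) + r) / ((m + 1).factorial : ℝ) * t ^ (m + 1)) := by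
      have := (chat_summable t (r + 1)).mul_left t
      refine this.congr fun m => ?_
      rw [Nat.factorial_succ]
      have : (m.factorial : ℝ) ≠ 0 := by exact_mod_cast Nat.factorial_ne_zero _
      have e : (((m + 1 : ℕ) : ℤ) + r) = (m : ℤ) + (r + 1) := by push_cast; ring
      rw [e]
      push_cast
      field_simp
      try ring
    have hs' := (summable_nat_add_iff (f := fun m : ℕ => (m : ℝ) * (rho ((m : ℤ) + r) / (m.factorial : ℝ) * t ^ m)) 1).1 hs
    rw [hs'.tsum_eq_zero_add]
    simp only [Nat.cast_zero, zero_mul, zero_add]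
    refine tsum_congr fun m => ?_
    rw [Nat.factorial_succ]
    have : (m.factorial : ℝ) ≠ 0 := by exact_mod_cast Nat.factorial_ne_zero _
    have e : (((m + 1 : ℕ) : ℤ) + r) = (m : ℤ) + (r + 1) := by push_cast; ring
    rw [e]
    push_cast
    field_simp
    ring
  have h2 : ∀ m : ℕ, (m : ℝ) * (rho ((m : ℤ) + r) / (m.factorial : ℝ) * t ^ m) =
      rho ((m : ℤ) + (r - 1)) / (m.factorial : ℝ) * t ^ m - (r : ℝ) * (rho ((m : ℤ) + r) / (m.factorial : ℝ) * t ^ m) := by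
    intro m
    have := rho_mul ((m : ℤ) + r)
    rw [show (m : ℤ) + (r - 1) = (m : ℤ) + r - 1 by ring, ← this]
    push_cast
    ring
  rw [h1, tsum_congr h2, ((chat_summable t (r - 1)).tsum_sub ((chat_summable t r).mul_left _)), tsum_mul_left]
  simp only [chat]
  ring

lemma chat_symm (t : ℝ) (r : ℕ) : chat t (-(r : ℤ)) = t ^ r * chat t r := by
  have h := (chat_summable t (-(r : ℤ))).sum_add_tsum_nat_add r
  rw [chat, ← h, Finset.sum_eq_zero, zero_add, chat, ← tsum_mul_left]
  · refine tsum_congr fun m => ?_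
    rw [show ((m + r : ℕ) : ℤ) + -(r : ℤ) = (m : ℤ) by push_cast; ring,
      show (m : ℤ) + (r : ℤ) = ((m + r : ℕ) : ℤ) by push_cast; ring, rho_nat, rho_nat, pow_add]
    ring
  · intro m hm
    rw [Finset.mem_range] at hm
    rw [rho_neg (by omega)]; simp

/-- symmetrised coefficients -/
noncomputable def CC (s : ℝ) (r : ℤ) : ℝ := s ^ r * chat (s ^ 2) r

lemma CC_symm (s : ℝ) (hs : 0 < s) (r : ℤ) : CC s (-r) = CC s r := by
  have key : ∀ r : ℕ, CC s (-(r : ℤ)) = CC s r := by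
    intro r
    rw [CC, CC, chat_symm, zpow_neg, zpow_natCast, ← pow_mul, two_mul, pow_add]
    have : s ^ r ≠ 0 := by positivity
    field_simp
  rcases le_total 0 r with h | h
  · lift r to ℕ using h
    exact key r
  · obtain ⟨m, hm⟩ := Int.eq_ofNat_of_zero_le (by omega : 0 ≤ -r)
    have : r = -(m : ℤ) := by omega
    rw [this, neg_neg, key]

lemma CC_rec (s : ℝ) (hs : 0 < s) (r : ℤ) : (r : ℝ) * CC s r = s * (CC s (r - 1) - CC s (r + 1)) := by
  have := chat_rec (s ^ 2) r
  rw [CC, mul_left_comm, this, CC, CC, zpow_sub_one₀ hs.ne', zpow_add_one₀ hs.ne']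
  field_simp

lemma det_CC (k : ℕ) (s : ℝ) (hs : 0 < s) (r : ℤ) :
    Matrix.det (Matrix.of fun i j : Fin k => CC s ((j : ℤ) - (i : ℤ) + r)) =
      s ^ (r * k) * Matrix.det (Matrix.of fun i j : Fin k => chat (s ^ 2) ((j : ℤ) - (i : ℤ) + r)) := by
  have h1 : (Matrix.of fun i j : Fin k => CC s ((j : ℤ) - (i : ℤ) + r)) =
      Matrix.of fun i j : Fin k => s ^ (-(i : ℤ)) * (Matrix.of fun i j : Fin k => s ^ ((j : ℤ) + r) *
        (Matrix.of fun i j : Fin k => chat (s ^ 2) ((j : ℤ) - (i : ℤ) + r)) i j) i j := by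
    ext i j
    simp only [Matrix.of_apply, CC]
    rw [← mul_assoc, ← zpow_add₀ hs.ne']
    congr 2; ring
  rw [h1, Matrix.det_mul_column, Matrix.det_mul_row, ← mul_assoc, ← Finset.prod_mul_distrib]
  congr 1
  rw [Finset.prod_congr rfl (g := fun _ => s ^ r)]
  · simp [zpow_mul]
  · intro i _
    rw [← zpow_add₀ hs.ne']
    congr 1; ring

noncomputable def DD (s : ℝ) (k : ℕ) : ℝ := Matrix.det (Matrix.of fun i j : Fin k => CC s ((j : ℤ) - (i : ℤ)))

lemma DD_hasSum (s : ℝ) (hs : 0 < s) (k : ℕ) :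
    HasSum (fun n : ℕ => (uu k n : ℝ) / (n.factorial : ℝ) ^ 2 * (s ^ 2) ^ n) (DD s k) := by
  have h1 := det_chat k (s ^ 2) 0 0 (fun _ _ => rfl)
  have h2 := det_CC k s hs 0
  simp only [zero_mul, zpow_zero, one_mul] at h2
  rw [← h2] at h1
  simp only [add_zero] at h1
  rw [DD]
  convert h1 using 2 with n
  rw [uu_eq]
  have : (n.factorial : ℝ) ≠ 0 := by exact_mod_cast Nat.factorial_ne_zero _
  field_simp

lemma EE_det_nonneg (s : ℝ) (hs : 0 < s) (k : ℕ) :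
    0 ≤ Matrix.det (Matrix.of fun i j : Fin k => CC s ((j : ℤ) - (i : ℤ) + 1)) := by
  rw [det_CC k s hs 1]
  refine mul_nonneg (by positivity) ?_
  refine (det_chat k (s ^ 2) 1 (fun i => if i < k then 1 else 0) (fun i hi => by simp [hi])).nonneg fun n => ?_
  have := EE_nonneg k n
  positivity

noncomputable def ph (s : ℝ) (j : ℤ) : Polynomial ℝ →ₗ[ℝ] ℝ :=
  (Polynomial.basisMonomials ℝ).constr ℝ (fun i : ℕ => CC s ((i : ℤ) - j))

lemma ph_X_pow (s : ℝ) (j : ℤ) (i : ℕ) : ph s j (Polynomial.X ^ i) = CC s ((i : ℤ) - j) := by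
  have : (Polynomial.X ^ i : Polynomial ℝ) = Polynomial.basisMonomials ℝ i := by
    rw [Polynomial.coe_basisMonomials]; exact (Polynomial.monomial_one_right_eq_X_pow i).symm
  rw [this, ph, Module.Basis.constr_basis]

lemma poly_lin_ext {f g : Polynomial ℝ →ₗ[ℝ] ℝ} (h : ∀ i : ℕ, f (Polynomial.X ^ i) = g (Polynomial.X ^ i)) : f = g := by
  apply (Polynomial.basisMonomials ℝ).ext
  intro i
  rw [Polynomial.coe_basisMonomials]
  simpa only [Polynomial.monomial_one_right_eq_X_pow] using h i

lemma ph_X_mul (s : ℝ) (j : ℤ) (f : Polynomial ℝ) : ph s j (Polynomial.X * f) = ph s (j - 1) f := by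
  have : (ph s j).comp (LinearMap.mulLeft ℝ Polynomial.X) = ph s (j - 1) := by
    apply poly_lin_ext
    intro i
    simp only [LinearMap.comp_apply, LinearMap.mulLeft_apply]
    rw [← pow_succ', ph_X_pow, ph_X_pow]
    congr 1; push_cast; ring
  exact LinearMap.congr_fun this f

lemma ph_C_mul (s : ℝ) (j : ℤ) (a : ℝ) (f : Polynomial ℝ) : ph s j (Polynomial.C a * f) = a * ph s j f := by
  rw [← Polynomial.smul_eq_C_mul, map_smul, smul_eq_mul]

lemma ph_deriv (s : ℝ) (hs : 0 < s) (j : ℤ) (f : Polynomial ℝ) :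
    ph s j (Polynomial.X * Polynomial.derivative f) =
      s * (ph s (j + 1) f - ph s (j - 1) f) + j * ph s j f := by
  have : (ph s j).comp ((LinearMap.mulLeft ℝ Polynomial.X).comp Polynomial.derivative) =
      s • (ph s (j + 1) - ph s (j - 1)) + (j : ℝ) • ph s j := by
    apply poly_lin_ext
    intro i
    simp only [LinearMap.comp_apply, LinearMap.mulLeft_apply, LinearMap.add_apply, LinearMap.smul_apply,
      LinearMap.sub_apply, smul_eq_mul, ph_X_pow]
    have e : (Polynomial.X * Polynomial.derivative (Polynomial.X ^ i) : Polynomial ℝ) =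
        Polynomial.C (i : ℝ) * Polynomial.X ^ i := by
      rw [Polynomial.derivative_X_pow]
      cases i with
      | zero => simp
      | succ i => simp only [Nat.add_sub_cancel, pow_succ]; ring
    rw [e, ph_C_mul, ph_X_pow]
    have := CC_rec s hs ((i : ℤ) - j)
    rw [show (i : ℤ) - (j + 1) = (i : ℤ) - j - 1 by ring, show (i : ℤ) - (j - 1) = (i : ℤ) - j + 1 by ring, ← this]
    push_cast; ring
  exact LinearMap.congr_fun this f

/-- orthogonal polynomials: `(p_k, q_k, N_k)` -/
noncomputable def opc (s : ℝ) : ℕ → Polynomial ℝ × Polynomial ℝ × ℝ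
  | 0 => (1, 1, CC s 0)
  | k + 1 =>
    (Polynomial.X * (opc s k).1 + Polynomial.C (-(ph s (-1) (opc s k).1) / (opc s k).2.2) * (opc s k).2.1,
     (opc s k).2.1 + Polynomial.C (-(ph s (-1) (opc s k).1) / (opc s k).2.2) * (Polynomial.X * (opc s k).1),
     (opc s k).2.2 * (1 - (-(ph s (-1) (opc s k).1) / (opc s k).2.2) ^ 2))

noncomputable def pO (s : ℝ) (k : ℕ) := (opc s k).1
noncomputable def qO (s : ℝ) (k : ℕ) := (opc s k).2.1
noncomputable def nO (s : ℝ) (k : ℕ) := (opc s k).2.2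
noncomputable def aO (s : ℝ) : ℕ → ℝ
  | 0 => 1
  | k + 1 => -(ph s (-1) (pO s k)) / nO s k

lemma pO_succ (s : ℝ) (k : ℕ) : pO s (k + 1) = Polynomial.X * pO s k + Polynomial.C (aO s (k + 1)) * qO s k := rfl
lemma qO_succ (s : ℝ) (k : ℕ) : qO s (k + 1) = qO s k + Polynomial.C (aO s (k + 1)) * (Polynomial.X * pO s k) := rfl
lemma nO_succ (s : ℝ) (k : ℕ) : nO s (k + 1) = nO s k * (1 - aO s (k + 1) ^ 2) := rfl

lemma qO_coeff_zero (s : ℝ) (k : ℕ) : (qO s k).coeff 0 = 1 := by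
  induction k with
  | zero => simp [qO, opc]
  | succ k ih => rw [qO_succ]; simp [ih]

lemma pO_coeff_zero (s : ℝ) (k : ℕ) : (pO s k).coeff 0 = aO s k := by
  cases k with
  | zero => simp [pO, opc, aO]
  | succ k => rw [pO_succ]; simp [qO_coeff_zero]

lemma pq_deg (s : ℝ) (k : ℕ) : (pO s k).natDegree ≤ k ∧ (pO s k).coeff k = 1 ∧ (qO s k).natDegree ≤ k := by
  induction k with
  | zero => simp [pO, qO, opc]
  | succ k ih =>
    obtain ⟨h1, h2, h3⟩ := ih
    have hX : (Polynomial.X * pO s k).natDegree ≤ k + 1 := by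
      refine Polynomial.natDegree_mul_le.trans ?_
      have := Polynomial.natDegree_X_le (R := ℝ)
      omega
    refine ⟨?_, ?_, ?_⟩
    · rw [pO_succ]
      exact Polynomial.natDegree_add_le_of_degree_le hX ((Polynomial.natDegree_C_mul_le _ _).trans (by omega))
    · rw [pO_succ, Polynomial.coeff_add, Polynomial.coeff_X_mul, h2, Polynomial.coeff_C_mul,
        Polynomial.coeff_eq_zero_of_natDegree_lt (n := k + 1) (p := qO s k) (by omega)]
      ring
    · rw [qO_succ]
      exact Polynomial.natDegree_add_le_of_degree_le (by omega) ((Polynomial.natDegree_C_mul_le _ _).trans hX)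

structure OInv (s : ℝ) (k : ℕ) : Prop where
  refl : ∀ j : ℤ, ph s j (qO s k) = ph s (k - j) (pO s k)
  orth : ∀ j : ℤ, 0 ≤ j → j < k → ph s j (pO s k) = 0
  norm : ph s k (pO s k) = nO s k

lemma ph_p_succ {s : ℝ} {k : ℕ} (h : OInv s k) (j : ℤ) :
    ph s j (pO s (k + 1)) = ph s (j - 1) (pO s k) + aO s (k + 1) * ph s (k - j) (pO s k) := by
  rw [pO_succ, map_add, ph_X_mul, ph_C_mul, h.refl]

lemma OInv_zero (s : ℝ) (hs : 0 < s) : OInv s 0 := by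
  have h1 : pO s 0 = Polynomial.X ^ 0 := by simp [pO, opc]
  have h2 : qO s 0 = Polynomial.X ^ 0 := by simp [qO, opc]
  refine ⟨?_, ?_, ?_⟩
  · intro j
    rw [h1, h2, ph_X_pow, ph_X_pow, ← CC_symm s hs]
    congr 1; push_cast; ring
  · intro j h3 h4; push_cast at h4; omega
  · rw [h1, ph_X_pow]; simp [nO, opc]

lemma ph_neg_one {s : ℝ} {k : ℕ} (hN : nO s k ≠ 0) : ph s (-1) (pO s k) = - aO s (k + 1) * nO s k := by
  rw [aO]; field_simp

lemma OInv_succ (s : ℝ) (k : ℕ) (h : OInv s k) (hN : nO s k ≠ 0) : OInv s (k + 1) := by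
  have hm := ph_neg_one hN
  refine ⟨?_, ?_, ?_⟩
  · intro j
    rw [ph_p_succ h, qO_succ, map_add, ph_C_mul, ph_X_mul, h.refl]
    push_cast
    rw [show (k : ℤ) + 1 - j - 1 = k - j by ring, show (k : ℤ) - (k + 1 - j) = j - 1 by ring]
  · intro j h1 h2
    push_cast at h2
    rw [ph_p_succ h]
    rcases eq_or_lt_of_le h1 with h3 | h3
    · rw [← h3, zero_sub, hm, sub_zero, h.norm]; ring
    · rw [h.orth (j - 1) (by omega) (by omega), h.orth (k - j) (by omega) (by omega)]; ring
  · rw [ph_p_succ h, nO_succ]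
    push_cast
    rw [show (k : ℤ) + 1 - 1 = k by ring, show (k : ℤ) - (k + 1) = -1 by ring, hm, h.norm]
    ring

lemma poly_expand (f : Polynomial ℝ) (k : ℕ) (hf : f.natDegree < k) (L : Polynomial ℝ →ₗ[ℝ] ℝ) :
    L f = ∑ m : Fin k, f.coeff m * L (Polynomial.X ^ (m : ℕ)) := by
  conv_lhs => rw [f.as_sum_range' k hf, map_sum]
  rw [← Fin.sum_univ_eq_sum_range (fun i => L (Polynomial.monomial i (f.coeff i)))]
  refine Finset.sum_congr rfl fun m _ => ?_
  rw [← Polynomial.C_mul_X_pow_eq_monomial, ← Polynomial.smul_eq_C_mul, map_smul, smul_eq_mul]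

noncomputable def Lmat (s : ℝ) (k : ℕ) : Matrix (Fin k) (Fin k) ℝ := Matrix.of fun i m => (pO s i).coeff m

lemma Lmat_det (s : ℝ) (k : ℕ) : (Lmat s k).det = 1 := by
  rw [Matrix.det_of_isLowerTriangular]
  · refine Finset.prod_eq_one fun i _ => ?_
    exact (pq_deg s i).2.1
  · intro i j hij
    have hij' : i < j := hij
    have h1 := (pq_deg s i).1
    have h2 : (i : ℕ) < j := hij'
    exact Polynomial.coeff_eq_zero_of_natDegree_lt (lt_of_le_of_lt h1 h2)

lemma DD_eq_det (s : ℝ) (k : ℕ) :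
    DD s k = Matrix.det (Matrix.of fun i j : Fin k => ph s (j : ℤ) (pO s i)) := by
  have : (Matrix.of fun i j : Fin k => ph s (j : ℤ) (pO s i)) =
      Lmat s k * (Matrix.of fun i j : Fin k => CC s ((j : ℤ) - (i : ℤ))).transpose := by
    ext i j
    rw [Matrix.mul_apply, Matrix.of_apply, poly_expand (pO s i) k (by have := (pq_deg s i).1; omega)]
    refine Finset.sum_congr rfl fun m _ => ?_
    rw [ph_X_pow]; rfl
  rw [this, Matrix.det_mul, Lmat_det, one_mul, Matrix.det_transpose, DD]

lemma DD_eq_prod (s : ℝ) (k : ℕ) (h : ∀ i, i < k → OInv s i) : DD s k = ∏ i ∈ range k, nO s i := by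
  rw [DD_eq_det, Matrix.det_of_isUpperTriangular, Finset.prod_range]
  · exact Finset.prod_congr rfl fun i _ => (h i i.2).norm
  · intro i j hij
    have : j < i := hij
    exact (h i i.2).orth j (by omega) (by exact_mod_cast this)

lemma uu_zero (k : ℕ) : uu k 0 = 1 := by
  rw [uu, Finset.filter_true_of_mem]
  · simp
  · intro σ _
    rw [lisLen_le_iff]; intro s _
    rw [Finset.eq_empty_of_isEmpty s]; simp

lemma DD_pos (s : ℝ) (hs : 0 < s) (k : ℕ) : 1 ≤ DD s k := by
  have h := DD_hasSum s hs k
  have := h.summable.sum_le_tsum {0} (fun n _ => by positivity)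
  rw [h.tsum_eq] at this
  simpa [uu_zero] using this

lemma OInv_all (s : ℝ) (hs : 0 < s) : ∀ k, OInv s k ∧ nO s k ≠ 0 := by
  have key : ∀ k, (∀ i, i ≤ k → OInv s i ∧ nO s i ≠ 0) := by
    intro k
    induction k with
    | zero =>
      intro i hi
      obtain rfl : i = 0 := by omega
      refine ⟨OInv_zero s hs, ?_⟩
      have h1 := DD_eq_prod s 1 (fun i hi => by obtain rfl : i = 0 := by omega
                                                exact OInv_zero s hs)
      have h2 := DD_pos s hs 1
      rw [h1] at h2
      simp at h2
      linarith
    | succ k ih =>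
      intro i hi
      rcases Nat.lt_or_ge i (k + 1) with h | h
      · exact ih i (by omega)
      · obtain rfl : i = k + 1 := by omega
        have hk := OInv_succ s k (ih k le_rfl).1 (ih k le_rfl).2
        refine ⟨hk, ?_⟩
        have h1 := DD_eq_prod s (k + 2) (fun i hi => by
          rcases Nat.lt_or_ge i (k + 1) with h | h
          · exact (ih i (by omega)).1
          · obtain rfl : i = k + 1 := by omega
            exact hk)
        have h2 := DD_pos s hs (k + 2)
        rw [h1, Finset.prod_range_succ] at h2
        intro h0
        rw [h0] at h2
        norm_num at h2
  exact fun k => key k k le_rfl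

lemma DD_succ (s : ℝ) (hs : 0 < s) (k : ℕ) : DD s (k + 1) = DD s k * nO s k := by
  rw [DD_eq_prod s _ (fun i _ => (OInv_all s hs i).1), DD_eq_prod s _ (fun i _ => (OInv_all s hs i).1),
    Finset.prod_range_succ]

lemma EE_eq (s : ℝ) (hs : 0 < s) (k : ℕ) :
    Matrix.det (Matrix.of fun i j : Fin (k + 1) => CC s ((j : ℤ) - (i : ℤ) + 1)) =
      (-1) ^ (k + 1) * aO s (k + 1) * DD s (k + 1) := by
  have h1 : (Matrix.of fun i j : Fin (k + 1) => ph s ((j : ℤ) - 1) (pO s i)) =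
      Lmat s (k + 1) * (Matrix.of fun i j : Fin (k + 1) => CC s ((j : ℤ) - (i : ℤ) + 1)).transpose := by
    ext i j
    rw [Matrix.mul_apply, Matrix.of_apply, poly_expand (pO s i) (k + 1) (by have := (pq_deg s i).1; omega)]
    refine Finset.sum_congr rfl fun m _ => ?_
    rw [ph_X_pow]
    simp only [Matrix.transpose_apply, Matrix.of_apply, Lmat]
    congr 2; ring
  have h2 : Matrix.det (Matrix.of fun i j : Fin (k + 1) => CC s ((j : ℤ) - (i : ℤ) + 1)) =
      Matrix.det (Matrix.of fun i j : Fin (k + 1) => ph s ((j : ℤ) - 1) (pO s i)) := by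
    rw [h1, Matrix.det_mul, Lmat_det, one_mul, Matrix.det_transpose]
  rw [h2, Matrix.det_succ_row _ (Fin.last k), Finset.sum_eq_single 0]
  · have h3 : (Matrix.of fun i j : Fin (k + 1) => ph s ((j : ℤ) - 1) (pO s i)).submatrix
        (Fin.last k).succAbove (Fin.succAbove 0) = Matrix.of fun i j : Fin k => ph s (j : ℤ) (pO s i) := by
      ext i j
      simp
    rw [h3, ← DD_eq_det, DD_succ s hs]
    simp only [Matrix.of_apply, Fin.val_last, Fin.val_zero, Nat.cast_zero, zero_sub, add_zero,
      ph_neg_one (OInv_all s hs k).2]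
    ring
  · intro j _ hj
    have : ph s ((j : ℤ) - 1) (pO s k) = 0 := by
      apply (OInv_all s hs k).1.orth
      · have : (j : ℕ) ≠ 0 := fun h => hj (Fin.ext h)
        omega
      · have := j.2
        omega
    simp [this]
  · simp

noncomputable def yO (s : ℝ) (k : ℕ) : ℝ := (-1) ^ k * aO s k

lemma yO_nonneg (s : ℝ) (hs : 0 < s) (k : ℕ) : 0 ≤ yO s k := by
  cases k with
  | zero => simp [yO, aO]
  | succ k =>
    have h1 := EE_det_nonneg s hs (k + 1)
    rw [EE_eq s hs] at h1
    have h2 := DD_pos s hs (k + 1)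
    exact nonneg_of_mul_nonneg_left h1 (by linarith)

lemma yO_zero (s : ℝ) : yO s 0 = 1 := by simp [yO, aO]

lemma yO_sq (s : ℝ) (k : ℕ) : yO s k ^ 2 = aO s k ^ 2 := by
  rw [yO, mul_pow, ← pow_mul, mul_comm k 2, pow_mul]; simp

lemma nO_pos (s : ℝ) (hs : 0 < s) (k : ℕ) : 0 < nO s k := by
  have h1 := DD_succ s hs k
  have h2 := DD_pos s hs k
  have h3 := DD_pos s hs (k + 1)
  by_contra h
  push Not at h
  nlinarith

lemma nO_rec (s : ℝ) (k : ℕ) : nO s (k + 1) = nO s k * (1 - yO s (k + 1) ^ 2) := by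
  rw [yO_sq, nO_succ]

lemma yO_lt_one (s : ℝ) (hs : 0 < s) (k : ℕ) : yO s (k + 1) < 1 := by
  have h1 := nO_rec s k
  have h2 := nO_pos s hs k
  have h3 := nO_pos s hs (k + 1)
  have h4 : 0 < 1 - yO s (k + 1) ^ 2 := by
    rw [h1] at h3
    exact (pos_iff_pos_of_mul_pos h3).1 h2
  have := yO_nonneg s hs (k + 1)
  nlinarith

lemma painleve_a (s : ℝ) (hs : 0 < s) (k : ℕ) :
    -((k : ℝ) + 1) * aO s (k + 1) = s * (1 - aO s (k + 1) ^ 2) * (aO s k + aO s (k + 2)) := by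
  set f : Polynomial ℝ := Polynomial.X * Polynomial.derivative (pO s (k + 1)) -
    Polynomial.C ((k : ℝ) + 1) * pO s (k + 1) -
    Polynomial.C (s * (1 - aO s (k + 1) ^ 2)) * (pO s k + Polynomial.C (aO s (k + 2)) * qO s k) with hf
  have I0 := (OInv_all s hs k).1
  have I1 := (OInv_all s hs (k + 1)).1
  have hm := ph_neg_one (OInv_all s hs (k + 1)).2
  have hn := nO_succ s k
  have hdeg : f.natDegree < k + 1 := by
    have hd := pq_deg s (k + 1)
    have hd0 := pq_deg s k
    rw [Nat.lt_succ_iff, Polynomial.natDegree_le_iff_coeff_eq_zero]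
    intro N hN
    have c1 : (pO s k).coeff N = 0 := Polynomial.coeff_eq_zero_of_natDegree_lt (by omega)
    have c2 : (qO s k).coeff N = 0 := Polynomial.coeff_eq_zero_of_natDegree_lt (by omega)
    obtain ⟨M, rfl⟩ : ∃ M, N = M + 1 := ⟨N - 1, by omega⟩
    simp only [hf, Polynomial.coeff_sub, Polynomial.coeff_X_mul, Polynomial.coeff_derivative, Polynomial.coeff_C_mul,
      Polynomial.coeff_add, c1, c2]
    rcases Nat.eq_or_lt_of_le (by omega : k ≤ M) with h | h
    · subst h; ring
    · rw [Polynomial.coeff_eq_zero_of_natDegree_lt (n := M + 1) (p := pO s (k + 1)) (by omega)]; ring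
  have hz : ∀ j : Fin (k + 1), ph s (j : ℤ) f = 0 := by
    intro j
    have hj := j.2
    rw [hf, map_sub, map_sub, ph_deriv s hs, ph_C_mul, ph_C_mul, map_add, ph_C_mul, I0.refl,
      I1.orth j (by omega) (by push_cast; omega)]
    have e1 : ph s ((j : ℤ) + 1) (pO s (k + 1)) = if (j : ℕ) = k then nO s (k + 1) else 0 := by
      split_ifs with h
      · rw [← I1.norm, h]; push_cast; rfl
      · exact I1.orth _ (by omega) (by push_cast; omega)
    have e2 : ph s ((j : ℤ) - 1) (pO s (k + 1)) = if (j : ℕ) = 0 then - aO s (k + 2) * nO s (k + 1) else 0 := by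
      split_ifs with h
      · rw [h, Nat.cast_zero, zero_sub, hm]
      · exact I1.orth _ (by omega) (by push_cast; omega)
    have e3 : ph s (j : ℤ) (pO s k) = if (j : ℕ) = k then nO s k else 0 := by
      split_ifs with h
      · rw [h, I0.norm]
      · exact I0.orth _ (by omega) (by omega)
    have e4 : ph s ((k : ℤ) - j) (pO s k) = if (j : ℕ) = 0 then nO s k else 0 := by
      split_ifs with h
      · rw [h, Nat.cast_zero, sub_zero, I0.norm]
      · exact I0.orth _ (by omega) (by omega)
    rw [e1, e2, e3, e4, hn]
    split_ifs <;> ring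
  have hvec : Matrix.vecMul (fun m : Fin (k + 1) => f.coeff m)
      (Matrix.of fun i j : Fin (k + 1) => CC s ((j : ℤ) - (i : ℤ))).transpose = 0 := by
    ext j
    rw [Pi.zero_apply, ← hz j, poly_expand f (k + 1) hdeg]
    simp only [Matrix.vecMul, dotProduct, Matrix.transpose_apply, Matrix.of_apply, ph_X_pow]
  have hdet : (Matrix.of fun i j : Fin (k + 1) => CC s ((j : ℤ) - (i : ℤ))).transpose.det ≠ 0 := by
    rw [Matrix.det_transpose]
    have := DD_pos s hs (k + 1)
    rw [DD] at this
    linarith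
  have h0 := congrFun (Matrix.eq_zero_of_vecMul_eq_zero hdet hvec) 0
  simp only [Fin.val_zero, Pi.zero_apply, hf, Polynomial.coeff_sub, Polynomial.mul_coeff_zero, Polynomial.coeff_X_zero,
    Polynomial.coeff_C_zero, Polynomial.coeff_add, pO_coeff_zero, qO_coeff_zero] at h0
  linarith

lemma painleve (s : ℝ) (hs : 0 < s) (k : ℕ) :
    s * (1 - yO s (k + 1) ^ 2) * (yO s k + yO s (k + 2)) = ((k : ℝ) + 1) * yO s (k + 1) := by
  have := painleve_a s hs k
  rw [yO_sq]
  simp only [yO, pow_succ]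
  have h : ((-1 : ℝ) ^ k) * ((-1 : ℝ) ^ k) = 1 := by rw [← mul_pow]; simp
  linear_combination (-1 : ℝ) ^ k * (-1) * this

lemma yO_pos (s : ℝ) (hs : 0 < s) (k : ℕ) : 0 < yO s k := by
  induction k with
  | zero => rw [yO_zero]; norm_num
  | succ k ih =>
    rcases (yO_nonneg s hs (k + 1)).lt_or_eq with h | h
    · exact h
    · exfalso
      have h1 := painleve s hs k
      rw [← h] at h1
      have := yO_nonneg s hs (k + 2)
      simp at h1
      rcases h1 with h1 | h1 <;> linarith

noncomputable def poi (t : ℝ) (n : ℕ) : ℝ := Real.exp (-t) * (t ^ n / (n.factorial : ℝ))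

noncomputable def pP (n k : ℕ) : ℝ := (uu k n : ℝ) / (n.factorial : ℝ)

noncomputable def FF (s : ℝ) (k : ℕ) : ℝ := Real.exp (-s ^ 2) * DD s k

lemma poi_nonneg {t : ℝ} (ht : 0 ≤ t) (n : ℕ) : 0 ≤ poi t n := by
  rw [poi]; positivity

lemma poi_hasSum (t : ℝ) : HasSum (poi t) 1 := by
  have h := (NormedSpace.expSeries_div_hasSum_exp (𝔸 := ℝ) t).mul_left (Real.exp (-t))
  rw [← Real.exp_eq_exp_ℝ, ← Real.exp_add, neg_add_cancel, Real.exp_zero] at h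
  exact h

lemma FF_hasSum (s : ℝ) (hs : 0 < s) (k : ℕ) : HasSum (fun n => poi (s ^ 2) n * pP n k) (FF s k) := by
  have h := (DD_hasSum s hs k).mul_left (Real.exp (-s ^ 2))
  rw [FF]
  refine h.congr_fun ?_ |> fun x => x
  intro n
  rw [poi, pP]
  have : (n.factorial : ℝ) ≠ 0 := by exact_mod_cast Nat.factorial_ne_zero _
  field_simp

lemma pP_nonneg (n k : ℕ) : 0 ≤ pP n k := by rw [pP]; positivity

lemma uu_le (n k : ℕ) : uu k n ≤ n.factorial := by
  refine (Finset.card_filter_le _ _).trans ?_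
  rw [Finset.card_univ, Fintype.card_perm, Fintype.card_fin]

lemma pP_le_one (n k : ℕ) : pP n k ≤ 1 := by
  rw [pP, div_le_one (by positivity)]
  exact_mod_cast uu_le n k

lemma lisLen_le {n : ℕ} (σ : Equiv.Perm (Fin n)) : lisLen σ ≤ n := by
  rw [lisLen_le_iff]; intro s _
  simpa using Finset.card_le_univ s

lemma pP_eq_one {n k : ℕ} (h : n ≤ k) : pP n k = 1 := by
  have : uu k n = n.factorial := by
    rw [uu, Finset.filter_true_of_mem fun σ _ => (lisLen_le σ).trans h, Finset.card_univ, Fintype.card_perm,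
      Fintype.card_fin]
  rw [pP, this, div_self]
  exact_mod_cast Nat.factorial_ne_zero _

lemma pP_mono (n : ℕ) {k k' : ℕ} (h : k ≤ k') : pP n k ≤ pP n k' := by
  rw [pP, pP]
  gcongr
  exact Finset.card_le_card (Finset.monotone_filter_right _ fun σ _ (hh : lisLen σ ≤ k) => hh.trans h)

lemma FF_mono (s : ℝ) (hs : 0 < s) {k k' : ℕ} (h : k ≤ k') : FF s k ≤ FF s k' :=
  hasSum_le (fun n => mul_le_mul_of_nonneg_left (pP_mono n h) (poi_nonneg (by positivity) n)) (FF_hasSum s hs k) (FF_hasSum s hs k')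

lemma FF_le_one (s : ℝ) (hs : 0 < s) (k : ℕ) : FF s k ≤ 1 :=
  hasSum_le (fun n => mul_le_of_le_one_right (poi_nonneg (by positivity) n) (pP_le_one n k)) (FF_hasSum s hs k) (poi_hasSum _)

lemma FF_pos (s : ℝ) (hs : 0 < s) (k : ℕ) : 0 < FF s k := by
  have := DD_pos s hs k
  rw [FF]; positivity

lemma FF_tendsto (s : ℝ) (hs : 0 < s) : Tendsto (FF s) atTop (nhds 1) := by
  refine tendsto_of_tendsto_of_tendsto_of_le_of_le (poi_hasSum (s ^ 2)).tendsto_sum_nat tendsto_const_nhds ?_ (FF_le_one s hs)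
  intro k
  have h := FF_hasSum s hs k
  have h1 := h.summable.sum_le_tsum (range k) (fun n _ => mul_nonneg (poi_nonneg (by positivity) n) (pP_nonneg n k))
  rw [h.tsum_eq] at h1
  refine le_trans (le_of_eq (Finset.sum_congr rfl fun n hn => ?_)) h1
  rw [pP_eq_one (Finset.mem_range.1 hn).le, mul_one]

lemma FF_succ (s : ℝ) (hs : 0 < s) (k : ℕ) : FF s (k + 1) = FF s k * nO s k := by
  rw [FF, FF, DD_succ s hs]; ring

lemma nO_ge_one (s : ℝ) (hs : 0 < s) (k : ℕ) : 1 ≤ nO s k := by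
  have h1 := FF_succ s hs k
  have h2 := FF_mono s hs (Nat.le_succ k)
  have h3 := FF_pos s hs k
  rw [Nat.succ_eq_add_one, h1] at h2
  by_contra h
  push Not at h
  nlinarith

lemma nO_tendsto (s : ℝ) (hs : 0 < s) : Tendsto (nO s) atTop (nhds 1) := by
  have h1 := FF_tendsto s hs
  have h2 := (h1.comp (tendsto_add_atTop_nat 1)).div h1 one_ne_zero
  rw [div_one] at h2
  refine h2.congr fun k => ?_
  have := (FF_pos s hs k).ne'
  simp only [Function.comp, Pi.div_apply, FF_succ s hs k]
  field_simp

lemma nO_sum_le (s : ℝ) (hs : 0 < s) (k w : ℕ) :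
    nO s k * (1 - ∑ j ∈ range w, yO s (k + 1 + j) ^ 2) ≤ nO s (k + w) ∧
    nO s (k + w) * (1 + ∑ j ∈ range w, yO s (k + 1 + j) ^ 2) ≤ nO s k := by
  induction w with
  | zero => simp
  | succ w ih =>
    rw [Finset.sum_range_succ]
    have hr := nO_rec s (k + w)
    rw [show k + 1 + w = k + w + 1 by ring, ← add_assoc, hr]
    have h0 : 0 ≤ ∑ j ∈ range w, yO s (k + 1 + j) ^ 2 := Finset.sum_nonneg fun _ _ => sq_nonneg _
    have h1 := nO_pos s hs (k + w)
    have h2 := yO_lt_one s hs (k + w)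
    have h3 := yO_nonneg s hs (k + w + 1)
    have h4 := nO_pos s hs k
    set S := ∑ j ∈ range w, yO s (k + 1 + j) ^ 2
    set Y := yO s (k + w + 1) ^ 2 with hY
    have hY0 : 0 ≤ Y := sq_nonneg _
    have hY1 : Y < 1 := by rw [hY]; nlinarith
    have h5 : nO s (k + w) ≤ nO s k := by nlinarith [ih.2]
    constructor
    · nlinarith [ih.1, mul_nonneg hY0 (sub_nonneg.2 h5)]
    · nlinarith [ih.2, mul_nonneg h1.le (mul_nonneg hY0 (add_nonneg h0 hY0))]

lemma nO_upper (s : ℝ) (hs : 0 < s) (k : ℕ) (S : ℝ) (hS : ∀ w, ∑ j ∈ range w, yO s (k + 1 + j) ^ 2 ≤ S) :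
    nO s k * (1 - S) ≤ 1 := by
  have h1 : Tendsto (fun w => nO s (k + w)) atTop (nhds 1) := by
    have := (nO_tendsto s hs).comp (tendsto_add_atTop_nat k)
    refine this.congr fun w => ?_
    simp [add_comm]
  refine ge_of_tendsto' h1 fun w => le_trans ?_ (nO_sum_le s hs k w).1
  exact mul_le_mul_of_nonneg_left (by linarith [hS w]) (nO_pos s hs k).le

lemma FF_incr (s : ℝ) (hs : 0 < s) (k : ℕ) (S : ℝ) (hS : ∀ w, ∑ j ∈ range w, yO s (k + 1 + j) ^ 2 ≤ S) :
    FF s (k + 1) - FF s k ≤ S := by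
  have h1 := nO_upper s hs k S hS
  have h2 := FF_succ s hs k
  have h3 := FF_pos s hs k
  have h4 := FF_le_one s hs (k + 1)
  have h5 : 0 ≤ S := by simpa using hS 0
  have h6 : FF s (k + 1) * (1 - S) ≤ FF s k := by
    rw [h2, mul_assoc]; nlinarith
  nlinarith

lemma nO_lower (s : ℝ) (hs : 0 < s) (k w : ℕ) : 1 + ∑ j ∈ range w, yO s (k + 1 + j) ^ 2 ≤ nO s k := by
  have h0 : 0 ≤ ∑ j ∈ range w, yO s (k + 1 + j) ^ 2 := Finset.sum_nonneg fun _ _ => sq_nonneg _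
  have h1 := nO_ge_one s hs (k + w)
  nlinarith [(nO_sum_le s hs k w).2]

lemma nO_anti (s : ℝ) (hs : 0 < s) : Antitone (nO s) := by
  apply antitone_nat_of_succ_le
  intro k
  rw [nO_rec]
  have := nO_pos s hs k
  nlinarith [sq_nonneg (yO s (k + 1))]

/-- generic blow up lemma -/
lemma blow (c : ℝ) : ∀ (T : ℕ) (u : ℕ → ℝ), 0 < u 0 → c ≤ u 0 → u 0 ≤ u 1 →
    (∀ j, j + 1 < T → c ≤ u (j + 1) → u (j + 1) ^ 3 / 2 ≤ u (j + 2) - 2 * u (j + 1) + u j) →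
    (∀ j, j ≤ T → u j ≤ 1) → (T : ℝ) * u 0 ≤ 8 := by
  intro T
  induction T using Nat.strong_induction_on with
  | _ T ih =>
  intro u h0 hc h1 hconv hle
  set A := u 0 with hA
  have hA1 : A ≤ 1 := hle 0 (Nat.zero_le _)
  -- growth estimate
  have grow : ∀ j : ℕ, j < T → A ≤ u j ∧ (j : ℝ) * (A ^ 3 / 2) ≤ u (j + 1) - u j := by
    intro j
    induction j with
    | zero => intro _; exact ⟨le_rfl, by simp; linarith⟩
    | succ j ihj =>
      intro hj
      obtain ⟨g1, g2⟩ := ihj (by omega)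
      have g3 : A ≤ u (j + 1) := by
        have : 0 ≤ (j : ℝ) * (A ^ 3 / 2) := by positivity
        linarith
      refine ⟨g3, ?_⟩
      have g4 := hconv j hj (hc.trans g3)
      have g5 : A ^ 3 ≤ u (j + 1) ^ 3 := by gcongr
      push_cast
      linarith
  have sumg : ∀ h : ℕ, h ≤ T → A + A ^ 3 / 4 * ((h : ℝ) * (h - 1)) ≤ u h := by
    intro h
    induction h with
    | zero => intro _; simp [hA]
    | succ h ihh =>
      intro hh
      have g1 := ihh (by omega)
      have g2 := (grow h (by omega)).2
      push_cast
      linarith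
  set h := ⌈2 / A⌉₊ + 1 with hh
  have hceil : 2 / A ≤ (⌈2 / A⌉₊ : ℝ) := Nat.le_ceil _
  have hceil2 : (⌈2 / A⌉₊ : ℝ) < 2 / A + 1 := Nat.ceil_lt_add_one (by positivity)
  have hcast : (h : ℝ) = (⌈2 / A⌉₊ : ℝ) + 1 := by rw [hh]; push_cast; ring
  have hAx : 2 / A * A = 2 := by field_simp
  rcases Nat.lt_or_ge T h with hT | hT
  · have : (T : ℝ) ≤ (⌈2 / A⌉₊ : ℝ) := by exact_mod_cast (by omega : T ≤ ⌈2 / A⌉₊)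
    nlinarith
  · have d := sumg h hT
    have d2 : 2 * A ≤ u h := by
      have e1 : (2 / A) * (2 / A) ≤ (h : ℝ) * (h - 1) := by
        rw [hcast]
        have : 0 < 2 / A := by positivity
        nlinarith
      have e2 : A ^ 3 / 4 * ((2 / A) * (2 / A)) = A := by field_simp; norm_num
      have e3 : A ^ 3 / 4 * ((2 / A) * (2 / A)) ≤ A ^ 3 / 4 * ((h : ℝ) * (h - 1)) := by gcongr
      linarith
    rcases Nat.eq_or_lt_of_le hT with hT' | hT'
    · rw [← hT', hcast]; nlinarith
    have hrec := ih (T - h) (by omega) (fun j => u (h + j)) (by simp only [add_zero]; linarith)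
      (by simp only [add_zero]; linarith)
      (by
        have := (grow h hT').2
        have e : 0 ≤ (h : ℝ) * (A ^ 3 / 2) := by positivity
        simp only [add_zero]; linarith)
      (by
        intro j hj hcj
        exact hconv (h + j) (by omega) hcj)
      (by intro j hj; exact hle _ (by omega))
    simp only [add_zero] at hrec
    have hsub : ((T - h : ℕ) : ℝ) = (T : ℝ) - h := by rw [Nat.cast_sub hT]
    rw [hsub] at hrec
    have hTh : (0 : ℝ) ≤ (T : ℝ) - h := by rw [← hsub]; positivity
    have : ((T : ℝ) - h) * (2 * A) ≤ 8 := le_trans (mul_le_mul_of_nonneg_left d2 hTh) hrec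
    nlinarith

lemma maxprin (z : ℕ → ℝ) (h0 : z 0 ≤ 0) (hb : ∀ k, z k ≤ 1)
    (hz : ∀ k, 0 < z (k + 1) → 0 ≤ z (k + 2) - 2 * z (k + 1) + z k) : ∀ k, z k ≤ 0 := by
  by_contra hcon
  push Not at hcon
  have hm := Nat.find_spec hcon
  obtain ⟨m, hm'⟩ : ∃ m, Nat.find hcon = m + 1 := by
    refine Nat.exists_eq_succ_of_ne_zero fun h => ?_
    rw [h] at hm; linarith
  have hmm : z m ≤ 0 := not_lt.1 (Nat.find_min hcon (by omega))
  rw [hm'] at hm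
  set δ := z (m + 1) with hδ
  have key : ∀ j : ℕ, δ ≤ z (m + j + 1) - z (m + j) ∧ (j + 1 : ℝ) * δ ≤ z (m + j + 1) := by
    intro j
    induction j with
    | zero => simp only [add_zero, ← hδ]; constructor <;> [linarith; simp]
    | succ j ih =>
      have h1 : 0 < z (m + j + 1) := lt_of_lt_of_le (by positivity) ih.2
      have h2 := hz (m + j) h1
      have h3 : δ ≤ z (m + (j + 1) + 1) - z (m + (j + 1)) := by
        rw [← add_assoc]; linarith [ih.1]
      refine ⟨h3, ?_⟩
      rw [← add_assoc] at h3 ⊢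
      push_cast
      linarith [ih.2]
  obtain ⟨N, hN⟩ := exists_nat_gt (1 / δ)
  have h1 := (key N).2
  have h2 := hb (m + N + 1)
  rw [div_lt_iff₀ hm] at hN
  nlinarith

lemma oscil (v : ℕ → ℝ) (a : ℝ) (ha : 0 ≤ a) (L : ℕ) (hL : 1 ≤ a * (L : ℝ) ^ 2) (hv : ∀ j, j ≤ 2 * L → 0 < v j) (h1 : v 1 ≤ v 0)
    (hc : ∀ j, j + 1 < 2 * L → v (j + 2) - 2 * v (j + 1) + v j ≤ - a * v (j + 1)) : False := by
  have dec : ∀ j, j < 2 * L → v (j + 1) ≤ v j := by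
    intro j
    induction j with
    | zero => intro _; exact h1
    | succ j ih =>
      intro hj
      have := ih (by omega)
      have h2 := hc j hj
      have h3 := hv (j + 1) (by omega)
      have : 0 ≤ a * v (j + 1) := by positivity
      linarith
  have dec' : ∀ i j, i ≤ j → j ≤ 2 * L → v j ≤ v i := by
    intro i j hij
    induction j, hij using Nat.le_induction with
    | base => intro _; exact le_rfl
    | succ j hj ih => intro h; exact (dec j (by omega)).trans (ih (by omega))
  have hLpos : 0 < L := by
    rcases Nat.eq_zero_or_pos L with h | h
    · subst h; simp at hL; linarith
    · exact h
  have vL := hv L (by omega)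
  have sl : ∀ j, j ≤ L → v (j + 1) - v j ≤ - a * (j * v L) ∨ L = j := by
    intro j
    induction j with
    | zero => intro _; left; simp; linarith
    | succ j ih =>
      intro hj
      rcases ih (by omega) with h | h
      · rcases Nat.eq_or_lt_of_le hj with h' | h'
        · right; omega
        · left
          have h2 := hc j (by omega)
          have h3 := dec' (j + 1) L hj (by omega)
          have : a * v L ≤ a * v (j + 1) := by gcongr
          push_cast
          linarith
      · omega
  have slL : v (L + 1) - v L ≤ - a * (L * v L) ∨ L = 1 ∧ v L * 1 ≤ a * v L := by
    obtain ⟨M, rfl⟩ : ∃ M, L = M + 1 := ⟨L - 1, by omega⟩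
    left
    rcases sl M (by omega) with h | h
    · have h2 := hc M (by omega)
      push_cast
      linarith
    · omega
  have slL' : v (L + 1) - v L ≤ - a * (L * v L) := by
    rcases slL with h | ⟨h, h'⟩
    · exact h
    · have h2 := hc 0 (by omega)
      subst h
      simp only [zero_add] at h2 h' ⊢
      push_cast
      linarith
  have fin : ∀ j, j < L → v (L + j + 1) - v (L + j) ≤ - a * (L * v L) ∧
      v (L + j + 1) ≤ v L - (j + 1 : ℝ) * (a * (L * v L)) := by
    intro j
    induction j with
    | zero => intro _; refine ⟨slL', by simp; linarith⟩
    | succ j ih =>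
      intro hj
      obtain ⟨i1, i2⟩ := ih (by omega)
      have h2 := hc (L + j) (by omega)
      have h3 := hv (L + j + 1) (by omega)
      have h4 : 0 ≤ a * v (L + j + 1) := by positivity
      have h5 : v (L + (j + 1) + 1) - v (L + (j + 1)) ≤ - a * (L * v L) := by
        rw [← add_assoc]; linarith
      refine ⟨h5, ?_⟩
      rw [← add_assoc] at h5 ⊢
      push_cast
      linarith
  have h6 := (fin (L - 1) (by omega)).2
  have h7 := hv (L + (L - 1) + 1) (by omega)
  have h8 : ((L - 1 : ℕ) : ℝ) + 1 = L := by
    have : L - 1 + 1 = L := by omega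
    exact_mod_cast this
  rw [h8] at h6
  have : v L ≤ (L : ℝ) * (a * (L * v L)) := by nlinarith
  linarith

lemma yO_le_one (s : ℝ) (hs : 0 < s) (k : ℕ) : yO s k ≤ 1 := by
  cases k with
  | zero => rw [yO_zero]
  | succ k => exact (yO_lt_one s hs k).le

lemma y_conv (s : ℝ) (hs : 0 < s) (k : ℕ) :
    (((k : ℝ) + 1) / s) * yO s (k + 1) * (1 + yO s (k + 1) ^ 2) ≤ yO s k + yO s (k + 2) := by
  have h := painleve s hs k
  have h1 := yO_lt_one s hs k
  have h2 := yO_nonneg s hs (k + 1)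
  have h3 := yO_nonneg s hs k
  have h4 := yO_nonneg s hs (k + 2)
  set y := yO s (k + 1)
  set A := yO s k + yO s (k + 2)
  have hA : 0 ≤ A := by positivity
  have e : ((k : ℝ) + 1) / s * y = (1 - y ^ 2) * A := by
    rw [div_mul_eq_mul_div, div_eq_iff hs.ne']; linarith
  rw [e]
  nlinarith [mul_nonneg hA (sq_nonneg (y ^ 2))]

lemma y_conv' (s : ℝ) (hs : 0 < s) (k : ℕ) (x : ℝ) (hx : 2 * s + x ≤ k + 1) (hx0 : 0 ≤ x) :
    yO s (k + 1) * (x / s) + 2 * yO s (k + 1) ^ 3 ≤ yO s (k + 2) - 2 * yO s (k + 1) + yO s k := by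
  have h := y_conv s hs k
  have h2 := yO_nonneg s hs (k + 1)
  set y := yO s (k + 1)
  have h3 : 2 + x / s ≤ ((k : ℝ) + 1) / s := by
    rw [le_div_iff₀ hs, add_mul, div_mul_cancel₀ _ hs.ne']; linarith
  have h4 : 0 ≤ x / s := by positivity
  have h5 : (2 + x / s) * (y * (1 + y ^ 2)) ≤ ((k : ℝ) + 1) / s * (y * (1 + y ^ 2)) :=
    mul_le_mul_of_nonneg_right h3 (by positivity)
  have h6 : 0 ≤ x / s * y ^ 3 := by positivity
  nlinarith

lemma y_no_incr (s : ℝ) (hs : 0 < s) (k : ℕ) (c : ℝ) (hc : c ≤ yO s k)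
    (h : ∀ j, k ≤ j → c ≤ yO s (j + 1) → yO s (j + 1) ^ 3 / 2 ≤ yO s (j + 2) - 2 * yO s (j + 1) + yO s j) :
    yO s (k + 1) < yO s k := by
  by_contra hcon
  push Not at hcon
  have hp := yO_pos s hs k
  obtain ⟨T, hT⟩ := exists_nat_gt (8 / yO s k)
  have := blow c T (fun j => yO s (k + j)) hp hc hcon
    (fun j _ hj => h (k + j) (by omega) hj) (fun j _ => yO_le_one s hs _)
  rw [div_lt_iff₀ hp] at hT
  simp only [add_zero] at this
  linarith

lemma y_anti (s : ℝ) (hs : 0 < s) (k : ℕ) (hk : 2 * s ≤ k) : yO s (k + 1) < yO s k := by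
  refine y_no_incr s hs k 0 (yO_nonneg s hs k) fun j hj _ => ?_
  have h1 : (k : ℝ) ≤ j := by exact_mod_cast hj
  have := y_conv' s hs j 0 (by linarith) le_rfl
  have h2 := yO_nonneg s hs (j + 1)
  have : 0 ≤ yO s (j + 1) ^ 3 := by positivity
  simp only [zero_div, mul_zero] at *
  linarith

lemma y_blow_left (s : ℝ) (hs : 0 < s) (k T : ℕ) (hT : T ≤ k) (c : ℝ) (hc : c ≤ yO s k) (h1 : yO s k ≤ yO s (k - 1))
    (h : ∀ j, k < j + 1 + T → c ≤ yO s (j + 1) → yO s (j + 1) ^ 3 / 2 ≤ yO s (j + 2) - 2 * yO s (j + 1) + yO s j) :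
    (T : ℝ) * yO s k ≤ 8 := by
  refine blow c T (fun j => yO s (k - j)) (yO_pos s hs _) hc h1 (fun j hj hcj => ?_) (fun j _ => yO_le_one s hs _)
  obtain ⟨i, hi⟩ : ∃ i, k = i + (j + 2) := ⟨k - (j + 2), by omega⟩
  have e1 : k - (j + 1) = i + 1 := by omega
  have e2 : k - (j + 2) = i := by omega
  have e3 : k - j = i + 2 := by omega
  simp only [e1, e2, e3] at hcj ⊢
  by_cases hz : k < i + 1 + T
  · have := h i hz hcj
    linarith
  · exfalso; omega

lemma y_blow_upper (s : ℝ) (hs : 0 < s) (j : ℕ) (hj : 1 ≤ j) : (j : ℝ) * yO s (⌈2 * s⌉₊ + j) ≤ 8 := by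
  have hc := Nat.le_ceil (2 * s)
  refine y_blow_left s hs _ j (by omega) 0 (yO_nonneg s hs _) ?_ ?_
  · obtain ⟨i, rfl⟩ : ∃ i, j = i + 1 := ⟨j - 1, by omega⟩
    refine (y_anti s hs (⌈2 * s⌉₊ + i) (by push_cast; linarith [(Nat.cast_nonneg i : (0:ℝ) ≤ i)])).le
  · intro i hi _
    have h1 : ((⌈2 * s⌉₊ : ℕ) : ℝ) ≤ i + 1 := by exact_mod_cast (by omega : ⌈2 * s⌉₊ ≤ i + 1)
    have := y_conv' s hs i 0 (by linarith) le_rfl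
    have h2 := yO_nonneg s hs (i + 1)
    have : 0 ≤ yO s (i + 1) ^ 3 := by positivity
    simp only [zero_div, mul_zero] at *
    linarith

lemma y_decay (s : ℝ) (hs : 0 < s) (l : ℕ) (hl : 1 ≤ l) (h1 : s ≤ (l : ℝ) ^ 3) (i : ℕ) :
    yO s (⌈2 * s⌉₊ + l + i) ≤ 8 / l * (1 - 1 / (2 * l)) ^ i := by
  have hl' : (1 : ℝ) ≤ l := by exact_mod_cast hl
  have hlp : (0 : ℝ) < l := by linarith
  set r : ℝ := 1 - 1 / (2 * l) with hr
  have hq : 1 / (2 * (l : ℝ)) ≤ 1 / 2 := by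
    apply one_div_le_one_div_of_le <;> linarith
  have hq0 : 0 < 1 / (2 * (l : ℝ)) := by positivity
  have hr0 : 1 / 2 ≤ r := by linarith
  have hc := Nat.le_ceil (2 * s)
  have := maxprin (fun i => yO s (⌈2 * s⌉₊ + l + i) - 8 / l * r ^ i) ?_ ?_ ?_ i
  · linarith
  · have := y_blow_upper s hs l hl
    simp only [add_zero, pow_zero, mul_one, sub_nonpos]
    rw [le_div_iff₀ hlp]; linarith
  · intro k
    have := yO_le_one s hs (⌈2 * s⌉₊ + l + k)
    have : 0 ≤ 8 / l * r ^ k := by positivity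
    linarith
  · intro k hk
    have h2 := y_conv' s hs (⌈2 * s⌉₊ + l + k) l (by push_cast; linarith [(Nat.cast_nonneg k : (0:ℝ) ≤ k)]) hlp.le
    rw [← add_assoc] at hk ⊢
    rw [← add_assoc]
    have h3 := yO_nonneg s hs (⌈2 * s⌉₊ + l + k + 1)
    set y := yO s (⌈2 * s⌉₊ + l + k + 1)
    have h4 : (1 : ℝ) / l ^ 2 ≤ l / s := by
      rw [div_le_div_iff₀ (by positivity) hs]; nlinarith
    have h5 : y * (1 / l ^ 2) ≤ y * (l / s) := mul_le_mul_of_nonneg_left h4 h3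
    have h6 : 0 ≤ y ^ 3 := by positivity
    have h7 : r ^ (k + 2) - 2 * r ^ (k + 1) + r ^ k = r ^ k * (1 / l ^ 2) / 4 := by
      have : r ^ (k + 2) - 2 * r ^ (k + 1) + r ^ k = r ^ k * (1 - r) ^ 2 := by ring
      rw [this, hr]; field_simp; ring
    have h8 : (8 / l * r ^ k * (1 / 2)) ≤ 8 / l * r ^ (k + 1) := by
      rw [pow_succ, mul_assoc]
      have : 0 ≤ r ^ k := by positivity
      gcongr
    have h9 : 8 / l * r ^ k * (1 / 2) * (1 / l ^ 2) ≤ y * (1 / l ^ 2) :=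
      mul_le_mul_of_nonneg_right (by linarith) (by positivity)
    have h10 : 0 ≤ 8 / l * r ^ k * (1 / l ^ 2) := by positivity
    have h11 : 8 / l * r ^ (k + 2) - 2 * (8 / l * r ^ (k + 1)) + 8 / l * r ^ k = 8 / l * r ^ k * (1 / l ^ 2) / 4 := by
      have := congrArg (fun x : ℝ => 8 / (l : ℝ) * x) h7
      linarith
    linarith

lemma geo_le (l : ℕ) (hl : 1 ≤ l) (w : ℕ) : ∑ j ∈ range w, (1 - 1 / (2 * (l : ℝ))) ^ j ≤ 2 * l := by
  have hl' : (1 : ℝ) ≤ l := by exact_mod_cast hl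
  have hq : 1 / (2 * (l : ℝ)) ≤ 1 / 2 := by
    apply one_div_le_one_div_of_le <;> linarith
  have hq0 : 0 < 1 / (2 * (l : ℝ)) := by positivity
  have h := geom_sum_mul_neg (1 - 1 / (2 * (l : ℝ))) w
  have h1 : 0 ≤ (1 - 1 / (2 * (l : ℝ))) ^ w := pow_nonneg (by linarith) _
  rw [sub_sub_cancel, mul_one_div, div_eq_iff (by positivity)] at h
  nlinarith

lemma y_tail (s : ℝ) (hs : 0 < s) (l : ℕ) (hl : 1 ≤ l) (h1 : s ≤ (l : ℝ) ^ 3) (i w : ℕ) :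
    ∑ j ∈ range w, yO s (⌈2 * s⌉₊ + l + i + 1 + j) ^ 2 ≤ 128 / l * (1 - 1 / (2 * l)) ^ i := by
  have hl' : (1 : ℝ) ≤ l := by exact_mod_cast hl
  have hlp : (0 : ℝ) < l := by linarith
  have hg := geo_le l hl w
  have hq : 1 / (2 * (l : ℝ)) ≤ 1 / 2 := by
    apply one_div_le_one_div_of_le <;> linarith
  have hq0 : 0 < 1 / (2 * (l : ℝ)) := by positivity
  have hd := y_decay s hs l hl h1
  set r : ℝ := 1 - 1 / (2 * l) with hr
  have hr0 : 0 ≤ r := by linarith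
  have hr1 : r ≤ 1 := by linarith
  calc ∑ j ∈ range w, yO s (⌈2 * s⌉₊ + l + i + 1 + j) ^ 2
      ≤ ∑ j ∈ range w, (64 / l ^ 2 * r ^ i) * r ^ j := by
        refine Finset.sum_le_sum fun j _ => ?_
        have h2 := hd (i + 1 + j)
        rw [show ⌈2 * s⌉₊ + l + i + 1 + j = ⌈2 * s⌉₊ + l + (i + 1 + j) by ring]
        calc _ ≤ (8 / l * r ^ (i + 1 + j)) ^ 2 := by
              have := yO_nonneg s hs (⌈2 * s⌉₊ + l + (i + 1 + j)); gcongr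
          _ = 64 / l ^ 2 * r ^ (2 * (i + 1 + j)) := by rw [mul_pow, ← pow_mul, div_pow, mul_comm 2]; norm_num
          _ ≤ 64 / l ^ 2 * r ^ (i + j) := by
              refine mul_le_mul_of_nonneg_left (pow_le_pow_of_le_one hr0 hr1 (by omega)) (by positivity)
          _ = _ := by rw [pow_add]; ring
    _ = 64 / l ^ 2 * r ^ i * ∑ j ∈ range w, r ^ j := by rw [Finset.mul_sum]
    _ ≤ 64 / l ^ 2 * r ^ i * (2 * l) := mul_le_mul_of_nonneg_left hg (by positivity)
    _ = _ := by field_simp; ring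

lemma T1 (s : ℝ) (hs : 0 < s) (l : ℕ) (hl : 1 ≤ l) (h1 : s ≤ (l : ℝ) ^ 3) (i : ℕ) :
    1 - FF s (⌈2 * s⌉₊ + l + i) ≤ 256 * (1 - 1 / (2 * l)) ^ i := by
  have hl' : (1 : ℝ) ≤ l := by exact_mod_cast hl
  have hlp : (0 : ℝ) < l := by linarith
  have hq : 1 / (2 * (l : ℝ)) ≤ 1 / 2 := by
    apply one_div_le_one_div_of_le <;> linarith
  have hq0 : 0 < 1 / (2 * (l : ℝ)) := by positivity
  have hg := geo_le l hl
  have hinc : ∀ i, FF s (⌈2 * s⌉₊ + l + i + 1) - FF s (⌈2 * s⌉₊ + l + i) ≤ 128 / l * (1 - 1 / (2 * l)) ^ i :=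
    fun i => FF_incr s hs _ _ (y_tail s hs l hl h1 i)
  set r : ℝ := 1 - 1 / (2 * l) with hr
  have hr0 : 0 ≤ r := by linarith
  have key : ∀ w, FF s (⌈2 * s⌉₊ + l + i + w) - FF s (⌈2 * s⌉₊ + l + i) ≤ 128 / l * r ^ i * ∑ j ∈ range w, r ^ j := by
    intro w
    induction w with
    | zero => simp
    | succ w ih =>
      have := hinc (i + w)
      rw [Finset.sum_range_succ, mul_add]
      rw [pow_add, ← add_assoc] at this
      rw [← add_assoc]
      linarith
  have key2 : ∀ w, FF s (⌈2 * s⌉₊ + l + i + w) ≤ FF s (⌈2 * s⌉₊ + l + i) + 256 * r ^ i := by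
    intro w
    have h3 : 128 / l * r ^ i * ∑ j ∈ range w, r ^ j ≤ 128 / l * r ^ i * (2 * l) :=
      mul_le_mul_of_nonneg_left (hg w) (by positivity)
    have h4 : 128 / l * r ^ i * (2 * l) = 256 * r ^ i := by field_simp; ring
    linarith [key w]
  have lim : Tendsto (fun w => FF s (⌈2 * s⌉₊ + l + i + w)) atTop (nhds 1) := by
    refine ((FF_tendsto s hs).comp (tendsto_add_atTop_nat (⌈2 * s⌉₊ + l + i))).congr fun w => ?_
    simp [add_comm]
  have := le_of_tendsto' lim key2
  linarith

lemma T3conv (s : ℝ) (hs : 0 < s) (l B : ℕ) (hl : 1 ≤ l) (hB : 1 ≤ B) (h2 : (l : ℝ) ^ 3 ≤ 8 * s) (k : ℕ)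
    (hk : 2 * s ≤ k + 1 + 2 * B * l) (hy : 8 * B / l ≤ yO s (k + 1)) :
    yO s (k + 1) ^ 3 / 2 ≤ yO s (k + 2) - 2 * yO s (k + 1) + yO s k := by
  have hl' : (1 : ℝ) ≤ l := by exact_mod_cast hl
  have hB' : (1 : ℝ) ≤ B := by exact_mod_cast hB
  have hlp : (0 : ℝ) < l := by linarith
  have h := y_conv s hs k
  have h0 := yO_nonneg s hs (k + 1)
  have h1 := (yO_lt_one s hs k).le
  set y := yO s (k + 1)
  set d := 2 * B * l / s with hd
  have hd0 : 0 ≤ d := by positivity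
  have hd1 : d ≤ 16 * B ^ 2 / l ^ 2 := by
    rw [hd, div_le_div_iff₀ hs (by positivity)]
    have h3 : (B : ℝ) * l ^ 3 ≤ B ^ 2 * (8 * s) := by
      apply mul_le_mul _ h2 (by positivity) (by positivity); nlinarith
    nlinarith
  have hd2 : 16 * B ^ 2 / l ^ 2 ≤ y ^ 2 / 4 := by
    have : (8 * B / l : ℝ) ^ 2 ≤ y ^ 2 := by gcongr
    have e : (8 * B / l : ℝ) ^ 2 = 4 * (16 * B ^ 2 / l ^ 2) := by field_simp; ring
    linarith
  have h3 : 2 - d ≤ ((k : ℝ) + 1) / s := by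
    rw [hd, sub_le_iff_le_add, ← add_div, le_div_iff₀ hs]; linarith
  have h5 : (2 - d) * (y * (1 + y ^ 2)) ≤ ((k : ℝ) + 1) / s * (y * (1 + y ^ 2)) :=
    mul_le_mul_of_nonneg_right h3 (by positivity)
  have h6 : d ≤ y ^ 2 / 4 := hd1.trans hd2
  have h7 : d * (y * (1 + y ^ 2)) ≤ y ^ 2 / 4 * (y * (1 + 1)) := by
    apply mul_le_mul h6 _ (by positivity) (by positivity)
    gcongr; nlinarith
  have h8 : 0 ≤ y ^ 3 := by positivity
  nlinarith

lemma T3y (s : ℝ) (hs : 0 < s) (l B : ℕ) (hl : 1 ≤ l) (hB : 1 ≤ B) (h2 : (l : ℝ) ^ 3 ≤ 8 * s) (hlB : 8 * B ≤ l ^ 2) (k : ℕ)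
    (hk : 2 * s ≤ k + B * l) : yO s k ≤ 8 * B / l := by
  have hl' : (1 : ℝ) ≤ l := by exact_mod_cast hl
  have hB' : (1 : ℝ) ≤ B := by exact_mod_cast hB
  have hlp : (0 : ℝ) < l := by linarith
  have hlB' : 8 * (B : ℝ) ≤ l ^ 2 := by exact_mod_cast hlB
  have hBl : (0 : ℝ) < B * l := by positivity
  by_contra hcon
  push Not at hcon
  have hconv : ∀ j : ℕ, k < j + B * l + 1 → 8 * B / l ≤ yO s (j + 1) → yO s (j + 1) ^ 3 / 2 ≤ yO s (j + 2) - 2 * yO s (j + 1) + yO s j := by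
    intro j hj hy
    refine T3conv s hs l B hl hB h2 j ?_ hy
    have : (k : ℝ) < j + B * l + 1 := by exact_mod_cast hj
    nlinarith
  have h3 := y_no_incr s hs k _ hcon.le fun j hj => hconv j (by omega)
  have hkB : (B * l : ℝ) ≤ k := by nlinarith
  have hkB' : B * l ≤ k := by exact_mod_cast hkB
  have hBl' : 1 ≤ B * l := Nat.mul_pos hB hl
  have h4 := y_blow_left s hs k (B * l) hkB' _ hcon.le ?_ fun j hj => hconv j (by omega)
  · push_cast at h4
    rw [div_lt_iff₀ hlp] at hcon
    nlinarith
  · obtain ⟨i, rfl⟩ : ∃ i, k = i + 1 := ⟨k - 1, by omega⟩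
    have := hconv i (by omega) hcon.le
    have h5 : 0 ≤ yO s (i + 1) ^ 3 := pow_nonneg (yO_nonneg s hs _) _
    simp only [Nat.add_sub_cancel]
    linarith

lemma T3 (s : ℝ) (hs : 0 < s) (l B : ℕ) (hl : 1 ≤ l) (hB : 1 ≤ B) (h1 : s ≤ (l : ℝ) ^ 3) (h2 : (l : ℝ) ^ 3 ≤ 8 * s)
    (hlB : 8 * B ≤ l ^ 2) (k : ℕ) (hk : 2 * s ≤ k + B * l) : FF s (k + 1) - FF s k ≤ 320 * B ^ 3 / l := by
  have hl' : (1 : ℝ) ≤ l := by exact_mod_cast hl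
  have hB' : (1 : ℝ) ≤ B := by exact_mod_cast hB
  have hlp : (0 : ℝ) < l := by linarith
  refine FF_incr s hs k _ fun w => ?_
  have hq : 1 / (2 * (l : ℝ)) ≤ 1 / 2 := by
    apply one_div_le_one_div_of_le <;> linarith
  have hq0 : 0 < 1 / (2 * (l : ℝ)) := by positivity
  have hQ : ⌈2 * s⌉₊ + l ≤ k + 3 * B * l := by
    have h3 := Nat.ceil_lt_add_one (show 0 ≤ 2 * s by linarith)
    have : ((⌈2 * s⌉₊ + l : ℕ) : ℝ) ≤ ((k + 3 * B * l : ℕ) : ℝ) := by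
      push_cast; nlinarith
    exact_mod_cast this
  obtain ⟨i, hi⟩ := Nat.exists_eq_add_of_le hQ
  have h4 : ∑ j ∈ range w, yO s (k + 1 + j) ^ 2 ≤ ∑ j ∈ range (3 * B * l + w), yO s (k + 1 + j) ^ 2 :=
    Finset.sum_le_sum_of_subset_of_nonneg (Finset.range_mono (by omega)) fun _ _ _ => sq_nonneg _
  rw [Finset.sum_range_add] at h4
  have h5 : ∑ j ∈ range w, yO s (k + 1 + (3 * B * l + j)) ^ 2 ≤ 128 / l := by
    have := y_tail s hs l hl h1 i w
    have h6 : (1 - 1 / (2 * (l : ℝ))) ^ i ≤ 1 := pow_le_one₀ (by linarith) (by linarith)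
    have h7 : 128 / l * (1 - 1 / (2 * (l : ℝ))) ^ i ≤ 128 / l * 1 := mul_le_mul_of_nonneg_left h6 (by positivity)
    refine le_trans (le_of_eq ?_) (this.trans (by linarith))
    refine Finset.sum_congr rfl fun j _ => ?_
    rw [show k + 1 + (3 * B * l + j) = ⌈2 * s⌉₊ + l + i + 1 + j by omega]
  have h8 : ∑ j ∈ range (3 * B * l), yO s (k + 1 + j) ^ 2 ≤ 192 * B ^ 3 / l := by
    calc _ ≤ ∑ j ∈ range (3 * B * l), (8 * B / l : ℝ) ^ 2 := by
          refine Finset.sum_le_sum fun j _ => ?_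
          have := yO_nonneg s hs (k + 1 + j)
          have h9 := T3y s hs l B hl hB h2 hlB (k + 1 + j) (by push_cast; linarith [(Nat.cast_nonneg j : (0:ℝ) ≤ j)])
          gcongr
      _ = _ := by
        rw [Finset.sum_const, Finset.card_range, nsmul_eq_mul]; push_cast; field_simp; ring
  have h9 : (128 : ℝ) / l ≤ 128 * B ^ 3 / l := by
    gcongr
    have : (1:ℝ) ≤ B ^ 3 := one_le_pow₀ hB'
    linarith
  have : (320 : ℝ) * B ^ 3 / l = 192 * B ^ 3 / l + 128 * B ^ 3 / l := by ring
  linarith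

lemma y_conc (s : ℝ) (hs : 0 < s) (l : ℕ) (hl : (l : ℝ) ≤ s) (k : ℕ) (hk : (k : ℝ) + 1 + 4 * l ≤ 2 * s)
    (hy : yO s (k + 1) ^ 2 < l / (2 * s)) :
    yO s (k + 2) - 2 * yO s (k + 1) + yO s k ≤ - (2 * l / s) * yO s (k + 1) := by
  have h := painleve s hs k
  have h1 := (yO_lt_one s hs k)
  have h0 := yO_pos s hs (k + 1)
  set y := yO s (k + 1)
  set A := yO s k + yO s (k + 2)
  set q := (l : ℝ) / (2 * s) with hq
  have hq0 : 0 ≤ q := by positivity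
  have hq1 : q ≤ 1 / 2 := by rw [hq, div_le_iff₀ (by positivity)]; linarith
  have e1 : 2 * (l : ℝ) / s = 4 * q := by rw [hq]; field_simp; ring
  have e2 : (l : ℝ) = 2 * s * q := by rw [hq]; field_simp
  rw [e1]
  have hA : (1 - y ^ 2) * A ≤ (2 - 8 * q) * y := by
    have h3 : s * ((1 - y ^ 2) * A) ≤ s * ((2 - 8 * q) * y) := by
      have : ((k : ℝ) + 1) * y ≤ (2 * s - 4 * l) * y := mul_le_mul_of_nonneg_right (by linarith) h0.le
      rw [e2] at this
      nlinarith
    exact le_of_mul_le_mul_left h3 hs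
  have h5 : 0 < 1 - y ^ 2 := by nlinarith
  have h6 : (1 - y ^ 2) * A ≤ (1 - y ^ 2) * ((2 - 4 * q) * y) := by
    refine hA.trans ?_
    rw [← mul_assoc]
    apply mul_le_mul_of_nonneg_right _ h0.le
    nlinarith
  have h7 : A ≤ (2 - 4 * q) * y := le_of_mul_le_mul_left h6 h5
  have : A = yO s k + yO s (k + 2) := rfl
  linarith

lemma y_window (s : ℝ) (hs : 0 < s) (l : ℕ) (hl1 : 1 ≤ l) (hl : (l : ℝ) ≤ s) (h1 : s ≤ (l : ℝ) ^ 3) (c : ℕ) (hc : 2 * l ≤ c)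
    (hc2 : (c : ℝ) + 6 * l ≤ 2 * s) : ∃ p, c ≤ p + 2 * l ∧ p ≤ c + 2 * l ∧ l / (2 * s) ≤ yO s p ^ 2 := by
  by_contra hcon
  push Not at hcon
  have hcon' : ∀ k, c ≤ k + 1 + 2 * l → k + 1 ≤ c + 2 * l →
      yO s (k + 2) - 2 * yO s (k + 1) + yO s k ≤ - (2 * l / s) * yO s (k + 1) := by
    intro k ha hb
    refine y_conc s hs l hl k ?_ (hcon _ ha hb)
    have : (k : ℝ) + 1 ≤ c + 2 * l := by exact_mod_cast hb
    linarith
  have ha : (0 : ℝ) ≤ 2 * l / s := by positivity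
  have haL : 1 ≤ 2 * l / s * (l : ℝ) ^ 2 := by
    rw [div_mul_eq_mul_div, le_div_iff₀ hs]; nlinarith
  by_cases hd : yO s (c + 1) ≤ yO s c
  · exact oscil (fun j => yO s (c + j)) _ ha l haL (fun j _ => yO_pos s hs _) hd
      fun j hj => hcon' (c + j) (by omega) (by omega)
  · push Not at hd
    obtain ⟨i, rfl⟩ : ∃ i, c = i + 1 := ⟨c - 1, by omega⟩
    have h2 := hcon' i (by omega) (by omega)
    have h3 := mul_nonneg ha (yO_nonneg s hs (i + 1))
    refine oscil (fun j => yO s (i + 1 - j)) _ ha l haL (fun j _ => yO_pos s hs _) ?_ fun j hj => ?_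
    · simp only [Nat.add_sub_cancel, Nat.sub_zero]
      rw [show i + 1 + 1 = i + 2 from rfl] at hd
      linarith
    · obtain ⟨t, ht⟩ : ∃ t, i + 1 = t + (j + 2) := ⟨i + 1 - (j + 2), by omega⟩
      have e1 : i + 1 - (j + 1) = t + 1 := by omega
      have e2 : i + 1 - (j + 2) = t := by omega
      have e3 : i + 1 - j = t + 2 := by omega
      simp only [e1, e2, e3]
      have := hcon' t (by omega) (by omega)
      linarith

lemma y_minprin (s : ℝ) (hs : 0 < s) (l : ℕ) (hl : (l : ℝ) ≤ s) (p q : ℕ) (hq : (q : ℝ) + 4 * l ≤ 2 * s)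
    (h1 : l / (2 * s) ≤ yO s p ^ 2) (h2 : l / (2 * s) ≤ yO s q ^ 2) :
    ∀ i, p ≤ i → i ≤ q → l / (2 * s) ≤ yO s i ^ 2 := by
  by_contra hcon
  push Not at hcon
  obtain ⟨i0, hi1, hi2, hi3⟩ := hcon
  obtain ⟨m, hm, hmin⟩ := Finset.exists_min_image (Icc p q) (fun i => yO s i) ⟨i0, by simp [hi1, hi2]⟩
  have hex : ∃ i, i ∈ Icc p q ∧ yO s i = yO s m := ⟨m, hm, rfl⟩
  obtain ⟨hj, hje⟩ := Nat.find_spec hex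
  have hjmin := fun t => @Nat.find_min _ _ hex t
  set j := Nat.find hex
  rw [Finset.mem_Icc] at hj
  have hjlt : yO s j ^ 2 < l / (2 * s) := by
    refine lt_of_le_of_lt ?_ hi3
    have := hmin i0 (by simp [hi1, hi2])
    have := yO_nonneg s hs j
    rw [hje] at this ⊢
    gcongr
  have hjp : j ≠ p := fun h => by rw [h] at hjlt; linarith
  have hjq : j ≠ q := fun h => by rw [h] at hjlt; linarith
  obtain ⟨t, ht⟩ : ∃ t, j = t + 1 := ⟨j - 1, by omega⟩
  rw [ht] at hjlt
  have hc := y_conc s hs l hl t (by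
    have : (t : ℝ) + 1 ≤ q := by exact_mod_cast (by omega : t + 1 ≤ q)
    linarith) hjlt
  have ha : (0 : ℝ) ≤ 2 * l / s := by positivity
  have h3 := mul_nonneg ha (yO_nonneg s hs (t + 1))
  have h4 : yO s m ≤ yO s (t + 2) := hmin _ (by rw [Finset.mem_Icc]; omega)
  have h5 : yO s m < yO s t := by
    have h6 : t ∈ Icc p q := by rw [Finset.mem_Icc]; omega
    refine lt_of_le_of_ne (hmin _ h6) fun h => hjmin t (by omega) ⟨h6, h.symm⟩
  rw [ht] at hje
  linarith

lemma T2 (s : ℝ) (hs : 0 < s) (l : ℕ) (hl : 9 ≤ l) (h1 : s ≤ (l : ℝ) ^ 3) (h2 : (l : ℝ) ^ 3 ≤ 8 * s)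
    (k i : ℕ) (hk : k + i + 12 * l ≤ ⌊2 * s⌋₊) : FF s k * (1 + 1 / l) ^ i ≤ 1 := by
  have hl' : (9 : ℝ) ≤ l := by exact_mod_cast hl
  have hlp : (0 : ℝ) < l := by linarith
  have h81 : 81 * (l : ℝ) ≤ (l : ℝ) ^ 3 := by
    have : (81 : ℝ) ≤ (l : ℝ) ^ 2 := by nlinarith
    calc 81 * (l : ℝ) ≤ (l : ℝ) ^ 2 * l := mul_le_mul_of_nonneg_right this hlp.le
      _ = _ := by ring
  have hls : (l : ℝ) ≤ s := by linarith
  have hM := Nat.floor_le (show 0 ≤ 2 * s by linarith)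
  have hM2 := Nat.lt_floor_add_one (2 * s)
  set M := ⌊2 * s⌋₊
  have hM16 : 16 * l ≤ M := by
    have : ((16 * l : ℕ) : ℝ) < ((M + 1 : ℕ) : ℝ) := by push_cast; linarith
    have : 16 * l < M + 1 := by exact_mod_cast this
    omega
  obtain ⟨c, hc⟩ := Nat.exists_eq_add_of_le' hM16
  have hcM : (M : ℝ) = c + 16 * l := by rw [hc]; push_cast; ring
  obtain ⟨p, hp1, hp2, hp3⟩ := y_window s hs l (by omega) hls h1 (c + 2 * l) (by omega) (by push_cast; linarith)
  obtain ⟨q, hq1, hq2, hq3⟩ := y_window s hs l (by omega) hls h1 (c + 10 * l) (by omega) (by push_cast; linarith)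
  have hqc : (q : ℝ) ≤ c + 12 * l := by exact_mod_cast (by omega : q ≤ c + 12 * l)
  have hmin := y_minprin s hs l hls p q (by linarith) hp3 hq3
  have hN : 1 + 1 / (l : ℝ) ≤ nO s (c + 4 * l) := by
    refine le_trans ?_ (nO_lower s hs (c + 4 * l) (4 * l))
    have : ∑ j ∈ range (4 * l), (l / (2 * s) : ℝ) ≤ ∑ j ∈ range (4 * l), yO s (c + 4 * l + 1 + j) ^ 2 := by
      refine Finset.sum_le_sum fun j hj => ?_
      rw [Finset.mem_range] at hj
      exact hmin _ (by omega) (by omega)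
    rw [Finset.sum_const, Finset.card_range, nsmul_eq_mul] at this
    have h3 : 1 / (l : ℝ) ≤ ((4 * l : ℕ) : ℝ) * (l / (2 * s)) := by
      push_cast
      rw [mul_div_assoc', div_le_div_iff₀ hlp (by positivity)]
      nlinarith
    linarith
  have key : ∀ j, k + j + 12 * l ≤ M → FF s k * (1 + 1 / (l : ℝ)) ^ j ≤ FF s (k + j) := by
    intro j
    induction j with
    | zero => intro _; simp
    | succ j ih =>
      intro hj
      have h3 := ih (by omega)
      rw [← add_assoc, FF_succ s hs, pow_succ, ← mul_assoc]
      have h4 := nO_anti s hs (show k + j ≤ c + 4 * l by omega)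
      exact mul_le_mul h3 (hN.trans h4) (by positivity) (FF_pos s hs _).le
  exact (key i hk).trans (FF_le_one s hs _)

noncomputable def insP {n : ℕ} (i j : Fin (n + 1)) (τ : Equiv.Perm (Fin n)) : Equiv.Perm (Fin (n + 1)) :=
  (finSuccEquiv' i).trans ((Equiv.optionCongr τ).trans (finSuccEquiv' j).symm)

lemma insP_self {n : ℕ} (i j : Fin (n + 1)) (τ : Equiv.Perm (Fin n)) : insP i j τ i = j := by
  simp [insP]

lemma insP_succAbove {n : ℕ} (i j : Fin (n + 1)) (τ : Equiv.Perm (Fin n)) (a : Fin n) :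
    insP i j τ (i.succAbove a) = j.succAbove (τ a) := by
  simp [insP]

lemma insP_bij {n : ℕ} (i : Fin (n + 1)) :
    Function.Bijective (fun x : Fin (n + 1) × Equiv.Perm (Fin n) => insP i x.1 x.2) := by
  rw [Fintype.bijective_iff_injective_and_card]
  constructor
  · rintro ⟨j, τ⟩ ⟨j', τ'⟩ h
    simp only at h
    have h1 : j = j' := by rw [← insP_self i j τ, h, insP_self]
    subst h1
    congr 1
    ext a
    have h2 := insP_succAbove i j τ a
    rw [h, insP_succAbove] at h2
    rw [Fin.succAbove_right_injective h2]
  · simp [Fintype.card_perm, Nat.factorial_succ]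

noncomputable def insE {n : ℕ} (i : Fin (n + 1)) : (Fin (n + 1) × Equiv.Perm (Fin n)) ≃ Equiv.Perm (Fin (n + 1)) :=
  Equiv.ofBijective _ (insP_bij i)

noncomputable def delP {n : ℕ} (i : Fin (n + 1)) (σ : Equiv.Perm (Fin (n + 1))) : Equiv.Perm (Fin n) := ((insE i).symm σ).2

lemma exists_ins {n : ℕ} (i : Fin (n + 1)) (σ : Equiv.Perm (Fin (n + 1))) : ∃ j, σ = insP i j (delP i σ) :=
  ⟨((insE i).symm σ).1, ((insE i).apply_symm_apply σ).symm⟩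

lemma sum_delP {n : ℕ} (i : Fin (n + 1)) (F : Equiv.Perm (Fin n) → ℝ) :
    ∑ σ, F (delP i σ) = (n + 1) * ∑ τ, F τ := by
  rw [← Equiv.sum_comp (insE i)]
  simp only [delP, Equiv.symm_apply_apply]
  rw [Fintype.sum_prod_type]
  simp

lemma lis_del_le {n : ℕ} (i : Fin (n + 1)) (σ : Equiv.Perm (Fin (n + 1))) : lisLen (delP i σ) ≤ lisLen σ := by
  obtain ⟨j, hj⟩ := exists_ins i σ
  set τ := delP i σ
  obtain ⟨s, hs, hc⟩ := exists_lisLen τ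
  rw [← hc, ← Finset.card_map i.succAboveEmb, hj]
  refine le_lisLen _ _ ?_
  rintro a ha b hb hab
  simp only [Finset.coe_map, Set.mem_image] at ha hb
  obtain ⟨a, ha, rfl⟩ := ha
  obtain ⟨b, hb, rfl⟩ := hb
  simp only [Fin.succAboveEmb_apply, insP_succAbove] at hab ⊢
  exact Fin.strictMono_succAbove j (hs ha hb ((Fin.strictMono_succAbove i).lt_iff_lt.1 hab))

lemma lis_del_ge {n : ℕ} (i : Fin (n + 1)) (σ : Equiv.Perm (Fin (n + 1))) (s : Finset (Fin (n + 1)))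
    (hs : StrictMonoOn (fun i => σ i) (s : Set (Fin (n + 1)))) : (s.erase i).card ≤ lisLen (delP i σ) := by
  obtain ⟨j, hj⟩ := exists_ins i σ
  set τ := delP i σ
  have h1 : (s.erase i) = (univ.filter (fun a : Fin n => i.succAbove a ∈ s)).map i.succAboveEmb := by
    ext x
    simp only [Finset.mem_erase, Finset.mem_map, Finset.mem_filter, Finset.mem_univ, true_and, Fin.succAboveEmb_apply]
    constructor
    · rintro ⟨hx, hxs⟩
      obtain ⟨y, rfl⟩ := Fin.exists_succAbove_eq hx
      exact ⟨y, hxs, rfl⟩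
    · rintro ⟨y, hy, rfl⟩
      exact ⟨Fin.succAbove_ne i y, hy⟩
  rw [h1, Finset.card_map]
  refine le_lisLen _ _ ?_
  intro a ha b hb hab
  simp only [Finset.coe_filter, Finset.mem_univ, true_and, Set.mem_ofPred_eq] at ha hb
  have := hs ha hb (Fin.strictMono_succAbove i hab)
  simp only [hj, insP_succAbove] at this
  exact (Fin.strictMono_succAbove j).lt_iff_lt.1 this

noncomputable def eU (φ : ℕ → ℝ) (n : ℕ) : ℝ := En (fun σ : Equiv.Perm (Fin n) => φ (lisLen σ))

lemma eU_def (φ : ℕ → ℝ) (n : ℕ) : eU φ n = (∑ σ : Equiv.Perm (Fin n), φ (lisLen σ)) / (n.factorial : ℝ) := by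
  rw [eU, En, Fintype.card_perm, Fintype.card_fin]

lemma eU_diff (φ : ℕ → ℝ) (c : ℝ) (h1 : ∀ k, φ (k + 1) ≤ φ k) (h2 : ∀ k, φ k ≤ φ (k + 1) + c) (n : ℕ) :
    0 ≤ eU φ n - eU φ (n + 1) ∧ eU φ n - eU φ (n + 1) ≤ c * eU (fun k => (k : ℝ)) (n + 1) / (n + 1) := by
  have hanti : Antitone φ := antitone_nat_of_succ_le h1
  have hf : (0 : ℝ) < (n.factorial : ℝ) := by exact_mod_cast Nat.factorial_pos n
  have key : ∑ σ : Equiv.Perm (Fin (n + 1)), ∑ i : Fin (n + 1), (φ (lisLen (delP i σ)) - φ (lisLen σ)) =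
      (n + 1) * ((n + 1) * (n.factorial : ℝ)) * (eU φ n - eU φ (n + 1)) := by
    rw [Finset.sum_comm]
    simp only [Finset.sum_sub_distrib, sum_delP _ (fun τ => φ (lisLen τ))]
    simp only [Finset.sum_const, Finset.card_univ, Fintype.card_fin, nsmul_eq_mul, eU_def, Nat.factorial_succ]
    push_cast
    field_simp
  have b1 : 0 ≤ ∑ σ : Equiv.Perm (Fin (n + 1)), ∑ i : Fin (n + 1), (φ (lisLen (delP i σ)) - φ (lisLen σ)) :=
    Finset.sum_nonneg fun σ _ => Finset.sum_nonneg fun i _ => sub_nonneg.2 (hanti (lis_del_le i σ))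
  have b2 : ∑ σ : Equiv.Perm (Fin (n + 1)), ∑ i : Fin (n + 1), (φ (lisLen (delP i σ)) - φ (lisLen σ)) ≤
      ∑ σ : Equiv.Perm (Fin (n + 1)), c * lisLen σ := by
    refine Finset.sum_le_sum fun σ _ => ?_
    obtain ⟨s, hs, hc⟩ := exists_lisLen σ
    calc _ ≤ ∑ i : Fin (n + 1), if i ∈ s then c else 0 := by
          refine Finset.sum_le_sum fun i _ => ?_
          have h3 := lis_del_ge i σ s hs
          split_ifs with hi
          · rw [Finset.card_erase_of_mem hi, hc] at h3
            have h4 : φ (lisLen (delP i σ)) ≤ φ (lisLen σ - 1) := hanti h3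
            have h5 : 0 < lisLen σ := by rw [← hc]; exact Finset.card_pos.2 ⟨i, hi⟩
            have h6 := h2 (lisLen σ - 1)
            rw [Nat.sub_add_cancel h5] at h6
            linarith
          · rw [Finset.erase_eq_of_notMem hi, hc] at h3
            linarith [hanti h3]
      _ = c * lisLen σ := by
          rw [Finset.sum_ite_mem, Finset.univ_inter, Finset.sum_const, hc, nsmul_eq_mul, mul_comm]
  have e3 : ∑ σ : Equiv.Perm (Fin (n + 1)), c * (lisLen σ : ℝ) = ((n + 1) * (n.factorial : ℝ)) * (c * eU (fun k => (k : ℝ)) (n + 1)) := by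
    rw [← Finset.mul_sum, eU_def, Nat.factorial_succ]; push_cast; field_simp
  rw [e3] at b2
  rw [key] at b1 b2
  constructor
  · exact nonneg_of_mul_nonneg_right b1 (by positivity)
  · rw [le_div_iff₀ (by positivity)]
    have : ((n + 1) * (n.factorial : ℝ)) * ((eU φ n - eU φ (n + 1)) * (n + 1)) ≤ ((n + 1) * (n.factorial : ℝ)) * (c * eU (fun k => (k : ℝ)) (n + 1)) := by
      linarith
    exact le_of_mul_le_mul_left this (by positivity)

lemma pP_eq_eU (n k : ℕ) : pP n k = eU (fun u => if u ≤ k then 1 else 0) n := by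
  rw [pP, eU_def, Finset.sum_boole, uu]

lemma pP_anti (k : ℕ) : Antitone (fun n => pP n k) := by
  refine antitone_nat_of_succ_le fun n => ?_
  rw [pP_eq_eU, pP_eq_eU]
  have := (eU_diff (fun u => if u ≤ k then 1 else 0) 1 ?_ ?_ n).1
  · linarith
  · intro j; split_ifs <;> first | omega | norm_num
  · intro j; split_ifs <;> norm_num

lemma eU_mono {φ ψ : ℕ → ℝ} (n : ℕ) (h : ∀ k, φ k ≤ ψ k) : eU φ n ≤ eU ψ n := by
  rw [eU_def, eU_def]
  gcongr
  exact h _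
lemma eU_add (φ ψ : ℕ → ℝ) (n : ℕ) : eU (fun k => φ k + ψ k) n = eU φ n + eU ψ n := by
  rw [eU_def, eU_def, eU_def, Finset.sum_add_distrib, add_div]
lemma eU_smul (c : ℝ) (φ : ℕ → ℝ) (n : ℕ) : eU (fun k => c * φ k) n = c * eU φ n := by
  rw [eU_def, eU_def, ← Finset.mul_sum, mul_div_assoc]
lemma eU_const (c : ℝ) (n : ℕ) : eU (fun _ => c) n = c := by
  have : (n.factorial : ℝ) ≠ 0 := by exact_mod_cast Nat.factorial_ne_zero _
  rw [eU_def, Finset.sum_const, Finset.card_univ, Fintype.card_perm, Fintype.card_fin, nsmul_eq_mul]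
  field_simp
lemma eU_sum {ι : Type*} (S : Finset ι) (φ : ι → ℕ → ℝ) (n : ℕ) : eU (fun k => ∑ i ∈ S, φ i k) n = ∑ i ∈ S, eU (φ i) n := by
  simp only [eU_def]
  rw [Finset.sum_comm, Finset.sum_div]

lemma poi_succ (t : ℝ) (n : ℕ) : poi t (n + 1) * (n + 1) = t * poi t n := by
  have : (n.factorial : ℝ) ≠ 0 := by exact_mod_cast Nat.factorial_ne_zero _
  rw [poi, poi, Nat.factorial_succ]; push_cast; field_simp; ring

lemma poi_m1 (t : ℝ) : HasSum (fun n => poi t n * (n : ℝ)) t := by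
  rw [← hasSum_nat_add_iff' 1]
  have := (poi_hasSum t).mul_left t
  simp only [Finset.sum_range_one, Nat.cast_zero, mul_zero, sub_zero]
  rw [mul_one] at this
  refine this.congr_fun fun n => ?_
  rw [← poi_succ]; push_cast; ring

lemma poi_m2 (t : ℝ) : HasSum (fun n => poi t n * ((n : ℝ) * (n - 1))) (t ^ 2) := by
  rw [← hasSum_nat_add_iff' 1]
  have := (poi_m1 t).mul_left t
  simp only [Finset.sum_range_one, Nat.cast_zero, zero_mul, mul_zero, sub_zero]
  rw [← sq] at this
  refine this.congr_fun fun n => ?_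
  rw [← mul_assoc t, ← poi_succ]; push_cast; ring

lemma poi_var (t : ℝ) : HasSum (fun n => poi t n * ((n : ℝ) - t) ^ 2) t := by
  have h := ((poi_m2 t).add ((poi_m1 t).mul_left (1 - 2 * t))).add ((poi_hasSum t).mul_left (t ^ 2))
  have e : t ^ 2 + (1 - 2 * t) * t + t ^ 2 * 1 = t := by ring
  rw [e] at h
  refine h.congr_fun fun n => ?_
  ring

lemma pois_ge (t : ℝ) (ht : 0 ≤ t) (h : ℕ → ℝ) (S A B : ℝ) (hS : HasSum (fun n => poi t n * h n) S)
    (hh : ∀ n : ℕ, A - B * ((n : ℝ) - t) ^ 2 ≤ h n) : A - B * t ≤ S := by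
  have h1 := ((poi_hasSum t).mul_left A).sub ((poi_var t).mul_left B)
  rw [mul_one] at h1
  refine hasSum_le (fun n => ?_) h1 hS
  have := mul_le_mul_of_nonneg_left (hh n) (poi_nonneg ht n)
  linarith

lemma pois_le (t : ℝ) (ht : 0 ≤ t) (h : ℕ → ℝ) (S A B : ℝ) (hS : HasSum (fun n => poi t n * h n) S)
    (hh : ∀ n : ℕ, h n ≤ A + B * ((n : ℝ) - t) ^ 2) : S ≤ A + B * t := by
  have h1 := ((poi_hasSum t).mul_left A).add ((poi_var t).mul_left B)
  rw [mul_one] at h1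
  refine hasSum_le (fun n => ?_) hS h1
  have := mul_le_mul_of_nonneg_left (hh n) (poi_nonneg ht n)
  linarith

lemma depo_upper (n k : ℕ) (s : ℝ) (hs : s = Real.sqrt n + 2) : 1 - pP n k ≤ 4 / 3 * (1 - FF s k) := by
  have hr := Real.sqrt_nonneg (n : ℝ)
  have hn := Real.sq_sqrt (Nat.cast_nonneg n : (0 : ℝ) ≤ n)
  set r := Real.sqrt n
  have hs0 : 0 < s := by rw [hs]; positivity
  have ha : (0 : ℝ) < 4 * r + 4 := by positivity
  have h1 := pois_le (s ^ 2) (by positivity) _ _ (pP n k) ((1 - pP n k) / (4 * r + 4) ^ 2) (FF_hasSum s hs0 k) fun N => ?_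
  · have hp := pP_le_one n k
    have h2 : (1 - pP n k) / (4 * r + 4) ^ 2 * s ^ 2 ≤ (1 - pP n k) * (1 / 4) := by
      rw [div_mul_eq_mul_div, mul_div_assoc]
      refine mul_le_mul_of_nonneg_left ?_ (by linarith)
      rw [div_le_div_iff₀ (by positivity) (by norm_num), hs]
      nlinarith
    linarith
  · have hp := pP_le_one n k
    rcases le_or_gt n N with h | h
    · have h3 := pP_anti k h
      have : 0 ≤ (1 - pP n k) / (4 * r + 4) ^ 2 * ((N : ℝ) - s ^ 2) ^ 2 :=
        mul_nonneg (div_nonneg (by linarith) (by positivity)) (sq_nonneg _)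
      simp only at h3
      linarith
    · have h3 : (N : ℝ) < n := by exact_mod_cast h
      have h4 : (4 * r + 4) ^ 2 ≤ ((N : ℝ) - s ^ 2) ^ 2 := by
        rw [← neg_sq ((N : ℝ) - s ^ 2)]
        have : 4 * r + 4 ≤ -((N : ℝ) - s ^ 2) := by rw [hs]; nlinarith
        gcongr
      have h5 := pP_le_one N k
      have h6 : (1 - pP n k) ≤ (1 - pP n k) / (4 * r + 4) ^ 2 * ((N : ℝ) - s ^ 2) ^ 2 := by
        rw [div_mul_eq_mul_div, le_div_iff₀ (by positivity)]
        exact mul_le_mul_of_nonneg_left h4 (by linarith)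
      linarith

lemma depo_lower (n k : ℕ) (s : ℝ) (hs : s = Real.sqrt n - 2) (hs0 : 0 < s) : pP n k ≤ 16 / 15 * FF s k := by
  have hn := Real.sq_sqrt (Nat.cast_nonneg n : (0 : ℝ) ≤ n)
  set r := Real.sqrt n
  have hr : 2 < r := by linarith
  have ha : (0 : ℝ) < 4 * r - 4 := by linarith
  have hp := pP_nonneg n k
  have h1 := pois_ge (s ^ 2) (by positivity) _ _ (pP n k) (pP n k / (4 * r - 4) ^ 2) (FF_hasSum s hs0 k) fun N => ?_
  · have h2 : pP n k / (4 * r - 4) ^ 2 * s ^ 2 ≤ pP n k * (1 / 16) := by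
      rw [div_mul_eq_mul_div, mul_div_assoc]
      refine mul_le_mul_of_nonneg_left ?_ hp
      rw [div_le_div_iff₀ (by positivity) (by norm_num), hs]
      nlinarith
    linarith
  · rcases le_or_gt N n with h | h
    · have h3 := pP_anti k h
      have : 0 ≤ pP n k / (4 * r - 4) ^ 2 * ((N : ℝ) - s ^ 2) ^ 2 := by positivity
      simp only at h3
      linarith
    · have h3 : (n : ℝ) < N := by exact_mod_cast h
      have h4 : (4 * r - 4) ^ 2 ≤ ((N : ℝ) - s ^ 2) ^ 2 := by
        have : 4 * r - 4 ≤ ((N : ℝ) - s ^ 2) := by rw [hs]; nlinarith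
        gcongr
      have h5 := pP_nonneg N k
      have h6 : pP n k ≤ pP n k / (4 * r - 4) ^ 2 * ((N : ℝ) - s ^ 2) ^ 2 := by
        rw [div_mul_eq_mul_div, le_div_iff₀ (by positivity)]
        exact mul_le_mul_of_nonneg_left h4 hp
      linarith

/-- compatible scale -/
def Good (n l : ℕ) : Prop := 9 ≤ l ∧ Real.sqrt n + 2 ≤ (l : ℝ) ^ 3 ∧ (l : ℝ) ^ 3 ≤ 8 * (Real.sqrt n - 2)

lemma good_exists (l0 : ℕ) : ∀ᶠ n : ℕ in atTop, ∃ l, l0 ≤ l ∧ Good n l := by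
  have h1 : Tendsto (fun n : ℕ => Real.sqrt n) atTop atTop := Real.tendsto_sqrt_atTop.comp tendsto_natCast_atTop_atTop
  filter_upwards [h1.eventually_ge_atTop (max 1000 ((l0 : ℝ) ^ 3))] with n hn
  have hn1 := (le_max_left _ _).trans hn
  have hn2 := (le_max_right _ _).trans hn
  set r := Real.sqrt n
  have hex : ∃ l : ℕ, r + 2 ≤ (l : ℝ) ^ 3 := by
    obtain ⟨l, hl⟩ := exists_nat_ge (r + 2)
    refine ⟨l, hl.trans ?_⟩
    have : (1 : ℝ) ≤ l := by linarith
    exact le_self_pow₀ this (by norm_num)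
  have hs := Nat.find_spec hex
  have hm := fun t => @Nat.find_min _ _ hex t
  set l := Nat.find hex
  have hlow : ∀ m : ℕ, (m : ℝ) ^ 3 < r + 2 → m ≤ l := by
    intro m h
    by_contra hc
    push Not at hc
    have : (l : ℝ) ^ 3 ≤ (m : ℝ) ^ 3 := by gcongr
    linarith
  have h9 : 9 ≤ l := hlow 9 (by push_cast; linarith)
  refine ⟨l, hlow l0 (by linarith), h9, hs, ?_⟩
  have h2 := hm (l - 1) (by omega)
  push Not at h2
  have h3 : (9 : ℝ) ≤ l := by exact_mod_cast h9
  rw [Nat.cast_sub (by omega)] at h2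
  push_cast at h2
  have h4 : (l : ℝ) ^ 3 ≤ 2 * ((l : ℝ) - 1) ^ 3 := by
    have h5 : (l : ℝ) ≤ 9 / 8 * (l - 1) := by linarith
    calc (l : ℝ) ^ 3 ≤ (9 / 8 * ((l : ℝ) - 1)) ^ 3 := by gcongr
      _ = (9 / 8) ^ 3 * ((l : ℝ) - 1) ^ 3 := by ring
      _ ≤ 2 * ((l : ℝ) - 1) ^ 3 := by
        apply mul_le_mul_of_nonneg_right (by norm_num)
        apply pow_nonneg; linarith
  linarith

lemma half_pow (l r : ℕ) (hl : 1 ≤ l) : (1 - 1 / (2 * (l : ℝ))) ^ (2 * l * r) ≤ (1 / 2) ^ r := by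
  have hl' : (1 : ℝ) ≤ l := by exact_mod_cast hl
  have hq : 1 / (2 * (l : ℝ)) ≤ 1 / 2 := by
    apply one_div_le_one_div_of_le <;> linarith
  rw [pow_mul]
  refine pow_le_pow_left₀ (pow_nonneg (by linarith) _) ?_ r
  have hb := one_add_mul_le_pow (show (-2 : ℝ) ≤ 1 / (2 * l) from le_trans (by norm_num) (by positivity : (0:ℝ) ≤ 1 / (2 * l))) (2 * l)
  have e : 1 + ((2 * l : ℕ) : ℝ) * (1 / (2 * l)) = 2 := by push_cast; field_simp; norm_num
  rw [e] at hb
  set x := 1 / (2 * (l : ℝ))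
  have hx : 0 < x := by positivity
  have h1 : (1 - x) ^ (2 * l) * (1 + x) ^ (2 * l) ≤ 1 := by
    rw [← mul_pow]
    exact pow_le_one₀ (mul_nonneg (by linarith) (by linarith)) (by nlinarith)
  have h2 : 0 ≤ (1 - x) ^ (2 * l) := pow_nonneg (by linarith) _
  nlinarith

lemma tail_upper (n l : ℕ) (hg : Good n l) (k r : ℕ) (hk : 2 * Real.sqrt n + 5 + (1 + 2 * r) * l ≤ k) :
    1 - pP n k ≤ 342 * (1 / 2) ^ r := by
  obtain ⟨h9, h1, h2⟩ := hg
  have h := depo_upper n k _ rfl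
  have hs0 : 0 < Real.sqrt n + 2 := by positivity
  have hT := T1 (Real.sqrt n + 2) hs0 l (by omega) h1 (2 * l * r)
  have hh := half_pow l r (by omega)
  have hc := Nat.ceil_lt_add_one (show 0 ≤ 2 * (Real.sqrt n + 2) by positivity)
  have hm : FF (Real.sqrt n + 2) (⌈2 * (Real.sqrt n + 2)⌉₊ + l + 2 * l * r) ≤ FF (Real.sqrt n + 2) k := by
    apply FF_mono _ hs0
    have : ((⌈2 * (Real.sqrt n + 2)⌉₊ + l + 2 * l * r : ℕ) : ℝ) ≤ k := by push_cast; linarith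
    exact_mod_cast this
  have : (0:ℝ) ≤ (1 / 2) ^ r := by positivity
  linarith

lemma tail_lower (n l : ℕ) (hg : Good n l) (k r : ℕ) (hk : (k : ℝ) + 5 + (12 + r) * l ≤ 2 * Real.sqrt n) :
    pP n k ≤ 2 * (1 / 2) ^ r := by
  obtain ⟨h9, h1, h2⟩ := hg
  have h9' : (9 : ℝ) ≤ l := by exact_mod_cast h9
  have hlp : (0 : ℝ) < l := by linarith
  have h729 : (0 : ℝ) < (l : ℝ) ^ 3 := by positivity
  have hs0 : 0 < Real.sqrt n - 2 := by linarith
  have h := depo_lower n k _ rfl hs0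
  have hT := T2 (Real.sqrt n - 2) hs0 l h9 (by linarith) h2 k (l * r) (by
    apply Nat.le_floor
    push_cast
    linarith)
  have hb : (2 : ℝ) ^ r ≤ (1 + 1 / (l : ℝ)) ^ (l * r) := by
    rw [pow_mul]
    refine pow_le_pow_left₀ (by norm_num) ?_ r
    have hb := one_add_mul_le_pow (show (-2 : ℝ) ≤ 1 / l from le_trans (by norm_num) (by positivity : (0:ℝ) ≤ 1 / l)) l
    have e : 1 + (l : ℝ) * (1 / l) = 2 := by field_simp; norm_num
    linarith
  have hF := FF_pos _ hs0 k
  have h3 : FF (Real.sqrt n - 2) k * 2 ^ r ≤ 1 := (mul_le_mul_of_nonneg_left hb hF.le).trans hT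
  have h4 : FF (Real.sqrt n - 2) k ≤ (1 / 2) ^ r := by
    rw [one_div, inv_pow, ← one_div, le_div_iff₀ (by positivity)]; exact h3
  linarith

noncomputable def XX (n l u : ℕ) : ℝ := |(u : ℝ) - 2 * Real.sqrt n| / l

lemma tail_two (n l : ℕ) (hg : Good n l) (r : ℕ) :
    eU (fun u => if 14 + 2 * (r : ℝ) ≤ XX n l u then (1 : ℝ) else 0) n ≤ 344 * (1 / 2) ^ r := by
  have hg' := hg
  obtain ⟨h9, h1, h2⟩ := hg'
  have h9' : (9 : ℝ) ≤ l := by exact_mod_cast h9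
  have hlp : (0 : ℝ) < l := by linarith
  have hr0 : (0 : ℝ) ≤ r := Nat.cast_nonneg r
  have hsq := Real.sqrt_nonneg (n : ℝ)
  set x1 := 2 * Real.sqrt n + (14 + 2 * r) * l with hx1
  have hx10 : 0 < x1 := by rw [hx1]; positivity
  set k1 := ⌈x1⌉₊ - 1
  have hk1 : k1 + 1 = ⌈x1⌉₊ := Nat.sub_add_cancel (Nat.one_le_ceil_iff.2 hx10)
  have hk1' : x1 ≤ k1 + 1 := by
    have := Nat.le_ceil x1
    rw [← hk1] at this; push_cast at this; exact this
  have t1 := tail_upper n l hg k1 r (by nlinarith)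
  set x2 := 2 * Real.sqrt n - (14 + 2 * r) * l with hx2
  have hsplit : ∀ u : ℕ, 14 + 2 * (r : ℝ) ≤ XX n l u → k1 < u ∨ (u : ℝ) ≤ x2 := by
    intro u hu
    rw [XX, le_div_iff₀ hlp, le_abs] at hu
    rcases hu with hu | hu
    · left
      have : x1 ≤ u := by rw [hx1]; linarith
      have := Nat.ceil_le.2 this
      omega
    · right; rw [hx2]; linarith
  have e1 : eU (fun u => if k1 < u then (1 : ℝ) else 0) n = 1 - pP n k1 := by
    rw [pP_eq_eU]
    have := eU_add (fun u => if k1 < u then (1 : ℝ) else 0) (fun u => if u ≤ k1 then (1 : ℝ) else 0) n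
    have h3 : (fun k => (if k1 < k then (1 : ℝ) else 0) + (if k ≤ k1 then (1 : ℝ) else 0)) = fun _ => 1 := by
      funext k
      split_ifs <;> first | omega | norm_num
    rw [h3, eU_const] at this
    linarith
  have hpos : (0:ℝ) ≤ (1 / 2) ^ r := by positivity
  rcases lt_or_ge x2 0 with hx | hx
  · have : eU (fun u => if 14 + 2 * (r : ℝ) ≤ XX n l u then (1 : ℝ) else 0) n ≤ eU (fun u => if k1 < u then (1 : ℝ) else 0) n := by
      refine eU_mono n fun u => ?_
      split_ifs with ha hb <;> try norm_num
      rcases hsplit u ha with h | h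
      · exact hb h
      · have : (0 : ℝ) ≤ u := Nat.cast_nonneg u
        linarith
    linarith
  · set k2 := ⌊x2⌋₊
    have hk2 := Nat.floor_le hx
    have t2 := tail_lower n l hg k2 r (by nlinarith)
    have : eU (fun u => if 14 + 2 * (r : ℝ) ≤ XX n l u then (1 : ℝ) else 0) n ≤
        eU (fun u => (if k1 < u then (1 : ℝ) else 0) + (if u ≤ k2 then (1 : ℝ) else 0)) n := by
      refine eU_mono n fun u => ?_
      split_ifs with ha hb hc <;> try norm_num
      rcases hsplit u ha with h | h
      · exact absurd h hb
      · rename_i hc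
        exact absurd (Nat.le_floor h) hc
    rw [eU_add, e1, ← pP_eq_eU] at this
    linarith

lemma XX_nonneg (n l u : ℕ) : 0 ≤ XX n l u := by rw [XX]; positivity

lemma eU_nonneg {φ : ℕ → ℝ} (n : ℕ) (h : ∀ k, 0 ≤ φ k) : 0 ≤ eU φ n := by
  have := eU_mono n h
  rwa [eU_const] at this

lemma eU_max_le (φ : ℕ → ℝ) (n : ℕ) : ∃ R : ℕ, ∀ σ : Equiv.Perm (Fin n), φ (lisLen σ) ≤ R := by
  obtain ⟨R, hR⟩ := exists_nat_ge (∑ k ∈ range (n + 1), |φ k|)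
  refine ⟨R, fun σ => (le_abs_self _).trans (le_trans ?_ hR)⟩
  exact Finset.single_le_sum (f := fun k => |φ k|) (fun _ _ => abs_nonneg _) (by simpa using Nat.lt_succ_of_le (lisLen_le σ))

lemma eU_mono' {φ ψ : ℕ → ℝ} (n : ℕ) (h : ∀ σ : Equiv.Perm (Fin n), φ (lisLen σ) ≤ ψ (lisLen σ)) : eU φ n ≤ eU ψ n := by
  rw [eU_def, eU_def]
  gcongr
  exact h _

lemma moments (q : ℕ) : ∃ K : ℝ, 0 < K ∧ ∀ n l, Good n l → eU (fun u => XX n l u ^ q) n ≤ K := by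
  have hsum : Summable (fun r : ℕ => (16 + 2 * (r : ℝ)) ^ q * (1 / 2) ^ r) := by
    have h1 : Summable (fun r : ℕ => (r : ℝ) ^ q * (1 / 2 : ℝ) ^ r) :=
      summable_pow_mul_geometric_of_norm_lt_one q (by norm_num)
    have h2 := ((summable_nat_add_iff 1).2 h1).mul_left (16 ^ q * 2)
    refine Summable.of_nonneg_of_le (fun r => by positivity) (fun r => ?_) h2
    have : (16 + 2 * (r : ℝ)) ^ q ≤ (16 * ((r + 1 : ℕ) : ℝ)) ^ q := by
      push_cast
      gcongr
      have : (0 : ℝ) ≤ r := Nat.cast_nonneg r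
      linarith
    rw [mul_pow] at this
    calc _ ≤ 16 ^ q * ((r + 1 : ℕ) : ℝ) ^ q * (1 / 2) ^ r := by gcongr
      _ = _ := by rw [pow_succ (1 / 2 : ℝ)]; ring
  refine ⟨14 ^ q + 344 * ∑' r : ℕ, (16 + 2 * (r : ℝ)) ^ q * (1 / 2) ^ r, ?_, fun n l hg => ?_⟩
  · have : 0 ≤ ∑' r : ℕ, (16 + 2 * (r : ℝ)) ^ q * (1 / 2) ^ r := tsum_nonneg fun r => by positivity
    positivity
  · obtain ⟨R, hR⟩ := eU_max_le (fun u => XX n l u) n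
    have h1 : eU (fun u => XX n l u ^ q) n ≤ eU (fun u => 14 ^ q + ∑ r ∈ range (R + 1), (16 + 2 * (r : ℝ)) ^ q *
        (if 14 + 2 * (r : ℝ) ≤ XX n l u then (1 : ℝ) else 0)) n := by
      refine eU_mono' n fun σ => ?_
      have hx0 := XX_nonneg n l (lisLen σ)
      have hxR := hR σ
      set x := XX n l (lisLen σ)
      have hs0 : ∀ r ∈ range (R + 1), 0 ≤ (16 + 2 * (r : ℝ)) ^ q * (if 14 + 2 * (r : ℝ) ≤ x then (1 : ℝ) else 0) := by
        intro r _; split_ifs <;> positivity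
      rcases lt_or_ge x 14 with hx | hx
      · have := Finset.sum_nonneg hs0
        have : x ^ q ≤ 14 ^ q := by gcongr
        linarith
      · set r := ⌊(x - 14) / 2⌋₊
        have hf := Nat.floor_le (show 0 ≤ (x - 14) / 2 by linarith)
        have hf2 := Nat.lt_floor_add_one ((x - 14) / 2)
        have hrR : r ∈ range (R + 1) := by
          rw [Finset.mem_range]
          have : (r : ℝ) < ((R + 1 : ℕ) : ℝ) := by push_cast; linarith
          exact_mod_cast this
        have h2 := Finset.single_le_sum hs0 hrR
        rw [if_pos (by linarith), mul_one] at h2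
        have : x ^ q ≤ (16 + 2 * (r : ℝ)) ^ q := by
          gcongr; linarith
        have : (0 : ℝ) ≤ 14 ^ q := by positivity
        linarith
    rw [eU_add, eU_const, eU_sum] at h1
    refine h1.trans ?_
    gcongr
    calc _ ≤ ∑ r ∈ range (R + 1), 344 * ((16 + 2 * (r : ℝ)) ^ q * (1 / 2) ^ r) := by
          refine Finset.sum_le_sum fun r _ => ?_
          rw [eU_smul]
          have := mul_le_mul_of_nonneg_left (tail_two n l hg r) (show 0 ≤ (16 + 2 * (r : ℝ)) ^ q by positivity)
          linarith
      _ = 344 * ∑ r ∈ range (R + 1), (16 + 2 * (r : ℝ)) ^ q * (1 / 2) ^ r := by rw [Finset.mul_sum]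
      _ ≤ _ := by
          gcongr
          exact hsum.sum_le_tsum _ fun r _ => by positivity

noncomputable def gU (n : ℕ) : ℝ := eU (fun u => (u : ℝ)) n

lemma gU_nonneg (n : ℕ) : 0 ≤ gU n := eU_nonneg n fun k => Nat.cast_nonneg k

lemma gU_le (n : ℕ) : gU n ≤ n := by
  have : gU n ≤ eU (fun _ => (n : ℝ)) n := eU_mono' n fun σ => by exact_mod_cast lisLen_le σ
  rwa [eU_const] at this

lemma gU_dev : ∃ K : ℝ, 0 < K ∧ ∀ n l, Good n l → |gU n - 2 * Real.sqrt n| ≤ K * l := by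
  obtain ⟨K, hK, h⟩ := moments 1
  refine ⟨K, hK, fun n l hg => ?_⟩
  have h1 := h n l hg
  have h9' : (9 : ℝ) ≤ l := by exact_mod_cast hg.1
  have hlp : (0 : ℝ) < l := by linarith
  have hpt : ∀ u : ℕ, |(u : ℝ) - 2 * Real.sqrt n| = l * XX n l u ^ 1 := by
    intro u; rw [XX, pow_one]; field_simp
  rw [abs_le]
  constructor
  · have : eU (fun u => 2 * Real.sqrt n) n ≤ eU (fun u => (u : ℝ) + l * XX n l u ^ 1) n := by
      refine eU_mono n fun u => ?_
      rw [← hpt]; linarith [neg_abs_le ((u : ℝ) - 2 * Real.sqrt n)]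
    rw [eU_const, eU_add, eU_smul] at this
    have : eU (fun u => (u : ℝ)) n = gU n := rfl
    nlinarith
  · have : eU (fun u => (u : ℝ)) n ≤ eU (fun u => 2 * Real.sqrt n + l * XX n l u ^ 1) n := by
      refine eU_mono n fun u => ?_
      rw [← hpt]; linarith [le_abs_self ((u : ℝ) - 2 * Real.sqrt n)]
    rw [eU_add (fun _ => 2 * Real.sqrt n), eU_const, eU_smul] at this
    have : eU (fun u => (u : ℝ)) n = gU n := rfl
    nlinarith

lemma gU_sqrt : ∃ C : ℝ, 0 < C ∧ ∀ n, gU n ≤ C * Real.sqrt n := by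
  obtain ⟨K, hK, h⟩ := gU_dev
  obtain ⟨n0, hn0⟩ := eventually_atTop.1 (good_exists 1)
  refine ⟨2 + 8 * K + Real.sqrt n0, by positivity, fun n => ?_⟩
  have hsq := Real.sqrt_nonneg (n : ℝ)
  rcases le_or_gt n0 n with hn | hn
  · obtain ⟨l, -, hg⟩ := hn0 n hn
    have h1 := (abs_le.1 (h n l hg)).2
    have h9' : (9 : ℝ) ≤ l := by exact_mod_cast hg.1
    have h3 : (l : ℝ) ≤ (l : ℝ) ^ 3 := le_self_pow₀ (by linarith) (by norm_num)
    have h4 : (l : ℝ) ≤ 8 * Real.sqrt n := by linarith [hg.2.2]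
    have h5 : K * l ≤ K * (8 * Real.sqrt n) := mul_le_mul_of_nonneg_left h4 hK.le
    have h6 := mul_nonneg (Real.sqrt_nonneg (n0 : ℝ)) hsq
    nlinarith
  · have h1 := gU_le n
    have h2 : Real.sqrt n ≤ Real.sqrt n0 := Real.sqrt_le_sqrt (by exact_mod_cast hn.le)
    have h3 := Real.mul_self_sqrt (Nat.cast_nonneg n : (0 : ℝ) ≤ n)
    have h4 := mul_nonneg hK.le hsq
    have h5 := mul_le_mul_of_nonneg_right h2 hsq
    nlinarith

lemma eU_transfer (C : ℝ) (hC : ∀ n, gU n ≤ C * Real.sqrt n) (φ : ℕ → ℝ) (c : ℝ) (hc : 0 ≤ c)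
    (h1 : ∀ k, φ (k + 1) ≤ φ k) (h2 : ∀ k, φ k ≤ φ (k + 1) + c) (n m : ℕ) :
    0 ≤ eU φ n - eU φ (n + m) ∧ eU φ n - eU φ (n + m) ≤ 2 * C * c * (Real.sqrt ((n + m : ℕ) : ℝ) - Real.sqrt n) := by
  induction m with
  | zero => simp
  | succ m ih =>
    obtain ⟨a, b⟩ := eU_diff φ c h1 h2 (n + m)
    rw [← add_assoc]
    refine ⟨by linarith [ih.1], ?_⟩
    have hg := hC (n + m + 1)
    have h0 := gU_nonneg (n + m + 1)
    have e : eU (fun k => (k : ℝ)) (n + m + 1) = gU (n + m + 1) := rfl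
    rw [e] at b
    have hx : (((n + m + 1 : ℕ) : ℕ) : ℝ) = ((n + m : ℕ) : ℝ) + 1 := by push_cast; ring
    have s1 := Real.sq_sqrt (Nat.cast_nonneg (n + m + 1) : (0 : ℝ) ≤ ((n + m + 1 : ℕ) : ℝ))
    have s2 := Real.sq_sqrt (Nat.cast_nonneg (n + m) : (0 : ℝ) ≤ ((n + m : ℕ) : ℝ))
    have s3 : Real.sqrt ((n + m : ℕ) : ℝ) ≤ Real.sqrt ((n + m + 1 : ℕ) : ℝ) := Real.sqrt_le_sqrt (by rw [hx]; linarith)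
    have s4 : 0 < Real.sqrt ((n + m + 1 : ℕ) : ℝ) := Real.sqrt_pos.2 (by positivity)
    have s5 := Real.sqrt_nonneg ((n + m : ℕ) : ℝ)
    rw [← hx] at b
    set A := Real.sqrt ((n + m + 1 : ℕ) : ℝ)
    set B := Real.sqrt ((n + m : ℕ) : ℝ)
    have hC0 : 0 ≤ C := by
      by_contra hneg
      push Not at hneg
      have := mul_neg_of_neg_of_pos hneg s4
      linarith
    have key : c * gU (n + m + 1) / ((n + m + 1 : ℕ) : ℝ) ≤ 2 * C * c * (A - B) := by
      rw [div_le_iff₀ (by positivity), ← s1]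
      have h5 : 1 ≤ 2 * A * (A - B) := by nlinarith
      have h6 : c * gU (n + m + 1) ≤ c * (C * A) := mul_le_mul_of_nonneg_left hg hc
      have h7 : (c * (C * A)) * 1 ≤ (c * (C * A)) * (2 * A * (A - B)) := mul_le_mul_of_nonneg_left h5 (by positivity)
      nlinarith
    linarith [ih.2]

lemma sqrt_diff (a b : ℝ) (ha : 0 ≤ a) (hb : 0 < b) : |Real.sqrt a - Real.sqrt b| ≤ (1 + (a - b) ^ 2 / b) / 2 := by
  have s1 := Real.sq_sqrt ha
  have s2 := Real.sq_sqrt hb.le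
  have s3 := Real.sqrt_nonneg a
  have s4 := Real.sqrt_pos.2 hb
  set A := Real.sqrt a
  set B := Real.sqrt b
  have h1 : |A - B| * B ≤ |a - b| := by
    have e : a - b = (A - B) * (A + B) := by rw [← s1, ← s2]; ring
    rw [e, abs_mul, abs_of_nonneg (show 0 ≤ A + B by positivity)]
    exact mul_le_mul_of_nonneg_left (by linarith) (abs_nonneg _)
  have h2 : |A - B| ≤ |a - b| / B := by rw [le_div_iff₀ s4]; exact h1
  have h3 : (|a - b| / B) ^ 2 = (a - b) ^ 2 / b := by rw [div_pow, sq_abs, s2]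
  nlinarith [sq_nonneg (|a - b| / B - 1)]

noncomputable def clampF (k d u : ℕ) : ℝ := max 0 (min 1 (((k : ℝ) + d - u) / d))

lemma clampF_props (k d : ℕ) (hd : 0 < d) :
    (∀ u, clampF k d (u + 1) ≤ clampF k d u) ∧ (∀ u, clampF k d u ≤ clampF k d (u + 1) + 1 / d) ∧
    (∀ u, (if u ≤ k then (1 : ℝ) else 0) ≤ clampF k d u) ∧ (∀ u, clampF k d u ≤ if u ≤ k + d then (1 : ℝ) else 0) := by
  have hd' : (0 : ℝ) < d := by exact_mod_cast hd
  refine ⟨fun u => ?_, fun u => ?_, fun u => ?_, fun u => ?_⟩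
  · rw [clampF, clampF]
    gcongr
    push_cast; linarith
  · rw [clampF, clampF]
    have e : ((k : ℝ) + d - ((u + 1 : ℕ) : ℝ)) / d = ((k : ℝ) + d - u) / d - 1 / d := by push_cast; ring
    rw [e]
    have : 0 < 1 / (d : ℝ) := by positivity
    set x := ((k : ℝ) + d - u) / d
    set y := 1 / (d : ℝ)
    refine max_le (by positivity) ?_
    rcases le_total 1 (x - y) with h | h
    · rw [min_eq_left h]; refine (min_le_left _ _).trans ?_
      linarith [le_max_right 0 (1 : ℝ)]
    · rw [min_eq_right h]; refine (min_le_right _ _).trans ?_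
      linarith [le_max_right 0 (x - y)]
  · rw [clampF]
    split_ifs with h
    · refine le_max_of_le_right (le_min le_rfl ?_)
      rw [le_div_iff₀ hd']
      have : (u : ℝ) ≤ k := by exact_mod_cast h
      linarith
    · exact le_max_left _ _
  · rw [clampF]
    split_ifs with h
    · exact max_le (by norm_num) (min_le_left _ _)
    · refine max_le le_rfl ((min_le_right _ _).trans ?_)
      apply div_nonpos_of_nonpos_of_nonneg _ hd'.le
      push Not at h
      have : (k : ℝ) + d < u := by exact_mod_cast h
      linarith

lemma transfer : ∃ d : ℕ, 0 < d ∧ ∀ n k : ℕ, 0 < n → pP n k - 1 / 8 ≤ FF (Real.sqrt n) (k + d) ∧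
    FF (Real.sqrt n) k ≤ pP n (k + d) + 1 / 8 := by
  obtain ⟨C, hC0, hC⟩ := gU_sqrt
  obtain ⟨d, hd⟩ := exists_nat_gt (16 * C)
  have hd' : (0 : ℝ) < d := by linarith
  have hd0 : 0 < d := by exact_mod_cast hd'
  refine ⟨d, hd0, fun n k hn => ?_⟩
  have hn' : (0 : ℝ) < n := by exact_mod_cast hn
  have hs := Real.sqrt_pos.2 hn'
  have hsq := Real.sq_sqrt hn'.le
  obtain ⟨p1, p2, p3, p4⟩ := clampF_props k d hd0
  have hCd : 2 * C * (1 / d) ≤ 1 / 8 := by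
    rw [mul_one_div, div_le_div_iff₀ hd' (by norm_num)]; linarith
  have hdiff : ∀ N : ℕ, |eU (clampF k d) N - eU (clampF k d) n| ≤ 1 / 16 + (1 / (16 * n)) * ((N : ℝ) - n) ^ 2 := by
    intro N
    have h1 : |eU (clampF k d) N - eU (clampF k d) n| ≤ 2 * C * (1 / d) * |Real.sqrt N - Real.sqrt n| := by
      rcases le_total n N with h | h
      · obtain ⟨m, rfl⟩ := Nat.exists_eq_add_of_le h
        obtain ⟨a, b⟩ := eU_transfer C hC (clampF k d) (1 / d) (by positivity) p1 p2 n m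
        rw [abs_sub_comm, abs_of_nonneg a]
        exact b.trans (mul_le_mul_of_nonneg_left (le_abs_self _) (by positivity))
      · obtain ⟨m, rfl⟩ := Nat.exists_eq_add_of_le h
        obtain ⟨a, b⟩ := eU_transfer C hC (clampF k d) (1 / d) (by positivity) p1 p2 N m
        rw [abs_of_nonneg a, abs_sub_comm (Real.sqrt _)]
        exact b.trans (mul_le_mul_of_nonneg_left (le_abs_self _) (by positivity))
    have h2 := sqrt_diff N n (Nat.cast_nonneg N) hn'
    have h3 : 2 * C * (1 / d) * |Real.sqrt N - Real.sqrt n| ≤ 1 / 8 * ((1 + ((N : ℝ) - n) ^ 2 / n) / 2) :=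
      mul_le_mul hCd h2 (abs_nonneg _) (by norm_num)
    refine h1.trans (h3.trans (le_of_eq ?_))
    field_simp; norm_num
  have e8 : 1 / (16 * (n : ℝ)) * n = 1 / 16 := by field_simp
  have q1 : pP n k ≤ eU (clampF k d) n := by rw [pP_eq_eU]; exact eU_mono n p3
  have q2 : eU (clampF k d) n ≤ pP n (k + d) := by rw [pP_eq_eU]; exact eU_mono n p4
  constructor
  · have := pois_ge (Real.sqrt n ^ 2) (by positivity) _ _ (pP n k - 1 / 16) (1 / (16 * n)) (FF_hasSum _ hs (k + d)) fun N => ?_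
    · rw [hsq, e8] at this; linarith
    · rw [hsq]
      have h1 := (abs_le.1 (hdiff N)).1
      have h2 : eU (clampF k d) N ≤ pP N (k + d) := by rw [pP_eq_eU]; exact eU_mono N p4
      linarith
  · have := pois_le (Real.sqrt n ^ 2) (by positivity) _ _ (pP n (k + d) + 1 / 16) (1 / (16 * n)) (FF_hasSum _ hs k) fun N => ?_
    · rw [hsq, e8] at this; linarith
    · rw [hsq]
      have h1 := (abs_le.1 (hdiff N)).2
      have h2 : pP N k ≤ eU (clampF k d) N := by rw [pP_eq_eU]; exact eU_mono N p3
      linarith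

lemma FF_tele (s S : ℝ) (k : ℕ) (h : ∀ j, k ≤ j → FF s (j + 1) - FF s j ≤ S) (m : ℕ) : FF s (k + m) - FF s k ≤ m * S := by
  induction m with
  | zero => simp
  | succ m ih =>
    have := h (k + m) (by omega)
    rw [← add_assoc]; push_cast; linarith

noncomputable def vU (n : ℕ) : ℝ := eU (fun u => ((u : ℝ) - gU n) ^ 2) n

set_option maxHeartbeats 1000000 in
lemma var_lower : ∃ c : ℝ, 0 < c ∧ ∃ l0 : ℕ, ∀ n l, Good n l → l0 ≤ l → (c * l) ^ 2 ≤ vU n := by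
  obtain ⟨K, hK, hdev⟩ := gU_dev
  obtain ⟨d, hd0, htr⟩ := transfer
  obtain ⟨B, hBK⟩ := exists_nat_ge (K + 3)
  have hB1 : (1 : ℝ) ≤ B := by linarith
  have hB1' : 1 ≤ B := by exact_mod_cast hB1
  have hBp : (1 : ℝ) ≤ (B : ℝ) ^ 3 := one_le_pow₀ hB1
  refine ⟨1 / (10240 * B ^ 3), by positivity, 2560 * B ^ 3 * (2 * d + 3), fun n l hg hl => ?_⟩
  set c0 : ℝ := 1 / (10240 * B ^ 3) with hc0
  have hg' := hg
  obtain ⟨h9, h1, h2⟩ := hg'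
  have h9' : (9 : ℝ) ≤ l := by exact_mod_cast h9
  have hlp : (0 : ℝ) < l := by linarith
  have hl3 : (0 : ℝ) < (l : ℝ) ^ 3 := by positivity
  have hs0 : 0 < Real.sqrt n := by linarith
  have hn : 0 < n := by
    rcases Nat.eq_zero_or_pos n with h | h
    · rw [h] at hs0; simp at hs0
    · exact h
  have hl' : 2560 * (B : ℝ) ^ 3 * (2 * d + 3) ≤ l := by exact_mod_cast hl
  have hc0p : 0 < c0 := by positivity
  have hc01 : c0 ≤ 1 := by rw [hc0, div_le_one (by positivity)]; linarith
  have hcB : c0 * (10240 * (B : ℝ) ^ 3) = 1 := by rw [hc0]; field_simp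
  have hd1 : (1 : ℝ) ≤ d := by exact_mod_cast hd0
  have hdl : (d : ℝ) + 1 ≤ l := by nlinarith
  have hlB : 8 * (B : ℝ) ≤ l := by
    have : (B : ℝ) ≤ (B : ℝ) ^ 3 := le_self_pow₀ hB1 (by norm_num)
    nlinarith
  have hlB2 : 8 * (B : ℝ) ≤ (l : ℝ) ^ 2 := by nlinarith
  have hlB2' : 8 * B ≤ l ^ 2 := by exact_mod_cast hlB2
  by_contra hcon
  push Not at hcon
  set w := c0 * l with hw
  have hwp : 0 < w := by positivity
  have hwl : w ≤ l := by rw [hw]; nlinarith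
  obtain ⟨hd1', hd2'⟩ := abs_le.1 (hdev n l hg)
  set g := gU n with hgdef
  have hbig : 2 * B * l ≤ 2 * Real.sqrt n := by
    have := mul_le_mul_of_nonneg_right hlB2 hlp.le
    have e : (l : ℝ) ^ 2 * l = (l : ℝ) ^ 3 := by ring
    linarith
  have hKB : K * l + 3 * l ≤ B * l := by nlinarith
  have hg0 : 0 ≤ g - 2 * w := by nlinarith
  set a := ⌊g - 2 * w⌋₊ with ha
  set b := ⌈g + 2 * w⌉₊ with hb
  have ha1 := Nat.floor_le hg0
  have ha2 := Nat.lt_floor_add_one (g - 2 * w)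
  have hb1 := Nat.le_ceil (g + 2 * w)
  have hb2 := Nat.ceil_lt_add_one (show 0 ≤ g + 2 * w by linarith)
  rw [← ha] at ha1 ha2
  rw [← hb] at hb1 hb2
  have hprob : pP n a + (1 - pP n b) ≤ 1 / 4 := by
    have : eU (fun u => (if u ≤ a then (1 : ℝ) else 0)) n + 1 ≤
        eU (fun u => 1 / (4 * w ^ 2) * ((u : ℝ) - g) ^ 2) n + eU (fun u => (if u ≤ b then (1 : ℝ) else 0)) n := by
      have hc1 := eU_const 1 n
      suffices h : eU (fun u => (if u ≤ a then (1 : ℝ) else 0)) n + eU (fun _ => (1 : ℝ)) n ≤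
          eU (fun u => 1 / (4 * w ^ 2) * ((u : ℝ) - g) ^ 2) n + eU (fun u => (if u ≤ b then (1 : ℝ) else 0)) n by
        rwa [hc1] at h
      rw [← eU_add, ← eU_add]
      refine eU_mono n fun u => ?_
      have h0 : 0 ≤ 1 / (4 * w ^ 2) * ((u : ℝ) - g) ^ 2 := by positivity
      have hab : a ≤ b := by
        have : (a : ℝ) ≤ b := by linarith
        exact_mod_cast this
      have key : 2 * w ≤ |(u : ℝ) - g| → 1 ≤ 1 / (4 * w ^ 2) * ((u : ℝ) - g) ^ 2 := by
        intro h
        rw [div_mul_eq_mul_div, one_mul, le_div_iff₀ (by positivity), one_mul, ← sq_abs ((u : ℝ) - g)]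
        calc 4 * w ^ 2 = (2 * w) ^ 2 := by ring
          _ ≤ _ := pow_le_pow_left₀ (by positivity) h 2
      split_ifs with h3 h4 h4
      · have : (u : ℝ) ≤ a := by exact_mod_cast h3
        have := key (by rw [le_abs]; right; linarith)
        linarith
      · omega
      · linarith
      · push Not at h4
        have : (b : ℝ) < u := by exact_mod_cast h4
        have := key (by rw [le_abs]; left; linarith)
        linarith
    rw [eU_smul, ← pP_eq_eU, ← pP_eq_eU] at this
    have hv : eU (fun u => ((u : ℝ) - g) ^ 2) n = vU n := rfl
    rw [hv] at this
    have h3 : 1 / (4 * w ^ 2) * vU n ≤ 1 / (4 * w ^ 2) * w ^ 2 := mul_le_mul_of_nonneg_left hcon.le (by positivity)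
    have h4 : 1 / (4 * w ^ 2) * w ^ 2 = 1 / 4 := by field_simp
    linarith
  have had : d ≤ a := by
    have : (d : ℝ) ≤ a := by nlinarith
    exact_mod_cast this
  obtain ⟨a', ha'⟩ := Nat.exists_eq_add_of_le' had
  have ha'r : (a : ℝ) = a' + d := by rw [ha']; push_cast; ring
  have t1 := (htr n b hn).1
  have t2 := (htr n a' hn).2
  rw [← ha'] at t2
  have hab : a' ≤ b + d := by
    have : (a' : ℝ) ≤ b + d := by linarith
    exact_mod_cast this
  obtain ⟨m, hm⟩ := Nat.exists_eq_add_of_le hab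
  have hmr : (b : ℝ) + d = a' + m := by exact_mod_cast hm
  have t3 := FF_tele (Real.sqrt n) (320 * B ^ 3 / l) a' (fun j hj => by
    refine T3 _ hs0 l B (by omega) hB1' (by linarith) (by linarith) hlB2' j ?_
    have : (a' : ℝ) ≤ j := by exact_mod_cast hj
    linarith) m
  rw [← hm] at t3
  have hm2 : (m : ℝ) ≤ 4 * w + (2 * d + 3) := by linarith
  have t4 : (m : ℝ) * (320 * B ^ 3 / l) ≤ 1 / 4 := by
    rw [mul_div_assoc', div_le_iff₀ hlp]
    have : (m : ℝ) * (320 * B ^ 3) ≤ (4 * w + (2 * d + 3)) * (320 * B ^ 3) := mul_le_mul_of_nonneg_right hm2 (by positivity)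
    have e : 4 * w * (320 * B ^ 3) = (c0 * (10240 * B ^ 3)) * l / 8 := by rw [hw]; ring
    rw [hcB] at e
    nlinarith
  linarith

lemma central (q : ℕ) : ∃ K : ℝ, 0 < K ∧ ∀ n l, Good n l → eU (fun u => (|(u : ℝ) - gU n| / l) ^ q) n ≤ K := by
  obtain ⟨K1, hK1, hdev⟩ := gU_dev
  obtain ⟨K, hK, hm⟩ := moments q
  refine ⟨2 ^ (q - 1) * (K + K1 ^ q), by positivity, fun n l hg => ?_⟩
  have h9' : (9 : ℝ) ≤ l := by exact_mod_cast hg.1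
  have hlp : (0 : ℝ) < l := by linarith
  have : eU (fun u => (|(u : ℝ) - gU n| / l) ^ q) n ≤ eU (fun u => 2 ^ (q - 1) * (XX n l u ^ q + K1 ^ q)) n := by
    refine eU_mono n fun u => ?_
    refine le_trans ?_ (add_pow_le (XX_nonneg n l u) hK1.le q)
    refine pow_le_pow_left₀ (by positivity) ?_ q
    rw [XX, div_le_iff₀ hlp, add_mul, div_mul_cancel₀ _ hlp.ne']
    have := hdev n l hg
    have h3 := abs_sub_le (u : ℝ) (2 * Real.sqrt n) (gU n)
    rw [abs_sub_comm (2 * Real.sqrt n)] at h3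
    linarith
  rw [eU_smul, eU_add, eU_const] at this
  refine this.trans ?_
  gcongr
  exact hm n l hg

noncomputable def sdU (n : ℕ) : ℝ := Real.sqrt (vU n)

lemma bar_eq {n : ℕ} (σ : Equiv.Perm (Fin n)) : lisLenBar σ = ((lisLen σ : ℝ) - gU n) / sdU n := rfl

lemma sd_lower : ∃ c : ℝ, 0 < c ∧ ∃ l0 : ℕ, ∀ n l, Good n l → l0 ≤ l → c * l ≤ sdU n := by
  obtain ⟨c, hc, l0, h⟩ := var_lower
  exact ⟨c, hc, l0, fun n l hg hl => Real.le_sqrt_of_sq_le (h n l hg hl)⟩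

lemma sd_growth : ∃ c : ℝ, 0 < c ∧ ∀ᶠ n : ℕ in atTop, c * (n : ℝ) ^ (1 / 6 : ℝ) ≤ sdU n := by
  obtain ⟨c, hc, l0, h⟩ := sd_lower
  refine ⟨c, hc, ?_⟩
  filter_upwards [good_exists l0] with n hn
  obtain ⟨l, hl, hg⟩ := hn
  refine le_trans ?_ (h n l hg hl)
  gcongr
  have h1 : Real.sqrt n ≤ (l : ℝ) ^ 3 := by linarith [hg.2.1]
  have h2 : (n : ℝ) ≤ (l : ℝ) ^ 6 := by
    rw [← Real.sq_sqrt (Nat.cast_nonneg n : (0 : ℝ) ≤ n), show (l : ℝ) ^ 6 = ((l : ℝ) ^ 3) ^ 2 by ring]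
    gcongr
  calc (n : ℝ) ^ (1 / 6 : ℝ) ≤ ((l : ℝ) ^ 6) ^ (1 / 6 : ℝ) := by gcongr
    _ = l := by
      rw [← Real.rpow_natCast, ← Real.rpow_mul (by positivity)]; norm_num

lemma bar_moments (q : ℕ) : ∃ K : ℝ, 0 < K ∧ ∀ᶠ n : ℕ in atTop, En (fun σ : Equiv.Perm (Fin n) => |lisLenBar σ| ^ q) ≤ K := by
  obtain ⟨c, hc, l0, h⟩ := sd_lower
  obtain ⟨K, hK, hm⟩ := central q
  refine ⟨(1 / c) ^ q * K, by positivity, ?_⟩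
  filter_upwards [good_exists l0] with n hn
  obtain ⟨l, hl, hg⟩ := hn
  have h9' : (9 : ℝ) ≤ l := by exact_mod_cast hg.1
  have hlp : (0 : ℝ) < l := by linarith
  have hsd := h n l hg hl
  have hcl : 0 < c * l := by positivity
  have h1 : En (fun σ : Equiv.Perm (Fin n) => |lisLenBar σ| ^ q) = eU (fun u => |((u : ℝ) - gU n) / sdU n| ^ q) n := rfl
  rw [h1]
  have h2 : eU (fun u => |((u : ℝ) - gU n) / sdU n| ^ q) n ≤ eU (fun u => (1 / c) ^ q * (|(u : ℝ) - gU n| / l) ^ q) n := by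
    refine eU_mono n fun u => ?_
    rw [← mul_pow, abs_div, abs_of_pos (lt_of_lt_of_le hcl hsd)]
    refine pow_le_pow_left₀ (div_nonneg (abs_nonneg _) (hcl.le.trans hsd)) ?_ q
    calc |(u : ℝ) - gU n| / sdU n ≤ |(u : ℝ) - gU n| / (c * l) := by gcongr
      _ = _ := by field_simp
  rw [eU_smul] at h2
  refine h2.trans ?_
  gcongr
  exact hm n l hg

/-- number of differing positions -/
noncomputable def dP {n : ℕ} (σ ρ : Equiv.Perm (Fin n)) : ℕ := (univ.filter fun i => σ i ≠ ρ i).card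

lemma dP_comm {n : ℕ} (σ ρ : Equiv.Perm (Fin n)) : dP σ ρ = dP ρ σ := by
  simp only [dP, ne_comm]

lemma dP_tri {n : ℕ} (σ ρ τ : Equiv.Perm (Fin n)) : dP σ τ ≤ dP σ ρ + dP ρ τ := by
  refine le_trans (Finset.card_le_card ?_) (Finset.card_union_le _ _)
  intro i hi
  simp only [mem_filter, mem_univ, true_and, mem_union] at hi ⊢
  by_contra h
  push Not at h
  exact hi (h.1.trans h.2)

lemma dP_conj {n : ℕ} (κ σ ρ : Equiv.Perm (Fin n)) : dP (κ * σ * κ⁻¹) (κ * ρ * κ⁻¹) = dP σ ρ := by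
  unfold dP
  refine Finset.card_bij (fun i _ => κ⁻¹ i) ?_ ?_ ?_
  · intro i hi
    simpa using hi
  · intro i _ j _ h
    exact κ⁻¹.injective h
  · intro i hi
    exact ⟨κ i, by simpa using hi, by simp⟩

lemma lis_lip {n : ℕ} (σ ρ : Equiv.Perm (Fin n)) : lisLen σ ≤ lisLen ρ + dP σ ρ := by
  obtain ⟨s, hs, hc⟩ := exists_lisLen σ
  have h1 : (s.filter fun i => σ i = ρ i).card ≤ lisLen ρ := by
    refine le_lisLen ρ _ ?_
    intro i hi j hj hij
    simp only [coe_filter, Set.mem_ofPred_eq] at hi hj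
    have := hs (by simpa using hi.1) (by simpa using hj.1) hij
    simpa [hi.2, hj.2] using this
  have h2 := Finset.card_filter_add_card_filter_not (s := s) (fun i => σ i = ρ i)
  have h3 : (s.filter fun i => ¬ σ i = ρ i).card ≤ dP σ ρ :=
    Finset.card_le_card (Finset.filter_subset_filter _ (subset_univ s))
  omega

lemma merge_xy {n : ℕ} (σ : Equiv.Perm (Fin n)) (x y : Fin n) (h : ¬ σ.SameCycle x y) :
    (Equiv.swap x y * σ).SameCycle x y := by
  set ρ := Equiv.swap x y * σ with hρ
  have hex : ∃ p, 0 < p ∧ (σ ^ p) x = x := ⟨orderOf σ, orderOf_pos σ, by simp [pow_orderOf_eq_one]⟩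
  have hp := Nat.find_spec hex
  have hmin : ∀ i, 0 < i → i < Nat.find hex → (σ ^ i) x ≠ x := fun i hi0 hi h' => Nat.find_min hex hi ⟨hi0, h'⟩
  generalize Nat.find hex = p at hp hmin
  have hy : ∀ i : ℕ, (σ ^ i) x ≠ y := fun i hi => h ⟨i, by simpa using hi⟩
  have key : ∀ i, i < p → ρ.SameCycle x ((σ ^ i) x) := by
    intro i
    induction i with
    | zero => intro _; exact Equiv.Perm.SameCycle.refl _ _
    | succ i ih =>
      intro hi
      have h1 := ih (by omega)
      have h2 : ρ ((σ ^ i) x) = (σ ^ (i + 1)) x := by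
        rw [hρ, Equiv.Perm.mul_apply, ← Equiv.Perm.mul_apply σ, ← pow_succ']
        exact Equiv.swap_apply_of_ne_of_ne (hmin _ (by omega) hi) (hy _)
      rw [← h2]
      exact Equiv.Perm.sameCycle_apply_right.2 h1
  obtain ⟨q, rfl⟩ : ∃ q, p = q + 1 := ⟨p - 1, by omega⟩
  have h1 := key q (by omega)
  have h2 : ρ ((σ ^ q) x) = y := by
    rw [hρ, Equiv.Perm.mul_apply, ← Equiv.Perm.mul_apply σ, ← pow_succ', hp.2, Equiv.swap_apply_left]
  rw [← h2]
  exact Equiv.Perm.sameCycle_apply_right.2 h1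

lemma merge_ext {n : ℕ} (σ : Equiv.Perm (Fin n)) (x y : Fin n) (h : ¬ σ.SameCycle x y) (a b : Fin n)
    (hab : σ.SameCycle a b) : (Equiv.swap x y * σ).SameCycle a b := by
  have hxy := merge_xy σ x y h
  set ρ := Equiv.swap x y * σ with hρ
  have step : ∀ a, ρ.SameCycle a (σ a) := by
    intro a
    have h0 : ρ.SameCycle a (ρ a) := Equiv.Perm.sameCycle_apply_right.2 (Equiv.Perm.SameCycle.refl _ _)
    have h1 : ρ a = Equiv.swap x y (σ a) := rfl
    by_cases hx : σ a = x
    · rw [h1, hx, Equiv.swap_apply_left] at h0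
      rw [hx]
      exact h0.trans hxy.symm
    by_cases hy : σ a = y
    · rw [h1, hy, Equiv.swap_apply_right] at h0
      rw [hy]
      exact h0.trans hxy
    rwa [h1, Equiv.swap_apply_of_ne_of_ne hx hy] at h0
  obtain ⟨k, rfl⟩ := hab.exists_nat_pow_eq
  induction k with
  | zero => exact Equiv.Perm.SameCycle.refl _ _
  | succ k ih =>
    have := ih ⟨k, by simp⟩
    rw [pow_succ', Equiv.Perm.mul_apply]
    exact this.trans (step _)

/-- `R` meets every cycle -/
def Hits {n : ℕ} (σ : Equiv.Perm (Fin n)) (R : Finset (Fin n)) : Prop := ∀ z, ∃ r ∈ R, σ.SameCycle z r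

lemma dP_swap {n : ℕ} (σ : Equiv.Perm (Fin n)) (x y : Fin n) : dP σ (Equiv.swap x y * σ) ≤ 2 := by
  have : (univ.filter fun i => σ i ≠ (Equiv.swap x y * σ) i) ⊆ {σ⁻¹ x, σ⁻¹ y} := by
    intro i hi
    replace hi := (mem_filter.1 hi).2
    simp only [mem_insert, mem_singleton]
    by_contra hh
    push Not at hh
    refine hi (Equiv.swap_apply_of_ne_of_ne ?_ ?_).symm
    · intro e; exact hh.1 (by rw [← e]; simp)
    · intro e; exact hh.2 (by rw [← e]; simp)
  exact (Finset.card_le_card this).trans Finset.card_le_two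

lemma near_cycle {n : ℕ} (k : ℕ) : ∀ (σ : Equiv.Perm (Fin n)) (R : Finset (Fin n)), Hits σ R → R.card ≤ k →
    ∃ ρ : Equiv.Perm (Fin n), (∀ a b, ρ.SameCycle a b) ∧ dP σ ρ ≤ 2 * k := by
  induction k with
  | zero =>
    intro σ R hR hk
    refine ⟨σ, fun a b => ?_, by simp [dP]⟩
    obtain ⟨r, hr, _⟩ := hR a
    have : R = ∅ := by simpa using hk
    simp [this] at hr
  | succ k ih =>
    intro σ R hR hk
    by_cases h1 : R.card ≤ 1
    · refine ⟨σ, fun a b => ?_, by simp [dP]⟩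
      obtain ⟨r, hr, hra⟩ := hR a
      obtain ⟨s, hs, hsb⟩ := hR b
      have : r = s := Finset.card_le_one.1 h1 _ hr _ hs
      subst this
      exact hra.trans hsb.symm
    · obtain ⟨x, hx, y, hy, hxy⟩ := Finset.one_lt_card.1 (not_le.1 h1)
      have hcard : (R.erase y).card ≤ k := by rw [Finset.card_erase_of_mem hy]; omega
      by_cases hs : σ.SameCycle x y
      · obtain ⟨ρ, h2, h3⟩ := ih σ (R.erase y) (by
          intro z
          obtain ⟨r, hr, hz⟩ := hR z
          by_cases e : r = y
          · subst e
            exact ⟨x, by simp [hx, hxy], hz.trans hs.symm⟩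
          · exact ⟨r, by simp [hr, e], hz⟩) hcard
        exact ⟨ρ, h2, by omega⟩
      · obtain ⟨ρ, h2, h3⟩ := ih (Equiv.swap x y * σ) (R.erase y) (by
          intro z
          obtain ⟨r, hr, hz⟩ := hR z
          have hz := merge_ext σ x y hs _ _ hz
          by_cases e : r = y
          · subst e
            exact ⟨x, by simp [hx, hxy], hz.trans (merge_xy σ x r hs).symm⟩
          · exact ⟨r, by simp [hr, e], hz⟩) hcard
        refine ⟨ρ, h2, ?_⟩
        have h4 := dP_tri σ (Equiv.swap x y * σ) ρ
        have h5 := dP_swap σ x y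
        omega

lemma full_conj {n : ℕ} (hn : 2 ≤ n) (ρ γ : Equiv.Perm (Fin n)) (h : ∀ a b, ρ.SameCycle a b) (h' : ∀ a b, γ.SameCycle a b) :
    IsConj ρ γ := by
  have aux : ∀ ρ : Equiv.Perm (Fin n), (∀ a b, ρ.SameCycle a b) → ρ.IsCycle ∧ ρ.support = univ := by
    intro ρ h
    have hne : ∀ z, ρ z ≠ z := by
      intro z hz
      have hz' : ∀ w, w = z := fun w => ((h z w).eq_of_left hz).symm
      have := (hz' ⟨0, by omega⟩).trans (hz' ⟨1, by omega⟩).symm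
      simp at this
    exact ⟨⟨⟨0, by omega⟩, hne _, fun y _ => h _ _⟩, by ext z; simp [hne z]⟩
  obtain ⟨a1, a2⟩ := aux ρ h
  obtain ⟨b1, b2⟩ := aux γ h'
  exact a1.isConj b1 (by rw [a2, b2])

lemma hits_partition {n : ℕ} (σ : Equiv.Perm (Fin n)) : ∃ R, Hits σ R ∧ R.card ≤ σ.partition.parts.card := by
  have hc : ∀ c : Equiv.Perm (Fin n), c ∈ σ.cycleFactorsFinset → ∃ z, z ∈ c.support := by
    intro c hc
    have := (Equiv.Perm.mem_cycleFactorsFinset_iff.1 hc).1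
    exact this.nonempty_support
  rcases isEmpty_or_nonempty (Fin n) with he | he
  · exact ⟨∅, fun z => he.elim z, by simp⟩
  choose! r hr using hc
  refine ⟨σ.cycleFactorsFinset.image r ∪ σ.supportᶜ, ?_, ?_⟩
  · intro z
    by_cases hz : z ∈ σ.support
    · refine ⟨r (σ.cycleOf z), mem_union_left _ (mem_image_of_mem _ (Equiv.Perm.cycleOf_mem_cycleFactorsFinset_iff.2 hz)), ?_⟩
      have := hr _ (Equiv.Perm.cycleOf_mem_cycleFactorsFinset_iff.2 hz)
      exact (Equiv.Perm.mem_support_cycleOf_iff.1 this).1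
    · exact ⟨z, mem_union_right _ (by simpa using hz), Equiv.Perm.SameCycle.refl _ _⟩
  · refine (Finset.card_union_le _ _).trans ?_
    rw [Equiv.Perm.parts_partition, Multiset.card_add, Multiset.card_replicate, Finset.card_compl]
    have : σ.cycleType.card = σ.cycleFactorsFinset.card := by
      rw [Equiv.Perm.cycleType_def, Multiset.card_map]; rfl
    rw [this]
    have := Finset.card_image_le (s := σ.cycleFactorsFinset) (f := r)
    omega

lemma exists_part {n : ℕ} (lam : (Fintype.card (Fin n)).Partition) : ∃ σ : Equiv.Perm (Fin n), σ.partition = lam := by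
  have hsplit := Multiset.filter_add_not (fun a => 2 ≤ a) lam.parts
  have hsum : (lam.parts.filter (fun a => 2 ≤ a)).sum + (lam.parts.filter (fun a => ¬ 2 ≤ a)).sum = Fintype.card (Fin n) := by
    rw [← Multiset.sum_add, hsplit, lam.parts_sum]
  obtain ⟨σ, hσ⟩ := (Equiv.Perm.exists_with_cycleType_iff (Fin n) (m := lam.parts.filter (fun a => 2 ≤ a))).2
    ⟨by omega, fun a ha => (Multiset.mem_filter.1 ha).2⟩
  refine ⟨σ, ?_⟩
  have h1 : lam.parts.filter (fun a => ¬ 2 ≤ a) = Multiset.replicate (lam.parts.filter (fun a => ¬ 2 ≤ a)).card 1 := by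
    refine Multiset.eq_replicate_card.2 ?_
    intro b hb
    have := Multiset.mem_filter.1 hb
    have := lam.parts_pos this.1
    omega
  have h2 : (lam.parts.filter (fun a => ¬ 2 ≤ a)).sum = (lam.parts.filter (fun a => ¬ 2 ≤ a)).card := by
    conv_lhs => rw [h1]
    simp
  have h3 := Equiv.Perm.sum_cycleType σ
  ext1
  rw [Equiv.Perm.parts_partition, hσ]
  conv_rhs => rw [← hsplit, h1]
  congr 2
  rw [hσ] at h3
  omega

lemma lift_same {n : ℕ} (e : Equiv.Perm (Fin n)) (a b : Fin n) (h : e.SameCycle a b) :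
    (Equiv.Perm.decomposeFin.symm (0, e)).SameCycle a.succ b.succ := by
  obtain ⟨k, rfl⟩ := h.exists_nat_pow_eq
  clear h
  induction k with
  | zero => exact Equiv.Perm.SameCycle.refl _ _
  | succ k ih =>
    have : (Equiv.Perm.decomposeFin.symm (0, e)) ((e ^ k) a).succ = ((e ^ (k + 1)) a).succ := by
      rw [Equiv.Perm.decomposeFin_symm_apply_succ, pow_succ', Equiv.Perm.mul_apply]
      simp
    rw [← this]
    exact Equiv.Perm.sameCycle_apply_right.2 ih

lemma decomp_swap {n : ℕ} (p : Fin (n + 1)) (e : Equiv.Perm (Fin n)) :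
    Equiv.Perm.decomposeFin.symm (p, e) = Equiv.swap 0 p * Equiv.Perm.decomposeFin.symm (0, e) := by
  ext i
  refine Fin.cases ?_ (fun j => ?_) i
  · simp
  · simp

lemma cyc_count (n : ℕ) : ∃ b : Equiv.Perm (Fin n) → ℕ, (∀ σ, ∃ R, Hits σ R ∧ R.card ≤ b σ) ∧
    (∑ σ, (b σ : ℝ)) = n.factorial * ((harmonic n : ℚ) : ℝ) := by
  induction n with
  | zero => exact ⟨fun _ => 0, fun σ => ⟨∅, fun z => z.elim0, by simp⟩, by simp⟩
  | succ n ih =>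
    obtain ⟨b, hb, hs⟩ := ih
    refine ⟨fun σ => b (Equiv.Perm.decomposeFin σ).2 + if (Equiv.Perm.decomposeFin σ).1 = 0 then 1 else 0, ?_, ?_⟩
    · intro σ
      obtain ⟨⟨p, e⟩, rfl⟩ := Equiv.Perm.decomposeFin.symm.surjective σ
      simp only [Equiv.apply_symm_apply]
      obtain ⟨R, hR, hc⟩ := hb e
      by_cases hp : p = 0
      · subst hp
        refine ⟨insert 0 (R.map (Fin.succEmb n)), ?_, ?_⟩
        · intro z
          refine Fin.cases ?_ (fun j => ?_) z
          · exact ⟨0, by simp, Equiv.Perm.SameCycle.refl _ _⟩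
          · obtain ⟨r, hr, hz⟩ := hR j
            exact ⟨r.succ, by simp [hr], lift_same e _ _ hz⟩
        · refine (Finset.card_insert_le _ _).trans ?_
          simp [hc]
      · have hns : ¬ (Equiv.Perm.decomposeFin.symm (0, e)).SameCycle 0 p := by
          intro h
          exact hp (h.eq_of_left (by simp [Function.IsFixedPt])).symm
        refine ⟨R.map (Fin.succEmb n), ?_, by simp [hc, hp]⟩
        rw [decomp_swap]
        have h1 : ∀ j : Fin n, ∃ r ∈ R.map (Fin.succEmb n),
            (Equiv.swap 0 p * Equiv.Perm.decomposeFin.symm (0, e)).SameCycle j.succ r := by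
          intro j
          obtain ⟨r, hr, hz⟩ := hR j
          exact ⟨r.succ, by simp [hr], merge_ext _ _ _ hns _ _ (lift_same e _ _ hz)⟩
        intro z
        refine Fin.cases ?_ h1 z
        obtain ⟨q, rfl⟩ := Fin.exists_succ_eq.2 hp
        obtain ⟨r, hr, hz⟩ := h1 q
        exact ⟨r, hr, (merge_xy _ _ _ hns).trans hz⟩
    · rw [← Equiv.sum_comp Equiv.Perm.decomposeFin.symm, Fintype.sum_prod_type]
      simp only [Equiv.apply_symm_apply, Nat.cast_add, Finset.sum_add_distrib, hs]
      rw [harmonic_succ, Nat.factorial_succ]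
      simp only [sum_const, card_univ, Fintype.card_fin, nsmul_eq_mul, Fintype.card_perm]
      have : ∑ x : Fin (n + 1), ((n.factorial : ℝ) * (((if x = 0 then 1 else 0 : ℕ)) : ℝ)) = n.factorial := by
        rw [← Finset.mul_sum]
        simp
      rw [this]
      push_cast
      have : (n : ℝ) + 1 ≠ 0 := by positivity
      field_simp

/-- average over conjugations -/
noncomputable def Av {n : ℕ} (g : Equiv.Perm (Fin n) → ℝ) (σ : Equiv.Perm (Fin n)) : ℝ :=
  En (fun π => g (π * σ * π⁻¹))

lemma En_card_pos (n : ℕ) : (0 : ℝ) < Fintype.card (Equiv.Perm (Fin n)) := by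
  exact_mod_cast Fintype.card_pos

lemma En_mono {n : ℕ} {g h : Equiv.Perm (Fin n) → ℝ} (H : ∀ σ, g σ ≤ h σ) : En g ≤ En h := by
  unfold En
  gcongr
  exact H _
lemma En_add {n : ℕ} (g h : Equiv.Perm (Fin n) → ℝ) : En (fun σ => g σ + h σ) = En g + En h := by
  unfold En; rw [sum_add_distrib, add_div]
lemma En_sub {n : ℕ} (g h : Equiv.Perm (Fin n) → ℝ) : En (fun σ => g σ - h σ) = En g - En h := by
  unfold En; rw [sum_sub_distrib, sub_div]
lemma En_smul {n : ℕ} (c : ℝ) (g : Equiv.Perm (Fin n) → ℝ) : En (fun σ => c * g σ) = c * En g := by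
  unfold En; rw [← mul_sum, mul_div_assoc]
lemma En_const {n : ℕ} (c : ℝ) : En (fun _ : Equiv.Perm (Fin n) => c) = c := by
  have := En_card_pos n
  unfold En
  rw [sum_const, card_univ, nsmul_eq_mul]
  field_simp
lemma En_abs {n : ℕ} (g : Equiv.Perm (Fin n) → ℝ) : |En g| ≤ En (fun σ => |g σ|) := by
  unfold En
  rw [abs_div, abs_of_pos (En_card_pos n)]
  gcongr
  exact Finset.abs_sum_le_sum_abs _ _

lemma Av_conj {n : ℕ} (g : Equiv.Perm (Fin n) → ℝ) (κ σ : Equiv.Perm (Fin n)) : Av g (κ * σ * κ⁻¹) = Av g σ := by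
  unfold Av En
  congr 1
  rw [← Equiv.sum_comp (Equiv.mulRight κ) (fun π => g (π * σ * π⁻¹))]
  refine sum_congr rfl fun π _ => ?_
  congr 1

lemma En_Av {n : ℕ} (g : Equiv.Perm (Fin n) → ℝ) : En (Av g) = En g := by
  have h : ∀ π : Equiv.Perm (Fin n), ∑ σ, g (π * σ * π⁻¹) = ∑ σ, g σ := fun π =>
    Equiv.sum_comp (MulAut.conj π).toEquiv g
  unfold Av En
  rw [← sum_div, sum_comm]
  simp only [h, sum_const, card_univ, nsmul_eq_mul]
  have := En_card_pos n
  field_simp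

lemma EnCond_eq {n : ℕ} (g : Equiv.Perm (Fin n) → ℝ) (σ : Equiv.Perm (Fin n)) : EnCond σ.partition g = Av g σ := by
  unfold EnCond
  set S := univ.filter (fun τ : Equiv.Perm (Fin n) => τ.partition = σ.partition) with hS
  have hmem : ∀ τ, τ ∈ S ↔ IsConj τ σ := by
    intro τ
    simp only [hS, mem_filter, mem_univ, true_and]
    exact Equiv.Perm.partition_eq_of_isConj.symm
  have h1 : ∀ τ ∈ S, Av g τ = Av g σ := by
    intro τ hτ
    obtain ⟨c, hc⟩ := isConj_iff.1 ((hmem τ).1 hτ)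
    rw [← hc, Av_conj]
  have h2 : ∑ τ ∈ S, Av g τ = ∑ τ ∈ S, g τ := by
    unfold Av En
    rw [← sum_div, sum_comm]
    have h : ∀ π : Equiv.Perm (Fin n), ∑ τ ∈ S, g (π * τ * π⁻¹) = ∑ τ ∈ S, g τ := by
      intro π
      refine Finset.sum_bij' (fun τ _ => π * τ * π⁻¹) (fun τ _ => π⁻¹ * τ * π) ?_ ?_ ?_ ?_ ?_
      · intro τ hτ
        rw [hmem] at hτ ⊢
        exact (isConj_iff.2 ⟨π, rfl⟩ : IsConj τ _).symm.trans hτ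
      · intro τ hτ
        rw [hmem] at hτ ⊢
        exact (isConj_iff.2 ⟨π⁻¹, by simp⟩ : IsConj τ _).symm.trans hτ
      · intro τ _; simp [mul_assoc]
      · intro τ _; simp [mul_assoc]
      · intro τ _; rfl
    simp only [h, sum_const, card_univ, nsmul_eq_mul]
    have := En_card_pos n
    field_simp
  rw [← h2, sum_congr rfl h1, sum_const, nsmul_eq_mul]
  have : (S.card : ℝ) ≠ 0 := by
    have : 0 < S.card := Finset.card_pos.2 ⟨σ, (hmem σ).2 (IsConj.refl _)⟩
    positivity
  field_simp

/-- Coupling comparison. -/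
lemma coupling {n : ℕ} (hn : 2 ≤ n) (σ σ0 : Equiv.Perm (Fin n)) (k k0 : ℕ)
    (h : ∃ R, Hits σ R ∧ R.card ≤ k) (h0 : ∃ R, Hits σ0 R ∧ R.card ≤ k0)
    (g W : Equiv.Perm (Fin n) → ℝ)
    (hgW : ∀ τ τ0 : Equiv.Perm (Fin n), dP τ τ0 ≤ 2 * (k + k0) → |g τ0 - g τ| ≤ W τ) :
    |Av g σ0 - Av g σ| ≤ Av W σ := by
  obtain ⟨R, hR, hc⟩ := h
  obtain ⟨R0, hR0, hc0⟩ := h0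
  obtain ⟨ρ, h1, h2⟩ := near_cycle k σ R hR hc
  obtain ⟨ρ0, h3, h4⟩ := near_cycle k0 σ0 R0 hR0 hc0
  obtain ⟨κ, hκ⟩ := isConj_iff.1 (full_conj hn ρ ρ0 h1 h3)
  rw [← Av_conj g κ σ, ← Av_conj W κ σ]
  have h5 : dP (κ * σ * κ⁻¹) σ0 ≤ 2 * (k + k0) := by
    have e1 := dP_conj κ σ ρ
    rw [hκ] at e1
    have e2 := dP_tri (κ * σ * κ⁻¹) ρ0 σ0
    rw [dP_comm ρ0 σ0] at e2
    omega
  unfold Av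
  rw [← En_sub]
  refine (En_abs _).trans (En_mono fun π => hgW _ _ ?_)
  rw [dP_conj]
  exact h5

lemma avg_bound {n : ℕ} (a w : Equiv.Perm (Fin n) → ℝ) (e η D K p : ℝ) (B : Equiv.Perm (Fin n) → Prop)
    (hη : 0 ≤ η) (hD : 0 ≤ D) (hw : ∀ σ, 0 ≤ w σ) (hgood : ∀ σ, ¬ B σ → |e - a σ| ≤ η * w σ)
    (hall : ∀ σ, |a σ| ≤ D + η * w σ) (hK : En w ≤ K)
    (hp : En (fun σ => if B σ then (1 : ℝ) else 0) ≤ p) (hp2 : p ≤ 1 / 2) :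
    |e - En a| ≤ η * K + p * (3 * D + 4 * (η * K)) := by
  have hηK : η * En w ≤ η * K := mul_le_mul_of_nonneg_left hK hη
  have hp0 : 0 ≤ p := le_trans (by
    refine (En_const (n := n) 0).symm.le.trans (En_mono fun σ => ?_)
    split_ifs <;> norm_num) hp
  have s1 : |e| ≤ |e| * p + (D + 2 * (η * K)) := by
    have := En_mono (g := fun _ : Equiv.Perm (Fin n) => |e|)
      (h := fun σ => |e| * (if B σ then (1 : ℝ) else 0) + (D + (2 * η) * w σ)) (by
        intro σ
        have h1 := hall σ
        have h2 := mul_nonneg hη (hw σ)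
        by_cases hB : B σ
        · simp only [hB, if_true]; linarith
        · simp only [hB, if_false]
          have h3 := hgood σ hB
          have h4 := abs_sub_abs_le_abs_sub e (a σ)
          linarith)
    rw [En_const, En_add, En_smul, En_add, En_const, En_smul] at this
    have h5 := mul_le_mul_of_nonneg_left hp (abs_nonneg e)
    linarith
  have s2 : |e| ≤ 2 * D + 4 * (η * K) := by nlinarith [abs_nonneg e]
  have s3 : |e - En a| ≤ En (fun σ => |e - a σ|) := by
    have := En_abs (fun σ => e - a σ)
    rwa [En_sub, En_const] at this
  have s4 := En_mono (g := fun σ => |e - a σ|)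
      (h := fun σ => η * w σ + (|e| + D) * (if B σ then (1 : ℝ) else 0)) (by
        intro σ
        by_cases hB : B σ
        · simp only [hB, if_true]
          have := hall σ
          have := abs_sub e (a σ)
          linarith
        · simp only [hB, if_false]
          have h3 := hgood σ hB
          linarith)
  rw [En_add, En_smul, En_smul] at s4
  have s5 := mul_le_mul_of_nonneg_left hp (add_nonneg (abs_nonneg e) hD)
  have s6 : (|e| + D) * p ≤ (3 * D + 4 * (η * K)) * p := mul_le_mul_of_nonneg_right (by linarith) hp0
  linarith

lemma pw_b (f : ℝ → ℝ) (C : ℝ) (m : ℕ) (hC : 0 ≤ C) (hf : ∀ x, |f x| ≤ C * (1 + |x| ^ m)) (η : ℝ) (hη : 0 < η) :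
    ∃ D, 0 ≤ D ∧ ∀ x, |f x| ≤ D + η * (1 + |x| ^ (m + 1)) := by
  refine ⟨C + C * (C / η) ^ m, by positivity, fun x => (hf x).trans ?_⟩
  have h0 : 0 ≤ η * |x| ^ (m + 1) := by positivity
  have h1 : 0 ≤ C * (C / η) ^ m := by positivity
  by_cases h : C / η ≤ |x|
  · have : C ≤ |x| * η := (div_le_iff₀ hη).1 h
    have := mul_le_mul_of_nonneg_right this (by positivity : 0 ≤ |x| ^ m)
    have e : η * |x| ^ (m + 1) = |x| * η * |x| ^ m := by ring
    linarith
  · have : C * |x| ^ m ≤ C * (C / η) ^ m := by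
      gcongr
      linarith
    linarith

lemma pw_a (f : ℝ → ℝ) (hcf : Continuous f) (C : ℝ) (m : ℕ) (hC : 0 ≤ C) (hf : ∀ x, |f x| ≤ C * (1 + |x| ^ m)) (η : ℝ) (hη : 0 < η) :
    ∃ δ, 0 < δ ∧ ∀ x y, |y - x| ≤ δ → |f y - f x| ≤ η * (1 + |x| ^ (m + 1)) := by
  set M := 1 + C * (3 + 2 ^ m) / η with hM
  have hM1 : 1 ≤ M := by
    have : 0 ≤ C * (3 + 2 ^ m) / η := by positivity
    linarith
  have huc := (isCompact_closedBall (0 : ℝ) (M + 1)).uniformContinuousOn_of_continuous hcf.continuousOn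
  rw [Metric.uniformContinuousOn_iff_le] at huc
  obtain ⟨δ, hδ, hu⟩ := huc η hη
  refine ⟨min δ 1, by positivity, fun x y hxy => ?_⟩
  have hy1 : |y| ≤ |x| + 1 := by
    have := abs_sub_abs_le_abs_sub y x
    have := min_le_right δ 1
    linarith
  have hx0 : 0 ≤ η * |x| ^ (m + 1) := by positivity
  by_cases h : |x| ≤ M
  · have := hu y (by simp only [Metric.mem_closedBall, Real.dist_eq, sub_zero]; linarith) x
      (by simp only [Metric.mem_closedBall, Real.dist_eq, sub_zero]; linarith)
      (by rw [Real.dist_eq]; exact hxy.trans (min_le_left _ _))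
    rw [Real.dist_eq] at this
    linarith
  · push Not at h
    have h1 : 1 ≤ |x| ^ m := one_le_pow₀ (by linarith)
    have h2 : |y| ^ m ≤ 2 ^ m * |x| ^ m := by
      rw [← mul_pow]
      exact pow_le_pow_left₀ (abs_nonneg _) (by linarith) m
    have h3 := hf x
    have h4 := hf y
    have h5 := abs_sub (f y) (f x)
    have h6 : C * (1 + |x| ^ m) + C * (1 + |y| ^ m) ≤ C * (3 + 2 ^ m) * |x| ^ m := by
      have : C * (1 + |x| ^ m + (1 + |y| ^ m)) ≤ C * ((3 + 2 ^ m) * |x| ^ m) :=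
        mul_le_mul_of_nonneg_left (by linarith) hC
      linarith
    have h7 : C * (3 + 2 ^ m) ≤ |x| * η := (div_le_iff₀ hη).1 (by linarith)
    have h8 := mul_le_mul_of_nonneg_right h7 (by positivity : 0 ≤ |x| ^ m)
    have e : η * |x| ^ (m + 1) = |x| * η * |x| ^ m := by ring
    linarith

lemma bad_tendsto (ε : ℝ) (hε : 0 < ε) : Tendsto (fun n : ℕ => (1 + Real.log n) / (n : ℝ) ^ ε) atTop (nhds 0) := by
  have h1 : Tendsto (fun x : ℝ => Real.log x / x ^ ε) atTop (nhds 0) :=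
    (isLittleO_log_rpow_atTop hε).tendsto_div_nhds_zero
  have h2 : Tendsto (fun x : ℝ => x ^ (-ε)) atTop (nhds 0) := tendsto_rpow_neg_atTop hε
  have h3 := (h2.add h1).comp tendsto_natCast_atTop_atTop
  rw [add_zero] at h3
  refine h3.congr fun n => ?_
  simp only [Function.comp]
  rw [Real.rpow_neg (Nat.cast_nonneg n), add_div, one_div]

lemma delta_tendsto (ε : ℝ) (hε : ε < 1 / 6) (c : ℝ) :
    Tendsto (fun n : ℕ => 4 / c * (n : ℝ) ^ (-(1 / 6 - ε))) atTop (nhds 0) := by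
  have h2 : Tendsto (fun x : ℝ => x ^ (-(1 / 6 - ε))) atTop (nhds 0) := tendsto_rpow_neg_atTop (by linarith)
  have := (h2.comp tendsto_natCast_atTop_atTop).const_mul (4 / c)
  rwa [mul_zero] at this

theorem condExp_lisLenBar_given_cycleType_tendsto
    (ε : ℝ) (hε0 : 0 < ε) (hε : ε < 1 / 6)
    (lam : ∀ n : ℕ, (Fintype.card (Fin n)).Partition)
    (hlam : ∀ n : ℕ, ((lam n).parts.card : ℝ) ≤ (n : ℝ) ^ ε)
    (f : ℝ → ℝ) (hf : Continuous f)
    (hpoly : ∃ C : ℝ, ∃ m : ℕ, ∀ x : ℝ, |f x| ≤ C * (1 + |x| ^ m)) :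
    Tendsto (fun n : ℕ =>
        EnCond (lam n) (fun σ => f (lisLenBar σ)) -
          En (n := n) (fun σ => f (lisLenBar σ)))
      atTop (nhds 0) := by
  obtain ⟨C, m, hC⟩ := hpoly
  have hC0 : 0 ≤ C := by
    have h1 := (abs_nonneg _).trans (hC 0)
    by_contra hneg
    push Not at hneg
    have : 0 < 1 + |(0 : ℝ)| ^ m := by positivity
    nlinarith
  obtain ⟨c, hc, hsd⟩ := sd_growth
  obtain ⟨K, hK, hmom⟩ := bar_moments (m + 1)
  rw [Metric.tendsto_atTop']
  intro r hr
  set η := r / (4 * (1 + K)) with hη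
  have hηp : 0 < η := by positivity
  have hηK : η * (1 + K) = r / 4 := by rw [hη]; field_simp
  obtain ⟨D, hD, hfD⟩ := pw_b f C m hC0 hC η hηp
  obtain ⟨δ, hδ, hfδ⟩ := pw_a f hf C m hC0 hC η hηp
  have e1 : ∀ᶠ n : ℕ in atTop, 4 / c * (n : ℝ) ^ (-(1 / 6 - ε)) < δ :=
    (delta_tendsto ε hε c).eventually_lt_const hδ
  have e2 : ∀ᶠ n : ℕ in atTop, (1 + Real.log n) / (n : ℝ) ^ ε < min (1 / 2) (r / (4 * (3 * D + r))) :=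
    (bad_tendsto ε hε0).eventually_lt_const (by positivity)
  suffices H : ∀ᶠ n : ℕ in atTop, dist (EnCond (lam n) (fun σ => f (lisLenBar σ)) -
          En (n := n) (fun σ => f (lisLenBar σ))) 0 < r by
    obtain ⟨N, hN⟩ := eventually_atTop.1 H
    exact ⟨N, fun n hn => hN n hn.le⟩
  filter_upwards [hsd, hmom, e1, e2, eventually_ge_atTop 2] with n hs hm h1 h2 hn
  rw [Real.dist_eq, sub_zero]
  have hnp : (0 : ℝ) < n := by
    have : (2 : ℝ) ≤ n := by exact_mod_cast hn
    linarith
  obtain ⟨σ0, hσ0⟩ := exists_part (lam n)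
  obtain ⟨b, hb, hbs⟩ := cyc_count n
  have hk0 := hits_partition σ0
  set g : Equiv.Perm (Fin n) → ℝ := fun σ => f (lisLenBar σ) with hg
  set w : Equiv.Perm (Fin n) → ℝ := fun σ => 1 + |lisLenBar σ| ^ (m + 1) with hw
  have hw0 : ∀ σ, 0 ≤ w σ := fun σ => by simp only [hw]; positivity
  have hrpos : (0 : ℝ) < (n : ℝ) ^ ε := Real.rpow_pos_of_pos hnp _
  have hspos : 0 < sdU n := lt_of_lt_of_le (by positivity) hs
  rw [← hσ0, EnCond_eq, ← En_Av g]
  set p := (1 + Real.log n) / (n : ℝ) ^ ε with hpdef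
  have hp12 : p ≤ 1 / 2 := h2.le.trans (min_le_left _ _)
  have hpr : p * (3 * D + r) ≤ r / 4 := by
    have h3 : p ≤ r / (4 * (3 * D + r)) := h2.le.trans (min_le_right _ _)
    calc p * (3 * D + r) ≤ r / (4 * (3 * D + r)) * (3 * D + r) := mul_le_mul_of_nonneg_right h3 (by positivity)
      _ = r / 4 := by field_simp
  have main := avg_bound (Av g) (Av w) (Av g σ0) η D (1 + K) p (fun σ => (n : ℝ) ^ ε < b σ) hηp.le hD
    (by
      intro σ
      unfold Av
      rw [← En_const (n := n) 0]
      exact En_mono fun π => hw0 _)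
    (by
      intro σ hσ
      push Not at hσ
      have := coupling hn σ σ0 (b σ) (σ0.partition.parts.card) (hb σ) hk0 g (fun τ => η * w τ) (by
        intro τ τ0 hd
        refine hfδ _ _ ?_
        rw [bar_eq, bar_eq, ← sub_div, abs_div, abs_of_pos hspos, div_le_iff₀ hspos]
        have l1 : (lisLen τ : ℝ) ≤ lisLen τ0 + dP τ τ0 := by exact_mod_cast lis_lip τ τ0
        have l2 : (lisLen τ0 : ℝ) ≤ lisLen τ + dP τ0 τ := by exact_mod_cast lis_lip τ0 τ
        rw [dP_comm τ0 τ] at l2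
        have l3 : (dP τ τ0 : ℝ) ≤ 2 * (b σ + σ0.partition.parts.card) := by exact_mod_cast hd
        have l4 : (σ0.partition.parts.card : ℝ) ≤ (n : ℝ) ^ ε := by rw [hσ0]; exact hlam n
        have l5 : |(lisLen τ0 : ℝ) - gU n - (lisLen τ - gU n)| ≤ 4 * (n : ℝ) ^ ε := by
          rw [abs_le]; constructor <;> linarith
        refine l5.trans ?_
        calc 4 * (n : ℝ) ^ ε = (4 / c * (n : ℝ) ^ (-(1 / 6 - ε))) * (c * (n : ℝ) ^ (1 / 6 : ℝ)) := by
              have : (n : ℝ) ^ ε = (n : ℝ) ^ (-(1 / 6 - ε)) * (n : ℝ) ^ (1 / 6 : ℝ) := by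
                rw [← Real.rpow_add hnp]; congr 1; ring
              rw [this]; field_simp
          _ ≤ δ * sdU n := mul_le_mul h1.le hs (by positivity) hδ.le)
      refine this.trans (le_of_eq ?_)
      unfold Av
      rw [En_smul])
    (by
      intro σ
      unfold Av
      rw [← En_smul, ← En_const (n := n) D, ← En_add]
      refine (En_abs _).trans (En_mono fun π => ?_)
      have := hfD (lisLenBar (π * σ * π⁻¹))
      simpa only [En_const] using this)
    (by
      rw [En_Av, hw, En_add, En_const]
      linarith)
    (by
      have q1 := En_mono (g := fun σ : Equiv.Perm (Fin n) => if (n : ℝ) ^ ε < b σ then (1 : ℝ) else 0)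
        (h := fun σ => 1 / (n : ℝ) ^ ε * (b σ : ℝ)) (by
          intro σ
          have : 0 ≤ 1 / (n : ℝ) ^ ε * (b σ : ℝ) := by positivity
          by_cases hB : (n : ℝ) ^ ε < b σ
          · simp only [hB, if_true]
            rw [one_div_mul_eq_div, le_div_iff₀ hrpos]
            linarith
          · simp only [hB, if_false]
            exact this)
      refine q1.trans ?_
      rw [En_smul]
      have q2 : En (fun σ : Equiv.Perm (Fin n) => (b σ : ℝ)) = ((harmonic n : ℚ) : ℝ) := by
        have : (n.factorial : ℝ) ≠ 0 := by exact_mod_cast Nat.factorial_ne_zero _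
        rw [En, hbs, Fintype.card_perm, Fintype.card_fin]
        field_simp
      rw [q2, hpdef, one_div_mul_eq_div]
      gcongr
      exact harmonic_le_one_add_log n)
    hp12
  rw [hηK] at main
  have e4 : 4 * (r / 4) = r := by ring
  rw [e4] at main
  linarith
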